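/- Let p, q : Fin n → EuclideanSpace ℝ (Fin d) be injective families whose values are exactly the extreme points of P := convexHull ℝ (Set.range p) and Q := convexHull ℝ (Set.range q) respectively, and assume P and Q are combinatorially equivalent with compatible labelling. Assume both are inscribed: there exist c_P, c_Q ∈ EuclideanSpace ℝ (Fin d) and r_P, r_Q ≥ 0 with ‖p i − c_P‖ = r_P and ‖q i − c_Q‖ = r_Q for all i. If ‖q i − q j‖ = ‖p i − p j‖ for every edge (i,j) of P, then there exists an isometry e : EuclideanSpace ℝ (Fin d) ≃ᵢ EuclideanSpace ℝ (Fin d) with e (p i) = q i for all i. (An inscribed polytope of a fixed combinatorial type is uniquely determined, up to isometry, by its edge lengths.) -/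

import Mathlib

/-- For `i ≠ j`, the pair `(i,j)` is an edge of the polytope `convexHull ℝ (Set.range p)`
if the closed segment between `p i` and `p j` is an extreme subset of it. -/
def IsEdge {n d : ℕ} (p : Fin n → EuclideanSpace ℝ (Fin d)) (i j : Fin n) : Prop :=
  i ≠ j ∧ IsExtreme ℝ (convexHull ℝ (Set.range p)) (segment ℝ (p i) (p j))

/-- Two polytopes with labelled vertices are combinatorially equivalent with compatible
labelling if for every `S ⊆ Fin n`, `convexHull ℝ (p '' S)` is an extreme subset of the
first polytope exactly when `convexHull ℝ (q '' S)` is an extreme subset of the second. -/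
def CombEquiv {n d : ℕ} (p q : Fin n → EuclideanSpace ℝ (Fin d)) : Prop :=
  ∀ S : Set (Fin n),
    IsExtreme ℝ (convexHull ℝ (Set.range p)) (convexHull ℝ (p '' S)) ↔
    IsExtreme ℝ (convexHull ℝ (Set.range q)) (convexHull ℝ (q '' S))

set_option linter.unusedSectionVars false
set_option linter.unusedVariables false

section PartA
namespace Insc

open Set

variable {A : Type} [Finite A] {E : Type} [NormedAddCommGroup E] [InnerProductSpace ℝ E]

def IsFc {A : Type} {E : Type} [NormedAddCommGroup E] [InnerProductSpace ℝ E]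
    (g : A → E) (F : Set A) : Prop :=
  ∃ n : E →ₗ[ℝ] ℝ, (∀ a ∈ F, n (g a) = 0) ∧ ∀ a, a ∉ F → 0 < n (g a)

def Bd {A : Type} {E : Type} [NormedAddCommGroup E] [InnerProductSpace ℝ E]
    (g : A → E) (a : A) : Prop := ∃ F, IsFc g F ∧ F ≠ univ ∧ a ∈ F

def Pointed {A : Type} {E : Type} [NormedAddCommGroup E] [InnerProductSpace ℝ E]
    (g : A → E) : Prop := IsFc g {a | g a = 0}

def lnS {A : Type} {E : Type} [NormedAddCommGroup E] [InnerProductSpace ℝ E]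
    (g : A → E) (b : A) : Set A := {a | ∃ c : ℝ, g a = c • g b}

def IsRay {A : Type} {E : Type} [NormedAddCommGroup E] [InnerProductSpace ℝ E]
    (g : A → E) (b : A) : Prop := g b ≠ 0 ∧ IsFc g (lnS g b)

noncomputable def rk {A : Type} {E : Type} [NormedAddCommGroup E] [InnerProductSpace ℝ E]
    (g : A → E) : ℕ := Module.finrank ℝ (Submodule.span ℝ (range g))

def Intr {A : Type} {E : Type} [NormedAddCommGroup E] [InnerProductSpace ℝ E]
    (g : A → E) (Z : E) : Prop :=
  Z ∈ Submodule.span ℝ (range g) ∧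
    ∀ n : E →ₗ[ℝ] ℝ, (∀ a, 0 ≤ n (g a)) → (∃ a, 0 < n (g a)) → 0 < n Z

theorem fc_sub {g : A → E} {F : Set A} (hF : IsFc g F) (m : E →ₗ[ℝ] ℝ)
    (hm : ∀ a ∈ F, 0 ≤ m (g a)) : IsFc g {a | a ∈ F ∧ m (g a) = 0} := by
  obtain ⟨n, h0, h1⟩ := hF
  obtain ⟨M, hM⟩ := (Set.finite_range (fun a => - m (g a) / n (g a))).bddAbove
  refine ⟨(M + 1) • n + m, ?_, ?_⟩
  · rintro a ⟨ha, hma⟩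
    simp [h0 a ha, hma]
  · intro a ha
    by_cases haF : a ∈ F
    · have h2 : m (g a) ≠ 0 := fun h => ha ⟨haF, h⟩
      have := lt_of_le_of_ne (hm a haF) (Ne.symm h2)
      simpa [h0 a haF] using this
    · have h3 := hM (Set.mem_range_self a)
      have h4 := h1 a haF
      rw [div_le_iff₀ h4] at h3
      simp only [LinearMap.add_apply, LinearMap.smul_apply, smul_eq_mul]
      nlinarith

theorem fc_univ (g : A → E) : IsFc g univ := ⟨0, by simp, by simp⟩

theorem fc_zero_mem {g : A → E} {F : Set A} (hF : IsFc g F) {a : A} (ha : g a = 0) : a ∈ F := by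
  obtain ⟨n, h0, h1⟩ := hF
  by_contra h
  have := h1 a h
  simp [ha] at this

theorem fc_nonneg_zero (g : A → E) (m : E →ₗ[ℝ] ℝ) (hm : ∀ a, 0 ≤ m (g a)) :
    IsFc g {a | m (g a) = 0} :=
  ⟨m, fun a ha => ha, fun a ha => lt_of_le_of_ne (hm a) (Ne.symm ha)⟩

theorem fc_span_mem {g : A → E} {F : Set A} (hF : IsFc g F) {a : A}
    (ha : g a ∈ Submodule.span ℝ (g '' F)) : a ∈ F := by
  obtain ⟨n, h0, h1⟩ := hF
  by_contra h
  have h2 := h1 a h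
  have : Submodule.span ℝ (g '' F) ≤ LinearMap.ker n := by
    rw [Submodule.span_le]
    rintro _ ⟨b, hb, rfl⟩
    exact h0 b hb
  have := this ha
  rw [LinearMap.mem_ker] at this
  linarith

theorem lnS_sub {g : A → E} {F : Set A} (hF : IsFc g F) {b : A} (hb : b ∈ F) :
    lnS g b ⊆ F := by
  rintro a ⟨c, hc⟩
  apply fc_span_mem hF
  rw [hc]
  exact Submodule.smul_mem _ _ (Submodule.subset_span ⟨b, hb, rfl⟩)

theorem self_mem_lnS (g : A → E) (b : A) : b ∈ lnS g b := ⟨1, by simp⟩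

/-- tilt: for a pointed configuration, a face with a nonzero element, and a functional. -/
theorem tilt {g : A → E} {n0 : E →ₗ[ℝ] ℝ}
    (hn0 : ∀ a, g a ≠ 0 → 0 < n0 (g a)) {F : Set A} (hF : IsFc g F) (hne : ∃ a ∈ F, g a ≠ 0)
    (m : E →ₗ[ℝ] ℝ) : ∃ μ : ℝ, (∀ a ∈ F, 0 ≤ (m - μ • n0) (g a)) ∧
      IsFc g {a | a ∈ F ∧ (m - μ • n0) (g a) = 0} ∧
      ∃ a ∈ F, g a ≠ 0 ∧ (m - μ • n0) (g a) = 0 := by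
  obtain ⟨a0, ⟨ha0, ha0'⟩, hmin⟩ := Set.exists_min_image {a | a ∈ F ∧ g a ≠ 0}
    (fun a => m (g a) / n0 (g a)) (Set.toFinite _) hne
  have key : ∀ a ∈ F, 0 ≤ (m - (m (g a0) / n0 (g a0)) • n0) (g a) := by
    intro a ha
    by_cases h : g a = 0
    · simp [h]
    · have := hmin a ⟨ha, h⟩
      rw [le_div_iff₀ (hn0 a h)] at this
      simp only [LinearMap.sub_apply, LinearMap.smul_apply, smul_eq_mul]
      linarith
  refine ⟨m (g a0) / n0 (g a0), key, fc_sub hF _ key, a0, ha0, ha0', ?_⟩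
  have := (hn0 a0 ha0').ne'
  simp only [LinearMap.sub_apply, LinearMap.smul_apply, smul_eq_mul]
  field_simp
  ring

theorem eq_of_dual {x y : E} (h : ∀ m : E →ₗ[ℝ] ℝ, m x = m y) : x = y := by
  rw [← sub_eq_zero]
  rw [← Module.forall_dual_apply_eq_zero_iff ℝ]
  intro m
  rw [map_sub, h m, sub_self]

theorem ray_of_min {g : A → E} (hp : Pointed g) {F : Set A} (hF : IsFc g F)
    (hmin : ∀ G, IsFc g G → G ⊆ F → (∃ a ∈ G, g a ≠ 0) → G = F) {b : A} (hb : b ∈ F)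
    (hb0 : g b ≠ 0) : IsRay g b ∧ lnS g b = F := by
  have hsub : F ⊆ lnS g b := by
    intro a ha
    obtain ⟨n0, _, hn0⟩ := hp
    have hn0 : ∀ a, g a ≠ 0 → 0 < n0 (g a) := fun a h => hn0 a h
    refine ⟨n0 (g a) / n0 (g b), eq_of_dual fun m => ?_⟩
    obtain ⟨μ, h1, h2, a0, h3, h4, h5⟩ := tilt hn0 hF ⟨b, hb, hb0⟩ m
    have := hmin _ h2 (fun x hx => hx.1) ⟨a0, ⟨h3, h5⟩, h4⟩
    have ha' : a ∈ {a | a ∈ F ∧ (m - μ • n0) (g a) = 0} := by rw [this]; exact ha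
    have hb' : b ∈ {a | a ∈ F ∧ (m - μ • n0) (g a) = 0} := by rw [this]; exact hb
    have e1 := ha'.2
    have e2 := hb'.2
    simp only [LinearMap.sub_apply, LinearMap.smul_apply, smul_eq_mul, map_smul] at e1 e2 ⊢
    have := (hn0 b hb0).ne'
    rw [show m (g a) = μ * n0 (g a) by linarith, show m (g b) = μ * n0 (g b) by linarith]
    field_simp
  have heq : lnS g b = F := Subset.antisymm (lnS_sub hF hb) hsub
  exact ⟨⟨hb0, heq ▸ hF⟩, heq⟩

theorem exists_ray {g : A → E} (hp : Pointed g) {G : Set A} (hG : IsFc g G)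
    (hne : ∃ a ∈ G, g a ≠ 0) : ∃ b ∈ G, IsRay g b := by
  obtain ⟨F, hFG, hF⟩ := (Set.toFinite {F : Set A | IsFc g F ∧ ∃ a ∈ F, g a ≠ 0}).exists_le_minimal
    (a := G) ⟨hG, hne⟩
  obtain ⟨hF1, b, hb, hb0⟩ := hF.prop
  exact ⟨b, hFG hb, (ray_of_min hp hF1 (fun G' h1 h2 h3 =>
    Subset.antisymm h2 (hF.le_of_le ⟨h1, h3⟩ h2)) hb hb0).1⟩

theorem ray_min {g : A → E} {b : A} (hb : IsRay g b) {G : Set A} (hG : IsFc g G)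
    (hs : G ⊆ lnS g b) (hne : ∃ a ∈ G, g a ≠ 0) : G = lnS g b := by
  obtain ⟨a, ha, ha0⟩ := hne
  refine Subset.antisymm hs ?_
  obtain ⟨c, hc⟩ := hs ha
  have hc0 : c ≠ 0 := by rintro rfl; simp at hc; exact ha0 hc
  apply lnS_sub hG
  apply fc_span_mem hG
  have : g b = c⁻¹ • g a := by rw [hc, smul_smul, inv_mul_cancel₀ hc0, one_smul]
  rw [this]
  exact Submodule.smul_mem _ _ (Submodule.subset_span ⟨a, ha, rfl⟩)

variable [FiniteDimensional ℝ E]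

theorem rk_le_one_of_prop {g : A → E} (v : E) (h : ∀ a, ∃ c : ℝ, g a = c • v) : rk g ≤ 1 := by
  have : Submodule.span ℝ (range g) ≤ Submodule.span ℝ {v} := by
    rw [Submodule.span_le]
    rintro _ ⟨a, rfl⟩
    obtain ⟨c, hc⟩ := h a
    rw [SetLike.mem_coe, Submodule.mem_span_singleton]
    exact ⟨c, hc.symm⟩
  exact (Submodule.finrank_mono this).trans (by
    by_cases hv : v = 0
    · subst hv; rw [Submodule.span_zero_singleton, finrank_bot]; omega
    · rw [finrank_span_singleton hv])

theorem rk_pos {g : A → E} (h : 1 ≤ rk g) : ∃ a, g a ≠ 0 := by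
  by_contra! h'
  have : range g ⊆ {0} := by rintro _ ⟨a, rfl⟩; simp [h' a]
  have := Submodule.finrank_mono (Submodule.span_mono (R := ℝ) this)
  rw [Submodule.span_zero_singleton, finrank_bot] at this
  unfold rk at h
  omega

/-- Nonzero boundary elements exist; moreover as the zero set of a tilt of any functional not
proportional to the pointing functional. -/
theorem exists_bd {g : A → E} (hp : Pointed g) (hr : 2 ≤ rk g) : ∃ a, Bd g a ∧ g a ≠ 0 := by
  obtain ⟨b, hb⟩ := rk_pos (by omega : 1 ≤ rk g)
  obtain ⟨n0, _, hn0⟩ := id hp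
  obtain ⟨c, _, hc⟩ := exists_ray hp (fc_univ g) ⟨b, mem_univ b, hb⟩
  refine ⟨c, ⟨_, hc.2, ?_, self_mem_lnS g c⟩, hc.1⟩
  intro h
  have := rk_le_one_of_prop (g := g) (g c) (fun a => by
    have : a ∈ lnS g c := h ▸ mem_univ a
    exact this)
  omega

theorem lemmaB {g : A → E} (hp : Pointed g) (hr : 2 ≤ rk g) (n : E →ₗ[ℝ] ℝ)
    (h : ∀ a, Bd g a → 0 ≤ n (g a)) (a : A) : 0 ≤ n (g a) := by
  obtain ⟨b, hb, hb0⟩ := exists_bd hp hr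
  obtain ⟨n0, _, hn0⟩ := hp
  have hn0 : ∀ a, g a ≠ 0 → 0 < n0 (g a) := fun a h => hn0 a h
  obtain ⟨μ, h1, h2, a0, h3, h4, h5⟩ := tilt hn0 (fc_univ g) ⟨b, mem_univ b, hb0⟩ n
  have hμ : 0 ≤ μ := by
    by_cases hF : {a | a ∈ univ ∧ (n - μ • n0) (g a) = 0} = univ
    · have hb' : b ∈ {a | a ∈ univ ∧ (n - μ • n0) (g a) = 0} := by rw [hF]; exact mem_univ b
      have e := hb'.2
      simp only [LinearMap.sub_apply, LinearMap.smul_apply, smul_eq_mul] at e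
      have := h b hb
      have := hn0 b hb0
      by_contra! hlt
      nlinarith
    · have := h a0 ⟨_, h2, hF, h3, h5⟩
      simp only [LinearMap.sub_apply, LinearMap.smul_apply, smul_eq_mul] at h5
      have := hn0 a0 h4
      by_contra! hlt
      nlinarith
  have e := h1 a (mem_univ a)
  simp only [LinearMap.sub_apply, LinearMap.smul_apply, smul_eq_mul] at e
  by_cases h0 : g a = 0
  · simp [h0]
  · have := hn0 a h0
    nlinarith

theorem intr_pos {g : A → E} (hp : Pointed g) (hr : 2 ≤ rk g) {Z : E} (hZ : Intr g Z)
    (n : E →ₗ[ℝ] ℝ) (h : ∀ a, Bd g a → 0 ≤ n (g a)) (h' : ∃ a, 0 < n (g a)) : 0 < n Z :=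
  hZ.2 n (lemmaB hp hr n h) h'

theorem intr_of_not_bd {g : A → E} {i : A} (hi : ¬ Bd g i) : Intr g (g i) := by
  refine ⟨Submodule.subset_span (mem_range_self i), fun n h ⟨a, ha⟩ => ?_⟩
  refine lt_of_le_of_ne (h i) (fun h0 => hi ⟨_, fc_nonneg_zero g n h, ?_, h0.symm⟩)
  intro hu
  have : a ∈ {a | n (g a) = 0} := hu ▸ mem_univ a
  exact ha.ne' this

theorem intr_seg {g : A → E} {Z : E} (hZ : Intr g Z) (b : A) {x y : ℝ} (hx : 0 < x) (hy : 0 ≤ y) :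
    Intr g (x • Z + y • g b) := by
  refine ⟨Submodule.add_mem _ (Submodule.smul_mem _ _ hZ.1)
    (Submodule.smul_mem _ _ (Submodule.subset_span (mem_range_self b))), fun n h h' => ?_⟩
  have := hZ.2 n h h'
  have := h b
  simp only [map_add, map_smul, smul_eq_mul]
  positivity

theorem fc_normal_intr {g : A → E} {Z : E} (hZ : Intr g Z) {F : Set A} (hF : IsFc g F)
    (hne : F ≠ univ) : ∃ n : E →ₗ[ℝ] ℝ, (∀ a ∈ F, n (g a) = 0) ∧ (∀ a, a ∉ F → 0 < n (g a)) ∧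
      0 < n Z := by
  obtain ⟨n, h0, h1⟩ := hF
  refine ⟨n, h0, h1, hZ.2 n (fun a => ?_) ?_⟩
  · by_cases h : a ∈ F
    · exact (h0 a h).ge
    · exact (h1 a h).le
  · obtain ⟨a, ha⟩ := (ne_univ_iff_exists_notMem F).1 hne
    exact ⟨a, h1 a ha⟩

theorem intr_ne_zero {g : A → E} (hp : Pointed g) (hr : 1 ≤ rk g) {Z : E} (hZ : Intr g Z) :
    Z ≠ 0 := by
  rintro rfl
  obtain ⟨a, ha⟩ := rk_pos hr
  obtain ⟨n, _, _, h⟩ := fc_normal_intr hZ hp (fun h => ha (by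
    have : a ∈ {a | g a = 0} := h ▸ mem_univ a
    exact this))
  simp at h

/-! ### Quotients -/

theorem factor {b : E} {π : E →ₗ[ℝ] E} (hπ : LinearMap.ker π = Submodule.span ℝ {b})
    (n : E →ₗ[ℝ] ℝ) (hn : n b = 0) : ∃ m : E →ₗ[ℝ] ℝ, ∀ x, n x = m (π x) := by
  have : n ∈ (LinearMap.ker π).dualAnnihilator := by
    rw [Submodule.mem_dualAnnihilator]
    intro w hw
    rw [hπ, Submodule.mem_span_singleton] at hw
    obtain ⟨c, rfl⟩ := hw
    simp [hn]
  rw [← LinearMap.range_dualMap_eq_dualAnnihilator_ker] at this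
  obtain ⟨m, hm⟩ := this
  exact ⟨m, fun x => by rw [← hm]; rfl⟩

theorem quot_fc {g : A → E} {b : A} {π : E →ₗ[ℝ] E}
    (hπ : LinearMap.ker π = Submodule.span ℝ {g b}) (F : Set A) :
    IsFc (fun a => π (g a)) F ↔ IsFc g F ∧ b ∈ F := by
  have hb : π (g b) = 0 := by
    rw [← LinearMap.mem_ker, hπ]; exact Submodule.mem_span_singleton_self _
  constructor
  · intro h
    refine ⟨?_, fc_zero_mem h hb⟩
    obtain ⟨n, h0, h1⟩ := h
    exact ⟨n ∘ₗ π, h0, h1⟩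
  · rintro ⟨⟨n, h0, h1⟩, hbF⟩
    obtain ⟨m, hm⟩ := factor hπ n (h0 b hbF)
    exact ⟨m, fun a ha => by rw [← hm]; exact h0 a ha, fun a ha => by rw [← hm]; exact h1 a ha⟩

theorem quot_zero {g : A → E} {b : A} {π : E →ₗ[ℝ] E}
    (hπ : LinearMap.ker π = Submodule.span ℝ {g b}) (a : A) :
    π (g a) = 0 ↔ a ∈ lnS g b := by
  rw [← LinearMap.mem_ker, hπ, Submodule.mem_span_singleton]
  exact ⟨fun ⟨c, hc⟩ => ⟨c, hc.symm⟩, fun ⟨c, hc⟩ => ⟨c, hc.symm⟩⟩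

theorem quot_pointed {g : A → E} {b : A} {π : E →ₗ[ℝ] E}
    (hπ : LinearMap.ker π = Submodule.span ℝ {g b}) (hb : IsRay g b) :
    Pointed (fun a => π (g a)) := by
  unfold Pointed
  have : {a | π (g a) = 0} = lnS g b := by ext a; exact quot_zero hπ a
  rw [this, quot_fc hπ]
  exact ⟨hb.2, self_mem_lnS g b⟩

theorem quot_intr {g : A → E} {π : E →ₗ[ℝ] E} {Z : E} (hZ : Intr g Z) :
    Intr (fun a => π (g a)) (π Z) := by
  refine ⟨?_, fun n h h' => hZ.2 (n ∘ₗ π) h h'⟩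
  have : range (fun a => π (g a)) = π '' range g := by rw [← range_comp]; rfl
  rw [this, Submodule.span_image]
  exact Submodule.mem_map_of_mem hZ.1

theorem quot_rk {g : A → E} {b : A} {π : E →ₗ[ℝ] E}
    (hπ : LinearMap.ker π = Submodule.span ℝ {g b}) (hb : g b ≠ 0) :
    rk (fun a => π (g a)) + 1 = rk g := by
  have : range (fun a => π (g a)) = π '' range g := by rw [← range_comp]; rfl
  unfold rk
  rw [this, Submodule.span_image]
  set S := Submodule.span ℝ (range g)
  have hle : LinearMap.ker π ≤ S := by
    rw [hπ, Submodule.span_singleton_le_iff_mem]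
    exact Submodule.subset_span (mem_range_self b)
  have h1 := LinearMap.finrank_range_add_finrank_ker (π.domRestrict S)
  have h2 : LinearMap.range (π.domRestrict S) = S.map π := by
    rw [LinearMap.range_domRestrict]
  have h3 : Module.finrank ℝ (LinearMap.ker (π.domRestrict S)) = 1 := by
    have : LinearMap.ker (π.domRestrict S) = (LinearMap.ker π).comap S.subtype := by
      rw [LinearMap.ker_domRestrict]
    rw [this, (Submodule.comapSubtypeEquivOfLe hle).finrank_eq, hπ, finrank_span_singleton hb]
  rw [h2, h3] at h1
  exact h1

theorem quot_bd {g : A → E} {b : A} {π : E →ₗ[ℝ] E}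
    (hπ : LinearMap.ker π = Submodule.span ℝ {g b}) (a : A) :
    Bd (fun a => π (g a)) a ↔ ∃ F, IsFc g F ∧ F ≠ univ ∧ b ∈ F ∧ a ∈ F := by
  unfold Bd
  simp only [quot_fc hπ]
  constructor
  · rintro ⟨F, ⟨h1, h2⟩, h3, h4⟩; exact ⟨F, h1, h3, h2, h4⟩
  · rintro ⟨F, h1, h2, h3, h4⟩; exact ⟨F, ⟨h1, h3⟩, h2, h4⟩

/-- orthogonal projection along `v` -/
noncomputable def opr {E : Type} [NormedAddCommGroup E] [InnerProductSpace ℝ E] (v : E) :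
    E →ₗ[ℝ] E :=
  LinearMap.id - (((‖v‖ ^ 2)⁻¹ • (innerₛₗ ℝ v)).smulRight v)

theorem opr_apply (v x : E) : opr v x = x - ((‖v‖ ^ 2)⁻¹ * inner ℝ v x) • v := by
  simp [opr]

theorem opr_ker {v : E} (hv : v ≠ 0) : LinearMap.ker (opr v) = Submodule.span ℝ {v} := by
  ext x
  rw [LinearMap.mem_ker, Submodule.mem_span_singleton, opr_apply]
  constructor
  · intro h
    exact ⟨_, (sub_eq_zero.1 h).symm⟩
  · rintro ⟨c, rfl⟩
    rw [inner_smul_right, real_inner_self_eq_norm_sq]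
    have : ‖v‖ ≠ 0 := norm_ne_zero_iff.2 hv
    field_simp
    simp

theorem opr_inner {v : E} (hv : v ≠ 0) (x y : E) : inner ℝ (opr v x) (opr v y) =
    inner ℝ x y - (‖v‖ ^ 2)⁻¹ * inner ℝ v x * inner ℝ v y := by
  rw [opr_apply, opr_apply]
  simp only [inner_sub_left, inner_sub_right, inner_smul_left, inner_smul_right,
    real_inner_self_eq_norm_sq, real_inner_comm v x, RCLike.conj_to_real]
  have : ‖v‖ ≠ 0 := norm_ne_zero_iff.2 hv
  field_simp
  ring

/-- the affine projection from `v` when `h v = 1` -/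
noncomputable def apr {E : Type} [NormedAddCommGroup E] [InnerProductSpace ℝ E]
    (h : E →ₗ[ℝ] ℝ) (v : E) : E →ₗ[ℝ] E :=
  LinearMap.id - h.smulRight v

theorem apr_apply (h : E →ₗ[ℝ] ℝ) (v x : E) : apr h v x = x - h x • v := by
  simp [apr]

theorem apr_ker {h : E →ₗ[ℝ] ℝ} {v : E} (hv : h v = 1) :
    LinearMap.ker (apr h v) = Submodule.span ℝ {v} := by
  ext x
  rw [LinearMap.mem_ker, Submodule.mem_span_singleton, apr_apply]
  constructor
  · intro h
    exact ⟨_, (sub_eq_zero.1 h).symm⟩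
  · rintro ⟨c, rfl⟩
    simp [hv]

/-! ### Rank two -/

theorem rank_two {g : A → E} (hp : Pointed g) (hr : rk g = 2) :
    ∃ e f, IsRay g e ∧ IsRay g f ∧ (∀ x y : ℝ, x • g e + y • g f = 0 → x = 0 ∧ y = 0) ∧
      ∀ a, ∃ x y : ℝ, 0 ≤ x ∧ 0 ≤ y ∧ g a = x • g e + y • g f := by
  obtain ⟨b, hb⟩ := rk_pos (by omega : 1 ≤ rk g)
  obtain ⟨e, _, he⟩ := exists_ray hp (fc_univ g) ⟨b, mem_univ b, hb⟩
  -- the quotient by `e`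
  have hπ := opr_ker he.1
  have hqr := quot_rk hπ he.1
  have hqp := quot_pointed hπ he
  obtain ⟨n, hn0, hn1⟩ := id he.2
  have hne : ∃ a, 0 < n (g a) := by
    by_contra! h
    have := rk_le_one_of_prop (g := g) (g e) (fun a => by
      by_contra h'
      have := hn1 a h'
      have := h a
      linarith)
    omega
  obtain ⟨n0, _, hpos⟩ := id hp
  have hpos : ∀ a, g a ≠ 0 → 0 < n0 (g a) := fun a h => hpos a h
  have hne0 : n (g e) = 0 := hn0 e (self_mem_lnS g e)
  obtain ⟨μ, h1, h2, a0, _, h4, h5⟩ := tilt hpos (fc_univ g) ⟨e, mem_univ e, he.1⟩ (-n)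
  have hμ : 0 < -μ := by
    obtain ⟨a, ha⟩ := hne
    have hga : g a ≠ 0 := by intro h; simp [h] at ha
    have := h1 a (mem_univ a)
    simp only [LinearMap.sub_apply, LinearMap.smul_apply, smul_eq_mul, LinearMap.neg_apply] at this
    have := hpos a hga
    by_contra! hlt
    nlinarith
  obtain ⟨f, hfF, hf⟩ := exists_ray hp h2 ⟨a0, ⟨mem_univ _, h5⟩, h4⟩
  have hmf : (-n - μ • n0) (g f) = 0 := hfF.2
  have hme : 0 < (-n - μ • n0) (g e) := by
    simp only [LinearMap.sub_apply, LinearMap.smul_apply, smul_eq_mul, LinearMap.neg_apply, hne0]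
    have := hpos e he.1
    nlinarith
  have hnf : 0 < n (g f) := by
    simp only [LinearMap.sub_apply, LinearMap.smul_apply, smul_eq_mul, LinearMap.neg_apply] at hmf
    have := hpos f hf.1
    nlinarith
  have hli : ∀ x y : ℝ, x • g e + y • g f = 0 → x = 0 ∧ y = 0 := by
    intro x y hxy
    have e1 := congrArg n hxy
    have e2 := congrArg (-n - μ • n0) hxy
    rw [map_add, map_smul, map_smul, hne0, map_zero] at e1
    rw [map_add, map_smul, map_smul, hmf, map_zero] at e2
    simp only [smul_eq_mul, mul_zero, zero_add, add_zero] at e1 e2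
    exact ⟨(mul_eq_zero.1 e2).resolve_right hme.ne', (mul_eq_zero.1 e1).resolve_right hnf.ne'⟩
  refine ⟨e, f, he, hf, hli, fun a => ?_⟩
  have hspan : Submodule.span ℝ {g e, g f} = Submodule.span ℝ (range g) := by
    apply Submodule.eq_of_le_of_finrank_eq
    · apply Submodule.span_mono
      rintro _ (rfl | rfl) <;> exact mem_range_self _
    · have : LinearIndependent ℝ ![g e, g f] := by
        rw [LinearIndependent.pair_iff]; exact hli
      have h := finrank_span_eq_card this
      rw [show range ![g e, g f] = {g e, g f} by
        simp [Matrix.range_cons, Matrix.range_empty, Set.pair_comm]] at h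
      rw [h, ← rk, hr]; rfl
  have hga : g a ∈ Submodule.span ℝ {g e, g f} := by
    rw [hspan]; exact Submodule.subset_span (mem_range_self a)
  rw [Submodule.mem_span_pair] at hga
  obtain ⟨x, y, hxy⟩ := hga
  refine ⟨x, y, ?_, ?_, hxy.symm⟩
  · have := h1 a (mem_univ a)
    rw [← hxy, map_add, map_smul, map_smul, hmf] at this
    simp only [smul_eq_mul, mul_zero, add_zero] at this
    exact nonneg_of_mul_nonneg_left this hme
  · have : 0 ≤ n (g a) := by
      by_cases h : a ∈ lnS g e
      · exact (hn0 a h).ge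
      · exact (hn1 a h).le
    rw [← hxy, map_add, map_smul, map_smul, hne0] at this
    simp only [smul_eq_mul, mul_zero, zero_add] at this
    exact nonneg_of_mul_nonneg_left this hnf

end Insc
end PartA

section PartB
namespace Insc

open Set

variable {A : Type} [Finite A] {E : Type} [NormedAddCommGroup E] [InnerProductSpace ℝ E]
  [FiniteDimensional ℝ E]

theorem gramMap' {ι : Type} [Fintype ι] (g g' : ι → E)
    (h : ∀ i j, inner ℝ (g i) (g j) = inner ℝ (g' i) (g' j)) :
    ∃ L : E →ₗᵢ[ℝ] E, ∀ i, L (g i) = g' i := by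
  classical
  let T := Fintype.linearCombination ℝ g
  let T' := Fintype.linearCombination ℝ g'
  have hn : ∀ x, ‖T x‖ = ‖T' x‖ := by
    intro x
    have : ‖T x‖ ^ 2 = ‖T' x‖ ^ 2 := by
      rw [← real_inner_self_eq_norm_sq, ← real_inner_self_eq_norm_sq]
      simp only [T, T', Fintype.linearCombination_apply, sum_inner, inner_sum, inner_smul_left,
        inner_smul_right, h]
    exact (pow_left_inj₀ (norm_nonneg _) (norm_nonneg _) two_ne_zero).1 this
  obtain ⟨S, hS⟩ := T.rangeRestrict.exists_rightInverse_of_surjective T.range_rangeRestrict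
  have hS' : ∀ y, T (S y) = y := by
    intro y
    have := congrArg Subtype.val (LinearMap.congr_fun hS y)
    simpa using this
  let L0 : LinearMap.range T →ₗᵢ[ℝ] E :=
    { toLinearMap := T' ∘ₗ S
      norm_map' := by
        intro y
        rw [LinearMap.comp_apply, ← hn, hS']
        rfl }
  refine ⟨L0.extend, fun i => ?_⟩
  have hgi : T (Pi.single i 1) = g i := by simp [T]
  have hgi' : T' (Pi.single i 1) = g' i := by simp [T']
  have hmem : g i ∈ LinearMap.range T := ⟨_, hgi⟩
  have h1 := L0.extend_apply ⟨g i, hmem⟩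
  have h2 : L0 ⟨g i, hmem⟩ = T' (S ⟨g i, hmem⟩) := rfl
  have h3 : T' (S ⟨g i, hmem⟩ - Pi.single i 1) = 0 := by
    rw [← norm_eq_zero, ← hn, map_sub, hS', hgi]
    simp
  rw [map_sub, sub_eq_zero, hgi'] at h3
  rw [h2, h3] at h1
  exact h1

theorem gramMap (g g' : A → E) (F : Set A)
    (h : ∀ a ∈ F, ∀ b ∈ F, inner ℝ (g a) (g b) = inner ℝ (g' a) (g' b)) :
    ∃ L : E →ₗᵢ[ℝ] E, ∀ a ∈ F, L (g a) = g' a := by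
  classical
  have := Fintype.ofFinite F
  obtain ⟨L, hL⟩ := gramMap' (fun a : F => g a) (fun a : F => g' a)
    (fun i j => h i i.2 j j.2)
  exact ⟨L, fun a ha => hL ⟨a, ha⟩⟩

structure Pr {A : Type} {E : Type} [NormedAddCommGroup E] [InnerProductSpace ℝ E]
    (g g' : A → E) : Prop where
  h1 : ∀ F, IsFc g F ↔ IsFc g' F
  h2 : ∀ F, IsFc g F → F ≠ univ → ∀ a ∈ F, ∀ b ∈ F, inner ℝ (g a) (g b) = inner ℝ (g' a) (g' b)
  p : Pointed g
  p' : Pointed g'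

theorem Pr.symm {g g' : A → E} (H : Pr g g') : Pr g' g :=
  ⟨fun F => (H.h1 F).symm, fun F h1 h2 a ha b hb => (H.h2 F ((H.h1 F).2 h1) h2 a ha b hb).symm,
    H.p', H.p⟩

theorem Pr.map {g g' : A → E} (H : Pr g g') {F : Set A} (hF : IsFc g F) (hne : F ≠ univ) :
    ∃ L : E →ₗᵢ[ℝ] E, ∀ a ∈ F, L (g a) = g' a := gramMap g g' F (H.h2 F hF hne)

theorem Pr.zero {g g' : A → E} (H : Pr g g') {a : A} (h : g a = 0) : g' a = 0 := by
  exact fc_zero_mem ((H.h1 _).2 H.p') h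

theorem Pr.zero_iff {g g' : A → E} (H : Pr g g') {a : A} : g a = 0 ↔ g' a = 0 :=
  ⟨H.zero, H.symm.zero⟩

theorem Pr.bd_iff {g g' : A → E} (H : Pr g g') {a : A} : Bd g a ↔ Bd g' a := by
  unfold Bd; simp only [H.h1]

theorem Pr.ray {g g' : A → E} (H : Pr g g') {b : A} (h : IsRay g b) :
    IsRay g' b ∧ lnS g' b = lnS g b := by
  refine ray_of_min H.p' ((H.h1 _).1 h.2) ?_ (self_mem_lnS g b) (fun h0 => h.1 (H.symm.zero h0))
  rintro G h1 h2 ⟨a, ha, ha0⟩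
  exact ray_min h ((H.h1 _).2 h1) h2 ⟨a, ha, fun h0 => ha0 (H.zero h0)⟩

theorem Pr.norm_bd {g g' : A → E} (H : Pr g g') {a : A} (h : Bd g a) : ‖g a‖ = ‖g' a‖ := by
  obtain ⟨F, h1, h2, h3⟩ := h
  have := H.h2 F h1 h2 a h3 a h3
  rw [real_inner_self_eq_norm_sq, real_inner_self_eq_norm_sq] at this
  exact (pow_left_inj₀ (norm_nonneg _) (norm_nonneg _) two_ne_zero).1 this

theorem ray_ne_univ {g : A → E} (hr : 2 ≤ rk g) (b : A) : lnS g b ≠ univ := by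
  intro h
  have := rk_le_one_of_prop (g := g) (g b) (fun a => by
    have : a ∈ lnS g b := h ▸ mem_univ a
    exact this)
  omega

theorem ray_bd {g : A → E} (hr : 2 ≤ rk g) {b : A} (hb : IsRay g b) : Bd g b :=
  ⟨_, hb.2, ray_ne_univ hr b, self_mem_lnS g b⟩

theorem Pr.quot {g g' : A → E} (H : Pr g g') {b : A} (hb : IsRay g b) {π π' : E →ₗ[ℝ] E}
    (hπ : LinearMap.ker π = Submodule.span ℝ {g b})
    (hπ' : LinearMap.ker π' = Submodule.span ℝ {g' b})
    (h2 : ∀ F, IsFc g F → F ≠ univ → b ∈ F → ∀ a ∈ F, ∀ c ∈ F,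
      inner ℝ (π (g a)) (π (g c)) = inner ℝ (π' (g' a)) (π' (g' c))) :
    Pr (fun a => π (g a)) (fun a => π' (g' a)) where
  h1 F := by rw [quot_fc hπ, quot_fc hπ', H.h1]
  h2 F hF hne := by
    rw [quot_fc hπ] at hF
    exact h2 F hF.1 hne hF.2
  p := quot_pointed hπ hb
  p' := quot_pointed hπ' (H.ray hb).1

theorem Pr.quot_opr {g g' : A → E} (H : Pr g g') {b : A} (hb : IsRay g b) :
    Pr (fun a => opr (g b) (g a)) (fun a => opr (g' b) (g' a)) := by
  refine H.quot hb (opr_ker hb.1) (opr_ker (H.ray hb).1.1) ?_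
  intro F hF hne hbF a ha c hc
  rw [opr_inner hb.1, opr_inner (H.ray hb).1.1, H.norm_bd ⟨F, hF, hne, hbF⟩,
    H.h2 F hF hne a ha c hc, H.h2 F hF hne b hbF a ha, H.h2 F hF hne b hbF c hc]

theorem Pr.quot_apr {g g' : A → E} (H : Pr g g') {b : A} (hb : IsRay g b) {h h' : E →ₗ[ℝ] ℝ}
    (hh : ∀ a, g a ≠ 0 → h (g a) = 1) (hh' : ∀ a, g' a ≠ 0 → h' (g' a) = 1) :
    Pr (fun a => apr h (g b) (g a)) (fun a => apr h' (g' b) (g' a)) := by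
  refine H.quot hb (apr_ker (hh b hb.1)) (apr_ker (hh' b (H.ray hb).1.1)) ?_
  intro F hF hne hbF a ha c hc
  obtain ⟨L, hL⟩ := H.map hF hne
  have key : ∀ a ∈ F, apr h' (g' b) (g' a) = L (apr h (g b) (g a)) := by
    intro a ha
    rw [apr_apply, apr_apply, map_sub, map_smul, hL a ha, hL b hbF]
    by_cases h0 : g a = 0
    · simp [h0, H.zero h0]
    · rw [hh a h0, hh' a (fun h => h0 (H.symm.zero h))]
  rw [key a ha, key c hc, LinearIsometry.inner_map_map]

theorem Pr.rk_le {g g' : A → E} (H : Pr g g') : rk g ≤ rk g' := by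
  induction hk : rk g using Nat.strong_induction_on generalizing g g' with
  | _ k ih =>
    rcases Nat.lt_or_ge 0 k with hk0 | hk0
    · subst hk
      obtain ⟨a, ha⟩ := rk_pos hk0
      obtain ⟨b, _, hb⟩ := exists_ray H.p (fc_univ g) ⟨a, mem_univ a, ha⟩
      have h1 := quot_rk (opr_ker hb.1) hb.1
      have h2 := quot_rk (opr_ker (H.ray hb).1.1) (H.ray hb).1.1
      have := ih _ (by omega) (H.quot_opr hb) rfl
      omega
    · omega

theorem Pr.rk_eq {g g' : A → E} (H : Pr g g') : rk g = rk g' :=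
  le_antisymm H.rk_le H.symm.rk_le

theorem opr_inner_left {v : E} (hv : v ≠ 0) (x y : E) :
    inner ℝ (opr v x) (opr v y) = inner ℝ x (opr v y) := by
  rw [opr_inner hv, opr_apply, inner_sub_right, inner_smul_right, real_inner_comm x v]
  ring_nf

/-- Contact lemma. -/
theorem contact {g g' : A → E} (H : Pr g g') (hr : 3 ≤ rk g) (Λ Λ' : E →ₗ[ℝ] ℝ)
    (hδ : ∀ a, Bd g a → Λ (g a) ≤ Λ' (g' a))
    (hc : ∃ b, Bd g b ∧ g b ≠ 0 ∧ Λ (g b) = Λ' (g' b))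
    (hloc : ∀ b, IsRay g b → Λ (g b) = Λ' (g' b) → ∀ F, IsFc g F → F ≠ univ → b ∈ F →
      ∀ a ∈ F, Λ (g a) = Λ' (g' a)) :
    ∀ a, Bd g a → Λ (g a) = Λ' (g' a) := by
  -- zero set of `δ` in a proper face is a face
  have hz : ∀ F, IsFc g F → F ≠ univ → IsFc g {a | a ∈ F ∧ Λ (g a) = Λ' (g' a)} := by
    intro F hF hne
    obtain ⟨L, hL⟩ := H.map hF hne
    have := fc_sub hF (Λ' ∘ₗ L.toLinearMap - Λ) (fun a ha => by
      simp only [LinearMap.sub_apply, LinearMap.comp_apply, LinearIsometry.coe_toLinearMap, hL a ha]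
      linarith [hδ a ⟨F, hF, hne, ha⟩])
    convert this using 1
    ext a
    simp only [mem_ofPred_eq]
    refine and_congr_right fun ha => ?_
    simp only [LinearMap.sub_apply, LinearMap.comp_apply, LinearIsometry.coe_toLinearMap, hL a ha]
    constructor
    · intro h; linarith
    · intro h; linarith
  have hprop : ∀ {F G : Set A}, F ≠ univ → G ⊆ F → G ≠ univ := by
    rintro F G h1 h2 rfl
    exact h1 (univ_subset_iff.1 h2)
  rintro a ⟨F, hF, hne, haF⟩
  by_contra hcon
  have ha0 : g a ≠ 0 := by
    intro h
    apply hcon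
    simp [h, H.zero h]
  obtain ⟨n0, _, hn0⟩ := id H.p
  have hn0 : ∀ a, g a ≠ 0 → 0 < n0 (g a) := fun a h => hn0 a h
  have hnoc : ∀ b ∈ F, g b ≠ 0 → Λ (g b) ≠ Λ' (g' b) := by
    intro b hb hb0 hbc
    obtain ⟨b1, hb1, hb1r⟩ := exists_ray H.p (hz F hF hne) ⟨b, ⟨hb, hbc⟩, hb0⟩
    exact hcon (hloc b1 hb1r hb1.2 F hF hne hb1.1 a haF)
  obtain ⟨f, hf0, hf1⟩ := id hF
  obtain ⟨b, ⟨hbB, hb0, hbc⟩, hbmin⟩ := Set.exists_min_image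
    {b | Bd g b ∧ g b ≠ 0 ∧ Λ (g b) = Λ' (g' b)} (fun b => f (g b) / n0 (g b)) (Set.toFinite _) hc
  have hfpos : ∀ c, g c ≠ 0 → Λ (g c) = Λ' (g' c) → 0 < f (g c) := fun c hc0 hcc =>
    hf1 c (fun hcF => hnoc c hcF hc0 hcc)
  set ρ := f (g b) / n0 (g b) with hρ
  have hρpos : 0 < ρ := div_pos (hfpos b hb0 hbc) (hn0 b hb0)
  have hn : ∀ c, Bd g c → Λ (g c) = Λ' (g' c) → 0 ≤ (f - ρ • n0) (g c) := by
    intro c hcB hcc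
    by_cases h0 : g c = 0
    · simp [h0]
    · have := hbmin c ⟨hcB, h0, hcc⟩
      rw [le_div_iff₀ (hn0 c h0)] at this
      simp only [LinearMap.sub_apply, LinearMap.smul_apply, smul_eq_mul]
      linarith
  obtain ⟨G, hG, hGne, hbG⟩ := hbB
  have hG' := hz G hG hGne
  have hG'' := fc_sub hG' (f - ρ • n0) (fun c hc => hn c ⟨G, hG, hGne, hc.1⟩ hc.2)
  have hbz : (f - ρ • n0) (g b) = 0 := by
    simp only [LinearMap.sub_apply, LinearMap.smul_apply, smul_eq_mul, hρ]
    have := (hn0 b hb0).ne'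
    field_simp
    ring
  obtain ⟨b1, ⟨hb1, hb1n⟩, hb1r⟩ := exists_ray H.p hG'' ⟨b, ⟨⟨hbG, hbc⟩, hbz⟩, hb0⟩
  have hπ := opr_ker hb1r.1
  obtain ⟨m, hm⟩ := factor hπ _ hb1n
  have hrk := quot_rk hπ hb1r.1
  have := lemmaB (quot_pointed hπ hb1r) (by omega) m (fun c hc => by
    rw [quot_bd hπ] at hc
    obtain ⟨K, hK, hKne, h1K, hcK⟩ := hc
    rw [← hm]
    exact hn c ⟨K, hK, hKne, hcK⟩ (hloc b1 hb1r hb1.2 K hK hKne h1K c hcK)) a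
  rw [← hm] at this
  simp only [LinearMap.sub_apply, LinearMap.smul_apply, smul_eq_mul, hf0 a haF] at this
  have := hn0 a ha0
  nlinarith

end Insc
end PartB

section PartD
namespace Insc

open Set MeasureTheory

def dt (u v : ℂ) : ℝ := u.re * v.im - u.im * v.re

def oc (u v : ℂ) : Set ℂ := {w | 0 < dt w v / dt u v ∧ 0 < dt u w / dt u v}

theorem dt_cramer {u v : ℂ} (h : dt u v ≠ 0) (w : ℂ) :
    w = (dt w v / dt u v : ℝ) • u + (dt u w / dt u v : ℝ) • v := by
  apply Complex.ext
  · rw [Complex.add_re, Complex.real_smul, Complex.real_smul, Complex.re_ofReal_mul,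
      Complex.re_ofReal_mul, div_mul_eq_mul_div, div_mul_eq_mul_div, ← add_div, eq_div_iff h]
    simp only [dt]; ring
  · rw [Complex.add_im, Complex.real_smul, Complex.real_smul, Complex.im_ofReal_mul,
      Complex.im_ofReal_mul, div_mul_eq_mul_div, div_mul_eq_mul_div, ← add_div, eq_div_iff h]
    simp only [dt]; ring

theorem mem_oc {u v : ℂ} (h : dt u v ≠ 0) (w : ℂ) :
    w ∈ oc u v ↔ ∃ x y : ℝ, 0 < x ∧ 0 < y ∧ w = x • u + y • v := by
  constructor
  · rintro ⟨h1, h2⟩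
    exact ⟨_, _, h1, h2, dt_cramer h w⟩
  · rintro ⟨x, y, hx, hy, rfl⟩
    have e1 : dt (x • u + y • v) v = x * dt u v := by simp [dt]; ring
    have e2 : dt u (x • u + y • v) = y * dt u v := by simp [dt]; ring
    refine ⟨?_, ?_⟩
    · rw [e1, mul_div_cancel_right₀ _ h]; exact hx
    · rw [e2, mul_div_cancel_right₀ _ h]; exact hy

theorem dt_ne_zero {u v : ℂ} (h : ∀ x y : ℝ, x • u + y • v = 0 → x = 0 ∧ y = 0) :
    dt u v ≠ 0 := by
  intro h0
  have h0' : u.re * v.im - u.im * v.re = 0 := h0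
  have hu : u ≠ 0 := by
    rintro rfl
    have := (h 1 0 (by simp)).1
    norm_num at this
  have h1 := h v.re (-u.re) (by
    apply Complex.ext <;> simp <;> linarith)
  have h2 := h v.im (-u.im) (by
    apply Complex.ext <;> simp <;> linarith)
  apply hu
  apply Complex.ext
  · simpa using h1.2
  · simpa using h2.2

theorem measurable_oc (u v : ℂ) : MeasurableSet (oc u v) := by
  have : IsOpen (oc u v) := by
    have h1 : IsOpen {w : ℂ | 0 < dt w v / dt u v} := by
      exact isOpen_lt continuous_const (by unfold dt; fun_prop)
    have h2 : IsOpen {w : ℂ | 0 < dt u w / dt u v} := by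
      exact isOpen_lt continuous_const (by unfold dt; fun_prop)
    exact h1.inter h2
  exact this.measurableSet

theorem null_line {v : ℂ} (hv : v ≠ 0) : volume {w : ℂ | dt v w = 0} = 0 := by
  let f : ℂ →ₗ[ℝ] ℝ :=
    { toFun := fun w => dt v w
      map_add' := by intro x y; simp [dt]; ring
      map_smul' := by intro c x; simp [dt]; ring }
  have : {w : ℂ | dt v w = 0} = (LinearMap.ker f : Set ℂ) := by
    ext w; rfl
  rw [this]
  apply Measure.addHaar_submodule
  intro h
  rw [LinearMap.ker_eq_top] at h
  have := LinearMap.congr_fun h (Complex.I * v)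
  simp [f, dt] at this
  apply hv
  apply Complex.ext <;> simp <;> nlinarith

noncomputable def cc : ENNReal := ∫⁻ r in Ioo (0:ℝ) 1, ENNReal.ofReal r

theorem cc_lt : cc < ⊤ := by
  have : cc ≤ ∫⁻ r in Ioo (0:ℝ) 1, 1 := by
    apply setLIntegral_mono measurable_const
    intro x hx
    rw [← ENNReal.ofReal_one]
    exact ENNReal.ofReal_le_ofReal hx.2.le
  refine this.trans_lt ?_
  simp

theorem sector_std {θ : ℝ} (h0 : 0 < θ) (h1 : θ < Real.pi) :
    volume (oc 1 (Complex.exp (θ * Complex.I)) ∩ Metric.ball 0 1) = cc * ENNReal.ofReal θ := by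
  set S := oc 1 (Complex.exp (θ * Complex.I)) ∩ Metric.ball 0 1 with hS
  have hm : MeasurableSet S := (measurable_oc _ _).inter Metric.isOpen_ball.measurableSet
  have hs : 0 < Real.sin θ := Real.sin_pos_of_pos_of_lt_pi h0 h1
  rw [← lintegral_indicator_one hm, ← Complex.lintegral_comp_polarCoord_symm]
  have hmem : ∀ p ∈ Complex.polarCoord.target, Complex.polarCoord.symm p ∈ S ↔
      p ∈ Ioo (0:ℝ) 1 ×ˢ Ioo (0:ℝ) θ := by
    rintro ⟨r, φ⟩ hp
    rw [Complex.polarCoord_target] at hp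
    obtain ⟨hr, hφ1, hφ2⟩ := hp
    simp only [mem_Ioi] at hr hφ1 hφ2
    have e1 : dt 1 (Complex.exp (θ * Complex.I)) = Real.sin θ := by
      simp [dt, Complex.exp_ofReal_mul_I_im]
    have e2 : dt (Complex.polarCoord.symm (r, φ)) (Complex.exp (θ * Complex.I)) =
        r * Real.sin (θ - φ) := by
      simp [dt, Complex.exp_ofReal_mul_I_im, Complex.exp_ofReal_mul_I_re,
        Complex.polarCoord_symm_apply, Complex.cos_ofReal_re, Complex.sin_ofReal_re, Real.sin_sub]
      ring
    have e3 : dt 1 (Complex.polarCoord.symm (r, φ)) = r * Real.sin φ := by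
      simp [dt, Complex.polarCoord_symm_apply, Complex.cos_ofReal_re, Complex.sin_ofReal_re]
    have e4 : ‖Complex.polarCoord.symm (r, φ)‖ = r := by
      rw [Complex.norm_polarCoord_symm]
      simp [abs_of_pos hr]
    have e5 : Complex.polarCoord.symm (r, φ) ∈ S ↔
        (0 < r * Real.sin (θ - φ) / Real.sin θ ∧ 0 < r * Real.sin φ / Real.sin θ) ∧ r < 1 := by
      rw [hS, mem_inter_iff, oc, mem_ofPred_eq, e1, e2, e3, mem_ball_zero_iff, e4]
    rw [e5]
    simp only [mem_prod, mem_Ioo]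
    constructor
    · rintro ⟨⟨h2, h3⟩, h4⟩
      have h2' : 0 < Real.sin (θ - φ) := by
        by_contra! hh
        have : r * Real.sin (θ - φ) / Real.sin θ ≤ 0 :=
          div_nonpos_of_nonpos_of_nonneg (mul_nonpos_of_nonneg_of_nonpos hr.le hh) hs.le
        linarith
      have h3' : 0 < Real.sin φ := by
        by_contra! hh
        have : r * Real.sin φ / Real.sin θ ≤ 0 :=
          div_nonpos_of_nonpos_of_nonneg (mul_nonpos_of_nonneg_of_nonpos hr.le hh) hs.le
        linarith
      have hφ0 : 0 < φ := by
        by_contra! hh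
        have := Real.sin_nonpos_of_nonpos_of_neg_pi_le hh hφ1.le
        linarith
      have hφθ : φ < θ := by
        by_contra! hh
        have := Real.sin_nonpos_of_nonpos_of_neg_pi_le (x := θ - φ) (by linarith) (by linarith)
        linarith
      exact ⟨⟨hr, h4⟩, hφ0, hφθ⟩
    · rintro ⟨⟨_, h4⟩, h5, h6⟩
      have := Real.sin_pos_of_pos_of_lt_pi h5 hφ2
      have := Real.sin_pos_of_pos_of_lt_pi (x := θ - φ) (by linarith) (by linarith)
      exact ⟨⟨by positivity, by positivity⟩, h4⟩
  have hsub : Ioo (0:ℝ) 1 ×ˢ Ioo (0:ℝ) θ ⊆ Complex.polarCoord.target := by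
    rintro ⟨r, φ⟩ ⟨h2, h3⟩
    rw [Complex.polarCoord_target]
    exact ⟨h2.1, by constructor <;> simp only [mem_Ioo] at h3 <;> linarith [h3.1, h3.2]⟩
  have hT : MeasurableSet (Ioo (0:ℝ) 1 ×ˢ Ioo (0:ℝ) θ) := measurableSet_Ioo.prod measurableSet_Ioo
  have hcongr : ∫⁻ p in polarCoord.target, ENNReal.ofReal p.1 •
        S.indicator (1 : ℂ → ENNReal) (Complex.polarCoord.symm p) =
      ∫⁻ p in Complex.polarCoord.target, (Ioo (0:ℝ) 1 ×ˢ Ioo (0:ℝ) θ).indicator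
        (fun p => ENNReal.ofReal p.1) p := by
    apply setLIntegral_congr_fun (Complex.polarCoord.open_target.measurableSet)
    intro p hp
    by_cases h : p ∈ Ioo (0:ℝ) 1 ×ˢ Ioo (0:ℝ) θ
    · simp only [indicator_of_mem h, indicator_of_mem ((hmem p hp).2 h)]
      simp
    · simp only [indicator_of_notMem h, indicator_of_notMem (fun h' => h ((hmem p hp).1 h'))]
      simp
  rw [hcongr, setLIntegral_indicator hT, inter_eq_left.2 hsub]
  rw [Measure.volume_eq_prod, ← Measure.prod_restrict, lintegral_prod _ (by fun_prop)]
  simp only [lintegral_const, Measure.restrict_apply_univ, Real.volume_Ioo, sub_zero]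
  rw [lintegral_mul_const _ (by fun_prop)]
  rfl

theorem dt_indep {u v : ℂ} (h : dt u v ≠ 0) (x y : ℝ) (hxy : x • u + y • v = 0) :
    x = 0 ∧ y = 0 := by
  have e1 : dt (x • u + y • v) v = x * dt u v := by simp [dt]; ring
  have e2 : dt u (x • u + y • v) = y * dt u v := by simp [dt]; ring
  rw [hxy] at e1 e2
  have e3 : dt 0 v = 0 := by simp [dt]
  have e4 : dt u 0 = 0 := by simp [dt]
  rw [e3] at e1
  rw [e4] at e2
  exact ⟨(mul_eq_zero.1 e1.symm).resolve_right h, (mul_eq_zero.1 e2.symm).resolve_right h⟩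

theorem sector {u v : ℂ} (h : dt u v ≠ 0) :
    volume (oc u v ∩ Metric.ball 0 1) =
      cc * ENNReal.ofReal (InnerProductGeometry.angle u v) := by
  set θ := InnerProductGeometry.angle u v with hθ
  have hu : u ≠ 0 := by rintro rfl; simp [dt] at h
  have hv : v ≠ 0 := by rintro rfl; simp [dt] at h
  have hun : 0 < ‖u‖ := norm_pos_iff.2 hu
  have hvn : 0 < ‖v‖ := norm_pos_iff.2 hv
  have h0 : 0 < θ := by
    refine lt_of_le_of_ne (InnerProductGeometry.angle_nonneg _ _) (fun h' => ?_)
    obtain ⟨_, r, _, hr⟩ := InnerProductGeometry.angle_eq_zero_iff.1 (hθ ▸ h'.symm)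
    have := dt_indep h r (-1) (by rw [hr]; simp)
    norm_num at this
  have h1 : θ < Real.pi := by
    refine lt_of_le_of_ne (InnerProductGeometry.angle_le_pi _ _) (fun h' => ?_)
    obtain ⟨_, r, _, hr⟩ := InnerProductGeometry.angle_eq_pi_iff.1 (hθ ▸ h')
    have := dt_indep h r (-1) (by rw [hr]; simp)
    norm_num at this
  have hexp : ‖Complex.exp (θ * Complex.I)‖ = 1 := Complex.norm_exp_ofReal_mul_I θ
  have hcos : inner ℝ (1 : ℂ) (Complex.exp (θ * Complex.I)) = Real.cos θ := by
    rw [Complex.inner]; simp [Complex.exp_ofReal_mul_I_re]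
  have hin : inner ℝ u v = ‖u‖ * ‖v‖ * Real.cos θ := by
    rw [hθ, InnerProductGeometry.cos_angle]; field_simp
  obtain ⟨L, hL⟩ := gramMap' ![u, v] ![‖u‖ • (1 : ℂ), ‖v‖ • Complex.exp (θ * Complex.I)] (by
    intro i j
    fin_cases i <;> fin_cases j <;>
      simp only [Fin.zero_eta, Fin.mk_one, Fin.isValue, Matrix.cons_val_zero, Matrix.cons_val_one,
        Matrix.cons_val_fin_one, inner_smul_left, inner_smul_right, real_inner_self_eq_norm_sq,
        RCLike.conj_to_real, hexp, hcos, hin, real_inner_comm u v, norm_one,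
        real_inner_comm (1 : ℂ) (Complex.exp (θ * Complex.I))] <;> ring)
  have hLu : L u = ‖u‖ • (1 : ℂ) := hL 0
  have hLv : L v = ‖v‖ • Complex.exp (θ * Complex.I) := hL 1
  let L' : ℂ ≃ₗᵢ[ℝ] ℂ := L.toLinearIsometryEquiv rfl
  have hL' : ∀ w, L' w = L w := fun w => rfl
  have hd : dt 1 (Complex.exp (θ * Complex.I)) ≠ 0 := by
    have e1 : dt 1 (Complex.exp (θ * Complex.I)) = Real.sin θ := by
      simp [dt, Complex.exp_ofReal_mul_I_im]
    rw [e1]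
    exact (Real.sin_pos_of_pos_of_lt_pi h0 h1).ne'
  have hmp := L'.measurePreserving.measure_preimage
    (((measurable_oc 1 (Complex.exp (θ * Complex.I))).inter
      (Metric.isOpen_ball (x := (0:ℂ)) (ε := 1)).measurableSet).nullMeasurableSet)
  rw [← sector_std h0 h1, ← hmp]
  congr 1
  ext w
  simp only [mem_inter_iff, mem_preimage, mem_ball_zero_iff, hL', L.norm_map]
  refine and_congr_left fun _ => ?_
  rw [mem_oc h, mem_oc hd]
  constructor
  · rintro ⟨x, y, hx, hy, rfl⟩
    exact ⟨x * ‖u‖, y * ‖v‖, by positivity, by positivity, by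
      rw [map_add, map_smul, map_smul, hLu, hLv, smul_smul, smul_smul]⟩
  · rintro ⟨x, y, hx, hy, hxy⟩
    refine ⟨x / ‖u‖, y / ‖v‖, by positivity, by positivity, L.injective ?_⟩
    rw [hxy, map_add, map_smul, map_smul, hLu, hLv, smul_smul, smul_smul,
      div_mul_cancel₀ _ hun.ne', div_mul_cancel₀ _ hvn.ne']

theorem angle_sum' {ι : Type} [Fintype ι] (u v : ι → ℂ) (hd : ∀ i, dt (u i) (v i) ≠ 0)
    (hcov : ∀ w : ℂ, ∃ i, ∃ x y : ℝ, 0 ≤ x ∧ 0 ≤ y ∧ w = x • u i + y • v i)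
    (hdis : ∀ i j, i ≠ j → Disjoint (oc (u i) (v i)) (oc (u j) (v j))) :
    cc * ENNReal.ofReal (∑ i, InnerProductGeometry.angle (u i) (v i)) =
      volume (Metric.ball (0 : ℂ) 1) := by
  have h1 : volume (⋃ i, (oc (u i) (v i) ∩ Metric.ball 0 1)) =
      cc * ENNReal.ofReal (∑ i, InnerProductGeometry.angle (u i) (v i)) := by
    rw [measure_iUnion (fun i j hij => ((hdis i j hij).mono inter_subset_left inter_subset_left))
      (fun i => (measurable_oc _ _).inter Metric.isOpen_ball.measurableSet)]
    rw [tsum_fintype, ENNReal.ofReal_sum_of_nonneg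
      (fun i _ => InnerProductGeometry.angle_nonneg _ _), Finset.mul_sum]
    exact Finset.sum_congr rfl fun i _ => sector (hd i)
  rw [← h1]
  apply le_antisymm
  · exact measure_mono (iUnion_subset fun i => inter_subset_right)
  · have hN : volume (⋃ i, ({w : ℂ | dt (u i) w = 0} ∪ {w : ℂ | dt (v i) w = 0})) = 0 := by
      rw [measure_iUnion_null_iff]
      intro i
      rw [measure_union_null_iff]
      exact ⟨null_line (by intro h; have := hd i; simp [h, dt] at this),
        null_line (by intro h; have := hd i; simp [h, dt] at this)⟩
    have hsub : Metric.ball (0 : ℂ) 1 ⊆ (⋃ i, (oc (u i) (v i) ∩ Metric.ball 0 1)) ∪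
        (⋃ i, ({w : ℂ | dt (u i) w = 0} ∪ {w : ℂ | dt (v i) w = 0})) := by
      intro w hw
      obtain ⟨i, x, y, hx, hy, hxy⟩ := hcov w
      rcases hx.lt_or_eq with hx | rfl
      · rcases hy.lt_or_eq with hy | rfl
        · exact Or.inl (mem_iUnion.2 ⟨i, (mem_oc (hd i) w).2 ⟨x, y, hx, hy, hxy⟩, hw⟩)
        · refine Or.inr (mem_iUnion.2 ⟨i, Or.inl ?_⟩)
          rw [hxy]; simp [dt]; ring
      · refine Or.inr (mem_iUnion.2 ⟨i, Or.inr ?_⟩)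
        rw [hxy]; simp [dt]; ring
    calc volume (Metric.ball (0 : ℂ) 1) ≤ _ := measure_mono hsub
      _ ≤ _ := measure_union_le _ _
      _ = _ := by rw [hN, add_zero]

/-- a planar system of sectors tiling the plane -/
structure Tiling {ι : Type} (u v : ι → ℂ) : Prop where
  hd : ∀ i, ∀ x y : ℝ, x • u i + y • v i = 0 → x = 0 ∧ y = 0
  hcov : ∀ w : ℂ, ∃ i, ∃ x y : ℝ, 0 ≤ x ∧ 0 ≤ y ∧ w = x • u i + y • v i
  hdis : ∀ i j, ∀ x y z t : ℝ, 0 < x → 0 < y → 0 < z → 0 < t →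
    x • u i + y • v i = z • u j + t • v j → i = j

theorem angle_sum {ι : Type} [Fintype ι] {u v u' v' : ι → ℂ} (h : Tiling u v) (h' : Tiling u' v') :
    ∑ i, InnerProductGeometry.angle (u i) (v i) = ∑ i, InnerProductGeometry.angle (u' i) (v' i) := by
  have key : ∀ {u v : ι → ℂ}, Tiling u v → cc * ENNReal.ofReal (∑ i, InnerProductGeometry.angle (u i) (v i)) =
      volume (Metric.ball (0 : ℂ) 1) := by
    intro u v h
    have hd := fun i => dt_ne_zero (h.hd i)
    refine angle_sum' u v hd h.hcov fun i j hij => ?_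
    rw [Set.disjoint_left]
    intro w hw hw'
    obtain ⟨x, y, hx, hy, e1⟩ := (mem_oc (hd i) w).1 hw
    obtain ⟨z, t, hz, ht, e2⟩ := (mem_oc (hd j) w).1 hw'
    exact hij (h.hdis i j x y z t hx hy hz ht (e1 ▸ e2))
  have h1 := key h
  have h2 := key h'
  have hc : cc ≠ 0 := by
    intro h0
    rw [h0, zero_mul] at h1
    exact (Metric.measure_ball_pos volume (0 : ℂ) one_pos).ne h1
  rw [← h2, ENNReal.mul_right_inj hc cc_lt.ne] at h1
  exact (ENNReal.ofReal_eq_ofReal_iff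
    (Finset.sum_nonneg fun i _ => InnerProductGeometry.angle_nonneg _ _)
    (Finset.sum_nonneg fun i _ => InnerProductGeometry.angle_nonneg _ _)).1 h1

end Insc
end PartD

section PartD2
namespace Insc

open Set

def dD (a b x s : ℝ) : ℝ := x + 2 * a * s + b * s ^ 2
def dN (a b y s t : ℝ) : ℝ := y + a * (s + t) + b * s * t
def dL (a b x y z s t : ℝ) : ℝ := dD a b x s * dD a b z t - dN a b y s t ^ 2
def dn (a b x y s t : ℝ) : ℝ := a * (x - y) + b * (x * t - y * s) + a ^ 2 * (s - t)

theorem dL_comm (a b x y z s t : ℝ) : dL a b x y z s t = dL a b z y x t s := by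
  unfold dL dD dN; ring

theorem dn_id (a b x y z s t : ℝ) : dn a b x y s t ^ 2 + (a ^ 2 - b * x) * dL a b x y z s t =
    dD a b x s * (-b * (x * z - y ^ 2) + a ^ 2 * (x + z - 2 * y)) := by
  unfold dL dn dD dN; ring

theorem odd_incr {D x y : ℝ} (hx : 0 < D - x ^ 2) (hy : 0 < D - y ^ 2) (h : 0 < x + y) :
    0 < x / √(D - x ^ 2) + y / √(D - y ^ 2) := by
  wlog hxy : y ≤ x generalizing x y
  · have := this hy hx (by linarith) (by linarith)
    linarith
  have h1 := Real.sqrt_pos.2 hx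
  have h2 := Real.sqrt_pos.2 hy
  have hx0 : 0 < x := by linarith
  rcases le_or_gt 0 y with h0 | h0
  · positivity
  · have : √(D - x ^ 2) ≤ √(D - y ^ 2) := Real.sqrt_le_sqrt (by nlinarith)
    rw [div_add_div _ _ h1.ne' h2.ne']
    apply div_pos _ (by positivity)
    nlinarith

theorem conv_pos {x y t : ℝ} (hx : 0 < x) (hy : 0 < y) (h0 : 0 ≤ t) (h1 : t ≤ 1) :
    0 < (1 - t) * x + t * y := by
  rcases h0.lt_or_eq with h | rfl
  · have : 0 ≤ (1 - t) * x := mul_nonneg (by linarith) hx.le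
    have := mul_pos h hy
    linarith
  · simpa using hx

theorem dD_conc {a b x s s' t : ℝ} (hb : b ≤ 0) (h : 0 < dD a b x s) (h' : 0 < dD a b x s')
    (h0 : 0 ≤ t) (h1 : t ≤ 1) : 0 < dD a b x ((1 - t) * s + t * s') := by
  have := conv_pos h h' h0 h1
  have e : dD a b x ((1 - t) * s + t * s') = (1 - t) * dD a b x s + t * dD a b x s' +
    (-b) * ((1 - t) * t * (s - s') ^ 2) := by unfold dD; ring
  have h2 : 0 ≤ (1 - t) * t * (s - s') ^ 2 :=
    mul_nonneg (mul_nonneg (by linarith) h0) (sq_nonneg _)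
  rw [e]
  have := mul_nonneg (neg_nonneg.2 hb) h2
  linarith

theorem dL_conc {a b x y z s s' r r' t : ℝ} (hb : b ≤ 0) (hω : 0 < a ^ 2 - b * x)
    (hκ : 0 < -b * (x * z - y ^ 2) + a ^ 2 * (x + z - 2 * y))
    (h : 0 < dL a b x y z s r) (h' : 0 < dL a b x y z s' r')
    (h0 : 0 ≤ t) (h1 : t ≤ 1) :
    0 < dL a b x y z ((1 - t) * s + t * s') ((1 - t) * r + t * r') := by
  have h3 := conv_pos (mul_pos hω h) (mul_pos hω h') h0 h1
  have e1 := dn_id a b x y z s r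
  have e2 := dn_id a b x y z s' r'
  have e3 := dn_id a b x y z ((1 - t) * s + t * s') ((1 - t) * r + t * r')
  have e4 : dD a b x ((1 - t) * s + t * s') = (1 - t) * dD a b x s + t * dD a b x s' +
    (-b) * ((1 - t) * t * (s - s') ^ 2) := by unfold dD; ring
  have e5 : dn a b x y ((1 - t) * s + t * s') ((1 - t) * r + t * r') =
    (1 - t) * dn a b x y s r + t * dn a b x y s' r' := by unfold dn; ring
  set κ := -b * (x * z - y ^ 2) + a ^ 2 * (x + z - 2 * y)
  set n := dn a b x y s r
  set n' := dn a b x y s' r'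
  have h2 : 0 ≤ (1 - t) * t := mul_nonneg (by linarith) h0
  have h4 : 0 ≤ (1 - t) * t * (n - n') ^ 2 := mul_nonneg h2 (sq_nonneg _)
  have h5 : 0 ≤ (-b) * ((1 - t) * t * (s - s') ^ 2) * κ :=
    mul_nonneg (mul_nonneg (neg_nonneg.2 hb) (mul_nonneg h2 (sq_nonneg _))) hκ.le
  rw [e4, e5] at e3
  have : 0 < (a ^ 2 - b * x) * dL a b x y z ((1 - t) * s + t * s') ((1 - t) * r + t * r') := by
    have : (a ^ 2 - b * x) * dL a b x y z ((1 - t) * s + t * s') ((1 - t) * r + t * r') =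
      (1 - t) * ((a ^ 2 - b * x) * dL a b x y z s r) + t * ((a ^ 2 - b * x) * dL a b x y z s' r')
      + (1 - t) * t * (n - n') ^ 2 + (-b) * ((1 - t) * t * (s - s') ^ 2) * κ := by
      linear_combination e3 - (1 - t) * e1 - t * e2
    rw [this]; linarith
  exact (mul_pos_iff_of_pos_left hω).1 this

/-- derivative of the angle -/
theorem ang_deriv {a b x y z : ℝ} {s r : ℝ → ℝ} {s1 r1 t : ℝ} (hs : HasDerivAt s s1 t)
    (hr : HasDerivAt r r1 t) (hD : 0 < dD a b x (s t)) (hD' : 0 < dD a b z (r t))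
    (hL : 0 < dL a b x y z (s t) (r t)) :
    HasDerivAt (fun t => Real.arccos (dN a b y (s t) (r t) / √(dD a b x (s t) * dD a b z (r t))))
      (-(dn a b x y (s t) (r t) / √(dL a b x y z (s t) (r t)) * (s1 / dD a b x (s t))
        + dn a b z y (r t) (s t) / √(dL a b z y x (r t) (s t)) * (r1 / dD a b z (r t)))) t := by
  have d1 : HasDerivAt (fun t => dD a b x (s t)) (2 * (a + b * s t) * s1) t := by
    have := ((hs.const_mul (2 * a)).const_add x).add ((hs.pow 2).const_mul b)
    refine this.congr_deriv ?_
    push_cast; ring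
  have d2 : HasDerivAt (fun t => dD a b z (r t)) (2 * (a + b * r t) * r1) t := by
    have := ((hr.const_mul (2 * a)).const_add z).add ((hr.pow 2).const_mul b)
    refine this.congr_deriv ?_
    push_cast; ring
  have d3 : HasDerivAt (fun t => dN a b y (s t) (r t))
      ((a + b * r t) * s1 + (a + b * s t) * r1) t := by
    have := (((hs.add hr).const_mul a).const_add y).add ((hs.const_mul b).mul hr)
    refine this.congr_deriv ?_
    ring
  have hP : 0 < dD a b x (s t) * dD a b z (r t) := mul_pos hD hD'
  have d4 := d3.div ((d1.mul d2).sqrt hP.ne') (Real.sqrt_pos.2 hP).ne'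
  have hL' : dL a b z y x (r t) (s t) = dL a b x y z (s t) (r t) := dL_comm _ _ _ _ _ _ _
  rw [hL']
  have en1 : dn a b x y (s t) (r t) =
      dD a b x (s t) * (a + b * r t) - dN a b y (s t) (r t) * (a + b * s t) := by
    unfold dn dD dN; ring
  have en2 : dn a b z y (r t) (s t) =
      dD a b z (r t) * (a + b * s t) - dN a b y (s t) (r t) * (a + b * r t) := by
    unfold dn dD dN; ring
  have eL : dL a b x y z (s t) (r t) = dD a b x (s t) * dD a b z (r t) - dN a b y (s t) (r t) ^ 2 :=
    rfl
  rw [en1, en2]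
  simp only [Pi.mul_apply] at d4
  set D := dD a b x (s t)
  set D' := dD a b z (r t)
  set N := dN a b y (s t) (r t) with hN
  set Λ := dL a b x y z (s t) (r t)
  set q := √(D * D') with hq
  have hq0 : 0 < q := Real.sqrt_pos.2 hP
  have hq2 : q ^ 2 = D * D' := Real.sq_sqrt hP.le
  have hm0 : 0 < √Λ := Real.sqrt_pos.2 hL
  have hx : 1 - (N / q) ^ 2 = Λ / q ^ 2 := by
    rw [div_pow]; field_simp; rw [hq2]; linarith
  have hlt : (N / q) ^ 2 < 1 := by
    have : 0 < Λ / q ^ 2 := by positivity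
    linarith
  have hne1 : N / q ≠ -1 := by intro h; rw [h] at hlt; norm_num at hlt
  have hne2 : N / q ≠ 1 := by intro h; rw [h] at hlt; norm_num at hlt
  have d5 := (Real.hasDerivAt_arccos hne1 hne2).comp t d4
  refine d5.congr_deriv ?_
  have hsq : √(1 - (N / q) ^ 2) = √Λ / q := by
    rw [hx, Real.sqrt_div hL.le, Real.sqrt_sq hq0.le]
  rw [hsq]
  have hDD : D' = q ^ 2 / D := by field_simp; linarith
  field_simp
  rw [hq2]
  ring

def rayOf {𝓕 R : Type} (e f : 𝓕 → R) (φ : 𝓕 × Bool) : R := if φ.2 then e φ.1 else f φ.1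

theorem core {𝓕 R : Type} [Fintype 𝓕] [Fintype R] (e f : 𝓕 → R) (φ1 φ2 : R → 𝓕 × Bool)
    (hφ : ∀ r, φ1 r ≠ φ2 r) (hφ' : ∀ r φ, rayOf e f φ = r ↔ φ = φ1 r ∨ φ = φ2 r)
    {a b : ℝ} (hb : b ≤ 0) (K : R → ℝ) (KF : 𝓕 → ℝ) (κ : 𝓕 → ℝ) (hκ : ∀ F, 0 < κ F)
    (hκ2 : ∀ F, κ F ^ 2 = -b * (K (e F) * K (f F) - KF F ^ 2) +
      a ^ 2 * (K (e F) + K (f F) - 2 * KF F))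
    (hω : ∀ r, 0 < a ^ 2 - b * K r) (s s' : R → ℝ) (hss : ∀ r, s r ≤ s' r)
    (hD : ∀ r, 0 < dD a b (K r) (s r)) (hD' : ∀ r, 0 < dD a b (K r) (s' r))
    (hL : ∀ F, 0 < dL a b (K (e F)) (KF F) (K (f F)) (s (e F)) (s (f F)))
    (hL' : ∀ F, 0 < dL a b (K (e F)) (KF F) (K (f F)) (s' (e F)) (s' (f F)))
    (hp : ∀ r, 0 < dn a b (K r) (KF (φ1 r).1) (s r) (s (rayOf e f ((φ1 r).1, !(φ1 r).2))) / κ (φ1 r).1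
      + dn a b (K r) (KF (φ2 r).1) (s r) (s (rayOf e f ((φ2 r).1, !(φ2 r).2))) / κ (φ2 r).1)
    (hp' : ∀ r, 0 < dn a b (K r) (KF (φ1 r).1) (s' r) (s' (rayOf e f ((φ1 r).1, !(φ1 r).2))) / κ (φ1 r).1
      + dn a b (K r) (KF (φ2 r).1) (s' r) (s' (rayOf e f ((φ2 r).1, !(φ2 r).2))) / κ (φ2 r).1)
    (hT : ∑ F, Real.arccos (dN a b (KF F) (s (e F)) (s (f F)) /
        √(dD a b (K (e F)) (s (e F)) * dD a b (K (f F)) (s (f F)))) =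
      ∑ F, Real.arccos (dN a b (KF F) (s' (e F)) (s' (f F)) /
        √(dD a b (K (e F)) (s' (e F)) * dD a b (K (f F)) (s' (f F))))) :
    ∀ r, s r = s' r := by
  classical
  by_contra! hne
  obtain ⟨r0, hr0⟩ := hne
  let σ : R → ℝ → ℝ := fun r t => (1 - t) * s r + t * s' r
  have hσ : ∀ r t, HasDerivAt (σ r) (s' r - s r) t := by
    intro r t
    have := (((hasDerivAt_id t).const_sub 1).mul_const (s r)).add
      ((hasDerivAt_id t).mul_const (s' r))
    refine this.congr_deriv ?_
    ring
  let T : ℝ → ℝ := fun t => ∑ F, Real.arccos (dN a b (KF F) (σ (e F) t) (σ (f F) t) /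
        √(dD a b (K (e F)) (σ (e F) t) * dD a b (K (f F)) (σ (f F) t)))
  -- flag terms
  let X : ℝ → 𝓕 × Bool → ℝ := fun t φ =>
    let r := rayOf e f φ
    let c := rayOf e f (φ.1, !φ.2)
    dn a b (K r) (KF φ.1) (σ r t) (σ c t) / √(dL a b (K r) (KF φ.1) (K c) (σ r t) (σ c t)) *
      ((s' r - s r) / dD a b (K r) (σ r t))
  have hDt : ∀ t ∈ Icc (0:ℝ) 1, ∀ r, 0 < dD a b (K r) (σ r t) := fun t ht r =>
    dD_conc hb (hD r) (hD' r) ht.1 ht.2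
  have hLt : ∀ t ∈ Icc (0:ℝ) 1, ∀ F,
      0 < dL a b (K (e F)) (KF F) (K (f F)) (σ (e F) t) (σ (f F) t) := fun t ht F =>
    dL_conc hb (hω _) (hκ2 F ▸ pow_pos (hκ F) 2) (hL F) (hL' F) ht.1 ht.2
  have hder : ∀ t ∈ Icc (0:ℝ) 1, HasDerivAt T (∑ F, -(X t (F, true) + X t (F, false))) t := by
    intro t ht
    apply HasDerivAt.fun_sum
    intro F _
    exact ang_deriv (hσ (e F) t) (hσ (f F) t) (hDt t ht _) (hDt t ht _) (hLt t ht F)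
  have hsum : ∀ t, ∑ F, -(X t (F, true) + X t (F, false)) = - ∑ r, (X t (φ1 r) + X t (φ2 r)) := by
    intro t
    rw [Finset.sum_neg_distrib]
    congr 1
    have h1 : ∑ φ : 𝓕 × Bool, X t φ = ∑ F, (X t (F, true) + X t (F, false)) := by
      rw [Fintype.sum_prod_type]
      simp
    rw [← h1, ← Finset.sum_fiberwise Finset.univ (rayOf e f)]
    refine Finset.sum_congr rfl fun r _ => ?_
    have : Finset.univ.filter (fun φ => rayOf e f φ = r) = {φ1 r, φ2 r} := by
      ext φ; simp [hφ']
    rw [this, Finset.sum_pair (hφ r)]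
  have hflag : ∀ t ∈ Icc (0:ℝ) 1, ∀ φ, 0 < dL a b (K (rayOf e f φ)) (KF φ.1)
      (K (rayOf e f (φ.1, !φ.2))) (σ (rayOf e f φ) t) (σ (rayOf e f (φ.1, !φ.2)) t) := by
    rintro t ht ⟨F, i⟩
    cases i
    · rw [dL_comm]; exact hLt t ht F
    · exact hLt t ht F
  have hflκ : ∀ φ : 𝓕 × Bool, κ φ.1 ^ 2 =
      -b * (K (rayOf e f φ) * K (rayOf e f (φ.1, !φ.2)) - KF φ.1 ^ 2) +
      a ^ 2 * (K (rayOf e f φ) + K (rayOf e f (φ.1, !φ.2)) - 2 * KF φ.1) := by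
    rintro ⟨F, i⟩
    cases i
    · have := hκ2 F
      simp only [rayOf] at this ⊢
      simp only [Bool.not_false, if_true, Bool.false_eq_true, if_false]
      linarith
    · exact hκ2 F
  have hterm : ∀ t ∈ Icc (0:ℝ) 1, ∀ r, ∃ c, 0 < c ∧
      X t (φ1 r) + X t (φ2 r) = c * (s' r - s r) := by
    intro t ht r
    have hr1 : rayOf e f (φ1 r) = r := (hφ' r _).2 (Or.inl rfl)
    have hr2 : rayOf e f (φ2 r) = r := (hφ' r _).2 (Or.inr rfl)
    set D := dD a b (K r) (σ r t) with hDdef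
    have hD0 : 0 < D := hDt t ht r
    -- rewrite each flag
    have key : ∀ φ, rayOf e f φ = r → ∃ x, 0 < D - x ^ 2 ∧
        x = dn a b (K r) (KF φ.1) (σ r t) (σ (rayOf e f (φ.1, !φ.2)) t) / κ φ.1 ∧
        X t φ = √(a ^ 2 - b * K r) * (x / √(D - x ^ 2)) * ((s' r - s r) / D) := by
      intro φ hφr
      have hl := hflag t ht φ
      have hk := hflκ φ
      have hid := dn_id a b (K (rayOf e f φ)) (KF φ.1) (K (rayOf e f (φ.1, !φ.2)))
        (σ (rayOf e f φ) t) (σ (rayOf e f (φ.1, !φ.2)) t)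
      rw [← hk] at hid
      simp only [X]
      rw [hφr] at hl hid ⊢
      rw [← hDdef] at hid ⊢
      set n := dn a b (K r) (KF φ.1) (σ r t) (σ (rayOf e f (φ.1, !φ.2)) t)
      set Λ := dL a b (K r) (KF φ.1) (K (rayOf e f (φ.1, !φ.2))) (σ r t)
        (σ (rayOf e f (φ.1, !φ.2)) t)
      have hk0 := hκ φ.1
      have hw := hω r
      have e1 : Λ = κ φ.1 ^ 2 * (D - (n / κ φ.1) ^ 2) / (a ^ 2 - b * K r) := by
        rw [eq_div_iff hw.ne', div_pow]
        field_simp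
        linarith
      have e2 : 0 < D - (n / κ φ.1) ^ 2 := by
        have : D - (n / κ φ.1) ^ 2 = Λ * (a ^ 2 - b * K r) / κ φ.1 ^ 2 := by
          rw [e1]; field_simp
        rw [this]; positivity
      refine ⟨n / κ φ.1, e2, rfl, ?_⟩
      rw [e1, Real.sqrt_div (by positivity), Real.sqrt_mul (by positivity), Real.sqrt_sq hk0.le]
      have := Real.sqrt_pos.2 e2
      have := Real.sqrt_pos.2 hw
      field_simp
    obtain ⟨x, hx, hx1, hx2⟩ := key _ hr1
    obtain ⟨y, hy, hy1, hy2⟩ := key _ hr2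
    have hxy : 0 < x + y := by
      have := conv_pos (hp r) (hp' r) ht.1 ht.2
      refine this.trans_eq ?_
      rw [hx1, hy1]
      have lin : ∀ K1 K2 u u' v v' : ℝ, dn a b K1 K2 ((1 - t) * u + t * u') ((1 - t) * v + t * v') =
        (1 - t) * dn a b K1 K2 u v + t * dn a b K1 K2 u' v' := by
        intros; unfold dn; ring
      simp only [σ, lin]
      ring
    refine ⟨√(a ^ 2 - b * K r) * (x / √(D - x ^ 2) + y / √(D - y ^ 2)) / D, ?_, ?_⟩
    · have := odd_incr hx hy hxy
      have := Real.sqrt_pos.2 (hω r)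
      positivity
    · rw [hx2, hy2]; ring
  have hneg : ∀ t ∈ Icc (0:ℝ) 1, ∑ F, -(X t (F, true) + X t (F, false)) < 0 := by
    intro t ht
    rw [hsum, neg_lt_zero]
    apply Finset.sum_pos'
    · intro r _
      obtain ⟨c, hc, h⟩ := hterm t ht r
      rw [h]
      exact mul_nonneg hc.le (by linarith [hss r])
    · refine ⟨r0, Finset.mem_univ _, ?_⟩
      obtain ⟨c, hc, h⟩ := hterm t ht r0
      rw [h]
      exact mul_pos hc (by have := lt_of_le_of_ne (hss r0) hr0; linarith)
  have hanti : StrictAntiOn T (Icc 0 1) := by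
    apply strictAntiOn_of_deriv_neg (convex_Icc 0 1)
    · intro t ht
      exact (hder t ht).continuousAt.continuousWithinAt
    · intro t ht
      have ht' := interior_subset ht
      rw [(hder t ht').deriv]
      exact hneg t ht'
  have := hanti (left_mem_Icc.2 zero_le_one) (right_mem_Icc.2 zero_le_one) zero_lt_one
  simp only [T, σ] at this
  simp at this
  linarith

end Insc
end PartD2

section PartP1
namespace Insc

open Set

variable {A : Type} [Finite A] {E : Type} [NormedAddCommGroup E] [InnerProductSpace ℝ E]
  [FiniteDimensional ℝ E]

theorem span3 {g : A → E} (hr : rk g = 3) {u v w : E} (hu : u ∈ Submodule.span ℝ (range g))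
    (hv : v ∈ Submodule.span ℝ (range g)) (hw : w ∈ Submodule.span ℝ (range g))
    (ind : ∀ x y z : ℝ, x • u + y • v + z • w = 0 → x = 0 ∧ y = 0 ∧ z = 0)
    {t : E} (ht : t ∈ Submodule.span ℝ (range g)) : ∃ x y z : ℝ, t = x • u + y • v + z • w := by
  have hli : LinearIndependent ℝ ![u, v, w] := by
    rw [Fintype.linearIndependent_iff]
    intro c hc
    rw [Fin.sum_univ_three] at hc
    obtain ⟨h0, h1, h2⟩ := ind (c 0) (c 1) (c 2) hc
    intro i
    fin_cases i <;> assumption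
  have h1 := finrank_span_eq_card hli
  have h2 : Submodule.span ℝ (range ![u, v, w]) ≤ Submodule.span ℝ (range g) := by
    rw [Submodule.span_le]
    rintro _ ⟨i, rfl⟩
    fin_cases i <;> assumption
  have h3 := Submodule.eq_of_le_of_finrank_eq h2 (by rw [h1, Fintype.card_fin]; exact hr.symm)
  rw [← h3, Submodule.mem_span_range_iff_exists_fun] at ht
  obtain ⟨c, hc⟩ := ht
  rw [Fin.sum_univ_three] at hc
  exact ⟨_, _, _, hc.symm⟩

theorem two_le_rk {g : A → E} {a b : A} (h : ∀ x y : ℝ, x • g a + y • g b = 0 → x = 0 ∧ y = 0) :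
    2 ≤ rk g := by
  by_contra! hlt
  have h1 : rk g ≤ 1 := by omega
  unfold rk at h1
  rw [finrank_le_one_iff] at h1
  obtain ⟨⟨v, hv⟩, h1⟩ := h1
  obtain ⟨c, hc⟩ := h1 ⟨g a, Submodule.subset_span ⟨a, rfl⟩⟩
  obtain ⟨d, hd⟩ := h1 ⟨g b, Submodule.subset_span ⟨b, rfl⟩⟩
  have hc : c • v = g a := congrArg Subtype.val hc
  have hd : d • v = g b := congrArg Subtype.val hd
  have h2 := h d (-c) (by rw [← hc, ← hd, smul_smul, smul_smul, ← add_smul]; ring_nf; simp)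
  have h3 := (h 1 0 (by rw [← hc]; simp [neg_eq_zero.1 h2.2])).1
  norm_num at h3

theorem sub_fc {g : A → E} {F : Set A} (hF : IsFc g F) {G : Set F}
    (hG : IsFc (fun a : F => g a) G) : IsFc g ((↑) '' G) := by
  obtain ⟨m, h1, h2⟩ := hG
  have := fc_sub hF m (by
    intro a ha
    by_cases h : (⟨a, ha⟩ : F) ∈ G
    · exact (h1 _ h).ge
    · exact (h2 _ h).le)
  have e : ((↑) '' G : Set A) = {a | a ∈ F ∧ m (g a) = 0} := by
    ext a
    constructor
    · rintro ⟨⟨a, ha⟩, h, rfl⟩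
      exact ⟨ha, h1 _ h⟩
    · rintro ⟨ha, h⟩
      refine ⟨⟨a, ha⟩, ?_, rfl⟩
      by_contra hn
      exact (h2 _ hn).ne' h
  rw [e]; exact this

theorem sub_ray {g : A → E} {F : Set A} (hF : IsFc g F) {b : F}
    (hb : IsRay (fun a : F => g a) b) : IsRay g b := by
  refine ⟨hb.1, ?_⟩
  have := sub_fc hF hb.2
  have e : ((↑) '' (lnS (fun a : F => g a) b) : Set A) = lnS g b := by
    ext a
    constructor
    · rintro ⟨⟨a, ha⟩, h, rfl⟩
      exact h
    · intro h
      exact ⟨⟨a, lnS_sub hF b.2 h⟩, h, rfl⟩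
  rw [← e]; exact this

theorem sub_pointed {g : A → E} (hp : Pointed g) (F : Set A) : Pointed (fun a : F => g a) := by
  obtain ⟨n, h1, h2⟩ := hp
  exact ⟨n, fun a ha => h1 a ha, fun a ha => h2 a ha⟩

theorem sub_rk_lt {g : A → E} {F : Set A} (hF : IsFc g F) (hne : F ≠ univ) :
    rk (fun a : F => g a) < rk g := by
  obtain ⟨n, h1, h2⟩ := hF
  obtain ⟨c, hc⟩ := (ne_univ_iff_exists_notMem F).1 hne
  apply Submodule.finrank_lt_finrank_of_lt
  refine lt_of_le_of_ne (Submodule.span_mono (by rintro _ ⟨a, rfl⟩; exact ⟨a, rfl⟩)) fun h => ?_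
  have : g c ∈ Submodule.span ℝ (range (fun a : F => g a)) := by
    rw [h]; exact Submodule.subset_span ⟨c, rfl⟩
  have h3 : Submodule.span ℝ (range (fun a : F => g a)) ≤ LinearMap.ker n := by
    rw [Submodule.span_le]
    rintro _ ⟨a, rfl⟩
    exact h1 a a.2
  exact (h2 c hc).ne' (h3 this)

theorem ray_split {g : A → E} {r e f : A} (hr : IsRay g r) (he : IsRay g e) (hf : IsRay g f)
    (ind : ∀ x y : ℝ, x • g e + y • g f = 0 → x = 0 ∧ y = 0) {x y : ℝ} (hx : 0 ≤ x) (hy : 0 ≤ y)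
    (h : g r = x • g e + y • g f) : lnS g r = lnS g e ∨ lnS g r = lnS g f := by
  rcases hx.lt_or_eq with hx | rfl
  · rcases hy.lt_or_eq with hy | rfl
    · exfalso
      obtain ⟨n, h1, h2⟩ := hr.2
      have hnn : ∀ a, 0 ≤ n (g a) := fun a => by
        by_cases ha : a ∈ lnS g r
        · exact (h1 a ha).ge
        · exact (h2 a ha).le
      have h3 := h1 r (self_mem_lnS g r)
      rw [h, map_add, map_smul, map_smul, smul_eq_mul, smul_eq_mul] at h3
      have h4 := mul_nonneg hx.le (hnn e)
      have h5 := mul_nonneg hy.le (hnn f)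
      have h6 : n (g e) = 0 := (mul_eq_zero.1 (by linarith : x * n (g e) = 0)).resolve_left hx.ne'
      have h7 : n (g f) = 0 := (mul_eq_zero.1 (by linarith : y * n (g f) = 0)).resolve_left hy.ne'
      have h8 : e ∈ lnS g r := by by_contra hh; exact (h2 e hh).ne' h6
      have h9 : f ∈ lnS g r := by by_contra hh; exact (h2 f hh).ne' h7
      obtain ⟨c, hc⟩ := h8
      obtain ⟨d, hd⟩ := h9
      have := ind d (-c) (by rw [hc, hd, smul_smul, smul_smul, ← add_smul]; ring_nf; simp)
      apply he.1
      rw [hc, neg_eq_zero.1 this.2, zero_smul]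
    · left
      exact ray_min he hr.2 (lnS_sub he.2 ⟨x, by rw [h]; simp⟩) ⟨r, self_mem_lnS g r, hr.1⟩
  · right
    exact ray_min hf hr.2 (lnS_sub hf.2 ⟨y, by rw [h]; simp⟩) ⟨r, self_mem_lnS g r, hr.1⟩

structure Plan {A : Type} {E : Type} [NormedAddCommGroup E] [InnerProductSpace ℝ E]
    (g : A → E) {𝓕 R : Type} (ρ : R → A) (Fs : 𝓕 → Set A) (e f : 𝓕 → R)
    (φ1 φ2 : R → 𝓕 × Bool) : Prop where
  rk3 : rk g = 3
  fc : ∀ F, IsFc g (Fs F)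
  ne : ∀ F, Fs F ≠ univ
  inj : Function.Injective Fs
  ray : ∀ r, IsRay g (ρ r)
  memE : ∀ F, ρ (e F) ∈ Fs F
  memF : ∀ F, ρ (f F) ∈ Fs F
  ind : ∀ F, ∀ x y : ℝ, x • g (ρ (e F)) + y • g (ρ (f F)) = 0 → x = 0 ∧ y = 0
  comb : ∀ F, ∀ a ∈ Fs F, ∃ x y : ℝ, 0 ≤ x ∧ 0 ≤ y ∧ g a = x • g (ρ (e F)) + y • g (ρ (f F))
  only : ∀ F r, ρ r ∈ Fs F → r = e F ∨ r = f F
  hφ : ∀ r, φ1 r ≠ φ2 r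
  hφ' : ∀ r φ, rayOf e f φ = r ↔ φ = φ1 r ∨ φ = φ2 r
  hne : ∀ r, (φ1 r).1 ≠ (φ2 r).1
  cov : ∀ a, Bd g a → g a ≠ 0 → ∃ F, a ∈ Fs F
  nonempty : Nonempty 𝓕

theorem exists_plan {g : A → E} (hp : Pointed g) (hr : rk g = 3) :
    ∃ (𝓕 R : Type) (_ : Fintype 𝓕) (_ : Fintype R) (ρ : R → A) (Fs : 𝓕 → Set A)
      (e f : 𝓕 → R) (φ1 φ2 : R → 𝓕 × Bool), Plan g ρ Fs e f φ1 φ2 := by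
  classical
  let R := {S : Set A // ∃ b, IsRay g b ∧ lnS g b = S}
  let 𝓕 := {F : Set A // IsFc g F ∧ F ≠ univ ∧ 2 ≤ rk (fun a : F => g a)}
  choose ρ hρ hρl using fun r : R => r.2
  let mkR : ∀ b, IsRay g b → R := fun b hb => ⟨lnS g b, b, hb, rfl⟩
  have hmk : ∀ b (hb : IsRay g b), lnS g (ρ (mkR b hb)) = lnS g b := fun b hb => hρl (mkR b hb)
  have hReq : ∀ r r' : R, lnS g (ρ r) = lnS g (ρ r') → r = r' := by
    intro r r' h
    exact Subtype.ext (by rw [← hρl r, ← hρl r', h])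
  have hfac : ∀ F : 𝓕, ∃ r r' : R, ρ r ∈ F.1 ∧ ρ r' ∈ F.1 ∧
      (∀ x y : ℝ, x • g (ρ r) + y • g (ρ r') = 0 → x = 0 ∧ y = 0) ∧
      ∀ a ∈ F.1, ∃ x y : ℝ, 0 ≤ x ∧ 0 ≤ y ∧ g a = x • g (ρ r) + y • g (ρ r') := by
    rintro ⟨F, hF, hne, hF2⟩
    have h3 := sub_rk_lt hF hne
    obtain ⟨e, f, he, hf, hind, hcomb⟩ := rank_two (sub_pointed hp F) (by omega)
    have he' := sub_ray hF he
    have hf' := sub_ray hF hf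
    have key : ∀ b (hb : IsRay g b), b ∈ F → ρ (mkR b hb) ∈ F ∧
        ∃ c : ℝ, 0 < c ∧ g b = c • g (ρ (mkR b hb)) := by
      intro b hb hbF
      have h1 : ρ (mkR b hb) ∈ lnS g b := by rw [← hmk b hb]; exact self_mem_lnS _ _
      have h2 : b ∈ lnS g (ρ (mkR b hb)) := by rw [hmk b hb]; exact self_mem_lnS _ _
      refine ⟨lnS_sub hF hbF h1, ?_⟩
      obtain ⟨c, hc⟩ := h2
      refine ⟨c, ?_, hc⟩
      obtain ⟨n, hn1, hn2⟩ := hp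
      have h4 := hn2 b hb.1
      have h5 := hn2 (ρ (mkR b hb)) (hρ (mkR b hb)).1
      rw [hc, map_smul, smul_eq_mul] at h4
      exact (pos_iff_pos_of_mul_pos h4).2 h5
    obtain ⟨m1, c, hc, hec⟩ := key e he' e.2
    obtain ⟨m2, d, hd, hfd⟩ := key f hf' f.2
    refine ⟨mkR e he', mkR f hf', m1, m2, ?_, ?_⟩
    · intro x y hxy
      have := hind (x / c) (y / d) (by
        simp only [hec, hfd, smul_smul, div_mul_cancel₀ _ hc.ne', div_mul_cancel₀ _ hd.ne']
        exact hxy)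
      simpa [hc.ne', hd.ne'] using this
    · intro a ha
      obtain ⟨x, y, hx, hy, h⟩ := hcomb ⟨a, ha⟩
      refine ⟨x * c, y * d, by positivity, by positivity, ?_⟩
      simp only [hec, hfd, smul_smul] at h
      exact h
  choose e f memE memF ind comb using hfac
  have only : ∀ F r, ρ r ∈ F.1 → r = e F ∨ r = f F := by
    intro F r h
    obtain ⟨x, y, hx, hy, h⟩ := comb F _ h
    rcases ray_split (hρ r) (hρ _) (hρ _) (ind F) hx hy h with h | h
    · exact Or.inl (hReq _ _ h)
    · exact Or.inr (hReq _ _ h)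
  have hef : ∀ F, e F ≠ f F := by
    intro F h
    have := ind F 1 (-1) (by rw [h]; simp)
    norm_num at this
  -- each ray lies in exactly two facets
  have htwo : ∀ r : R, ∃ F G : 𝓕, F ≠ G ∧ ∀ H : 𝓕, ρ r ∈ H.1 ↔ H = F ∨ H = G := by
    intro r
    have hb := hρ r
    set b := ρ r with hbdef
    have hπ := opr_ker hb.1
    have hrk := quot_rk hπ hb.1
    set π := opr (g b)
    obtain ⟨e1, f1, he, hf, hind, hcomb⟩ := rank_two (quot_pointed hπ hb) (by omega)
    have key : ∀ c, IsRay (fun a => π (g a)) c → IsFc g (lnS (fun a => π (g a)) c) ∧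
        lnS (fun a => π (g a)) c ≠ univ ∧
        2 ≤ rk (fun a : (lnS (fun a => π (g a)) c) => g a) ∧ b ∈ lnS (fun a => π (g a)) c := by
      intro c hc
      have h1 := (quot_fc hπ _).1 hc.2
      refine ⟨h1.1, ray_ne_univ (by omega) c, ?_, h1.2⟩
      refine two_le_rk (a := ⟨c, self_mem_lnS _ _⟩) (b := ⟨b, h1.2⟩) ?_
      intro x y hxy
      have h2 := congrArg π hxy
      have h3 : π (g b) = 0 := by
        rw [← LinearMap.mem_ker, hπ]; exact Submodule.mem_span_singleton_self _
      simp only [map_add, map_smul, h3, smul_zero, add_zero, map_zero] at h2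
      have hx : x = 0 := (smul_eq_zero.1 h2).resolve_right hc.1
      rw [hx, zero_smul, zero_add] at hxy
      exact ⟨hx, (smul_eq_zero.1 hxy).resolve_right hb.1⟩
    obtain ⟨k1, k2, k3, k4⟩ := key e1 he
    obtain ⟨l1, l2, l3, l4⟩ := key f1 hf
    refine ⟨⟨_, k1, k2, k3⟩, ⟨_, l1, l2, l3⟩, ?_, ?_⟩
    · intro h
      have h : lnS (fun a => π (g a)) e1 = lnS (fun a => π (g a)) f1 := congrArg Subtype.val h
      have : e1 ∈ lnS (fun a => π (g a)) f1 := by rw [← h]; exact self_mem_lnS _ _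
      obtain ⟨c, hc⟩ := this
      have := hind 1 (-c) (by simp only at hc; rw [hc]; simp)
      norm_num at this
    · rintro ⟨F, hF, hne, hF2⟩
      constructor
      · intro hbF
        have hbF : b ∈ F := hbF
        have hq := (quot_fc hπ F).2 ⟨hF, hbF⟩
        obtain ⟨a, ha, ha0⟩ : ∃ a ∈ F, π (g a) ≠ 0 := by
          by_contra! hall
          have := rk_le_one_of_prop (g := fun a : F => g a) (g b) (fun a => by
            have := (quot_zero hπ (a : A)).1 (hall a a.2)
            exact this)
          omega
        obtain ⟨c, hcF, hc⟩ := exists_ray (quot_pointed hπ hb) hq ⟨a, ha, ha0⟩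
        obtain ⟨x, y, hx, hy, hxy⟩ := hcomb c
        have hsub := lnS_sub hq hcF
        have hmax : ∀ d d', IsRay (fun a => π (g a)) d →
            (∀ a, ∃ x y : ℝ, 0 ≤ x ∧ 0 ≤ y ∧ π (g a) = x • π (g d) + y • π (g d')) →
            lnS (fun a => π (g a)) d ⊆ F → F = lnS (fun a => π (g a)) d := by
          intro d d' hd hcd hdF
          refine Subset.antisymm ?_ hdF
          intro a ha
          obtain ⟨x, y, hx, hy, hxy⟩ := hcd a
          obtain ⟨n, hn1, hn2⟩ := hq
          have hdz := hn1 d (hdF (self_mem_lnS _ _))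
          by_cases hd' : d' ∈ F
          · exfalso
            apply hne
            rw [eq_univ_iff_forall]
            intro a'
            obtain ⟨x, y, hx, hy, hxy⟩ := hcd a'
            by_contra hn
            have := hn2 a' hn
            simp only at this hdz
            have hd'z := hn1 d' hd'
            simp only at hd'z
            rw [hxy, map_add, map_smul, map_smul, hdz, hd'z] at this
            simp at this
          · have h1 := hn2 d' hd'
            have h2 := hn1 a ha
            simp only at h1 h2 hdz
            rw [hxy, map_add, map_smul, map_smul, hdz] at h2
            have : y = 0 := by
              simp at h2
              exact h2.resolve_right h1.ne'
            exact ⟨x, by simp only; rw [hxy, this]; simp⟩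
        rcases ray_split hc he hf hind hx hy hxy with h | h
        · left
          apply Subtype.ext
          exact hmax e1 f1 he hcomb (h ▸ hsub)
        · right
          apply Subtype.ext
          exact hmax f1 e1 hf (fun a => by
            obtain ⟨x, y, hx, hy, h⟩ := hcomb a
            exact ⟨y, x, hy, hx, by rw [h, add_comm]⟩) (h ▸ hsub)
      · rintro (h | h)
        · have h : F = _ := congrArg Subtype.val h
          show b ∈ F
          rw [h]; exact k4
        · have h : F = _ := congrArg Subtype.val h
          show b ∈ F
          rw [h]; exact l4
  choose G1 G2 hG hG' using htwo
  have hmem : ∀ F r, ρ r ∈ F.1 → rayOf e f (F, decide (e F = r)) = r := by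
    intro F r h
    unfold rayOf
    by_cases h1 : e F = r
    · simp [h1]
    · simp only [h1, decide_false]
      rcases only F r h with h | h
      · exact absurd h.symm h1
      · simp [h]
  have hflag : ∀ F i, ρ (rayOf e f (F, i)) ∈ F.1 := by
    intro F i
    cases i
    · exact memF F
    · exact memE F
  obtain ⟨a0, ha0⟩ := rk_pos (g := g) (by omega)
  obtain ⟨b0, _, hb0⟩ := exists_ray hp (fc_univ g) ⟨a0, mem_univ _, ha0⟩
  refine ⟨𝓕, R, Fintype.ofFinite _, Fintype.ofFinite _, ρ, fun F => F.1, e, f,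
    fun r => (G1 r, decide (e (G1 r) = r)), fun r => (G2 r, decide (e (G2 r) = r)), ?_⟩
  refine ⟨hr, fun F => F.2.1, fun F => F.2.2.1, Subtype.val_injective, hρ, memE, memF, ind, comb,
    only, ?_, ?_, hG, ?_, ⟨G1 (mkR b0 hb0)⟩⟩
  · intro r h
    exact hG r (congrArg Prod.fst h)
  · rintro r ⟨F, i⟩
    constructor
    · intro h
      have h1 := hflag F i
      rw [h] at h1
      have hi : i = decide (e F = r) := by
        cases i
        · symm; rw [decide_eq_false_iff_not]
          intro h2
          simp only [rayOf, Bool.false_eq_true, if_false] at h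
          exact hef F (h2.trans h.symm)
        · symm; rw [decide_eq_true_iff]
          simpa [rayOf] using h
      rcases (hG' r F).1 h1 with h2 | h2
      · left; rw [hi, h2]
      · right; rw [hi, h2]
    · rintro (h | h)
      · rw [h]; exact hmem _ _ ((hG' r _).2 (Or.inl rfl))
      · rw [h]; exact hmem _ _ ((hG' r _).2 (Or.inr rfl))
  · intro a ⟨F, hF, hne, ha⟩ h0
    by_cases h2 : 2 ≤ rk (fun a : F => g a)
    · exact ⟨⟨F, hF, hne, h2⟩, ha⟩
    · obtain ⟨b, hbF, hb⟩ := exists_ray hp hF ⟨a, ha, h0⟩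
      have : a ∈ lnS g b := by
        by_contra hn
        apply h2
        refine two_le_rk (a := ⟨a, ha⟩) (b := ⟨b, hbF⟩) ?_
        intro x y hxy
        simp only at hxy
        by_cases hx : x = 0
        · refine ⟨hx, ?_⟩
          rw [hx, zero_smul, zero_add] at hxy
          exact (smul_eq_zero.1 hxy).resolve_right hb.1
        · exfalso
          apply hn
          refine ⟨-(y / x), ?_⟩
          have : x • g a = -(y • g b) := eq_neg_of_add_eq_zero_left hxy
          rw [neg_smul, div_eq_inv_mul, mul_smul, ← smul_neg, ← this, smul_smul,
            inv_mul_cancel₀ hx, one_smul]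
      rw [← hmk b hb] at this
      exact ⟨G1 (mkR b hb), lnS_sub (G1 (mkR b hb)).2.1 ((hG' (mkR b hb) _).2 (Or.inl rfl)) this⟩

end Insc
end PartP1

section PartP2
namespace Insc

open Set

variable {A : Type} [Finite A] {E : Type} [NormedAddCommGroup E] [InnerProductSpace ℝ E]
  [FiniteDimensional ℝ E]
variable {𝓕 R : Type} {ρ : R → A} {Fs : 𝓕 → Set A} {e f : 𝓕 → R} {φ1 φ2 : R → 𝓕 × Bool}

theorem Plan.transfer {g g' : A → E} (P : Plan g ρ Fs e f φ1 φ2) (H : Pr g g') :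
    Plan g' ρ Fs e f φ1 φ2 where
  rk3 := H.rk_eq ▸ P.rk3
  fc F := (H.h1 _).1 (P.fc F)
  ne := P.ne
  inj := P.inj
  ray r := (H.ray (P.ray r)).1
  memE := P.memE
  memF := P.memF
  ind F x y h := by
    obtain ⟨L, hL⟩ := H.map (P.fc F) (P.ne F)
    rw [← hL _ (P.memE F), ← hL _ (P.memF F), ← map_smul, ← map_smul, ← map_add] at h
    exact P.ind F x y (L.injective (by rw [h, map_zero]))
  comb F a ha := by
    obtain ⟨L, hL⟩ := H.map (P.fc F) (P.ne F)
    obtain ⟨x, y, hx, hy, h⟩ := P.comb F a ha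
    exact ⟨x, y, hx, hy, by rw [← hL _ (P.memE F), ← hL _ (P.memF F), ← hL _ ha, h]; simp⟩
  only := P.only
  hφ := P.hφ
  hφ' := P.hφ'
  hne := P.hne
  cov a ha h0 := P.cov a (H.bd_iff.2 ha) (fun h => h0 (H.zero h))
  nonempty := P.nonempty

theorem Plan.eq_of_mem {g : A → E} (P : Plan g ρ Fs e f φ1 φ2) {F G : 𝓕} (he : ρ (e G) ∈ Fs F)
    (hf : ρ (f G) ∈ Fs F) : F = G := by
  have key : ∀ F G, ρ (e G) ∈ Fs F → ρ (f G) ∈ Fs F → Fs G ⊆ Fs F := by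
    intro F G he hf a ha
    obtain ⟨x, y, _, _, h⟩ := P.comb G a ha
    apply fc_span_mem (P.fc F)
    rw [h]
    exact add_mem (Submodule.smul_mem _ _ (Submodule.subset_span ⟨_, he, rfl⟩))
      (Submodule.smul_mem _ _ (Submodule.subset_span ⟨_, hf, rfl⟩))
  have hne : e G ≠ f G := by
    intro h
    have := P.ind G 1 (-1) (by rw [h]; simp)
    norm_num at this
  have h1 := key F G he hf
  have h2 : Fs F ⊆ Fs G := by
    rcases P.only F _ he with h3 | h3 <;> rcases P.only F _ hf with h4 | h4
    · exact absurd (h3.trans h4.symm) hne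
    · exact key G F (h3 ▸ P.memE G) (h4 ▸ P.memF G)
    · exact key G F (h4 ▸ P.memF G) (h3 ▸ P.memE G)
    · exact absurd (h3.trans h4.symm) hne
  exact P.inj (h2.antisymm h1)

theorem Plan.mem_flag {g : A → E} (P : Plan g ρ Fs e f φ1 φ2) (φ : 𝓕 × Bool) :
    ρ (rayOf e f φ) ∈ Fs φ.1 := by
  obtain ⟨F, i⟩ := φ
  cases i
  · exact P.memF F
  · exact P.memE F

theorem Plan.eq_of_flag {g : A → E} (P : Plan g ρ Fs e f φ1 φ2) {F G : 𝓕} (i : Bool)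
    (he : ρ (rayOf e f (G, i)) ∈ Fs F) (hf : ρ (rayOf e f (G, !i)) ∈ Fs F) : F = G := by
  cases i
  · exact P.eq_of_mem hf he
  · exact P.eq_of_mem he hf

theorem Plan.ind_flag {g : A → E} (P : Plan g ρ Fs e f φ1 φ2) (φ : 𝓕 × Bool) (x y : ℝ)
    (h : x • g (ρ (rayOf e f φ)) + y • g (ρ (rayOf e f (φ.1, !φ.2))) = 0) : x = 0 ∧ y = 0 := by
  obtain ⟨F, i⟩ := φ
  cases i
  · have := P.ind F y x (by rw [add_comm]; exact h)
    exact this.symm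
  · exact P.ind F x y h

/-- neighbours of a ray -/
def nb (e f : 𝓕 → R) (φ : 𝓕 × Bool) : R := rayOf e f (φ.1, !φ.2)

theorem Plan.qcomb {g : A → E} (P : Plan g ρ Fs e f φ1 φ2) (r : R) (a : A) :
    ∃ z x y : ℝ, 0 ≤ x ∧ 0 ≤ y ∧ g a = z • g (ρ r) + x • g (ρ (nb e f (φ1 r))) +
      y • g (ρ (nb e f (φ2 r))) := by
  have hr1 : rayOf e f (φ1 r) = r := (P.hφ' r _).2 (Or.inl rfl)
  have hr2 : rayOf e f (φ2 r) = r := (P.hφ' r _).2 (Or.inr rfl)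
  have m1 : ρ r ∈ Fs (φ1 r).1 := by have := P.mem_flag (φ1 r); rwa [hr1] at this
  have m2 : ρ r ∈ Fs (φ2 r).1 := by have := P.mem_flag (φ2 r); rwa [hr2] at this
  have c1 : ρ (nb e f (φ1 r)) ∈ Fs (φ1 r).1 := P.mem_flag ((φ1 r).1, !(φ1 r).2)
  have c2 : ρ (nb e f (φ2 r)) ∈ Fs (φ2 r).1 := P.mem_flag ((φ2 r).1, !(φ2 r).2)
  have d1 : ρ (nb e f (φ2 r)) ∉ Fs (φ1 r).1 := fun h =>
    P.hne r (P.eq_of_flag (φ2 r).2 (by show ρ (rayOf e f (φ2 r)) ∈ _; rwa [hr2]) h)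
  have d2 : ρ (nb e f (φ1 r)) ∉ Fs (φ2 r).1 := fun h =>
    P.hne r (P.eq_of_flag (φ1 r).2 (by show ρ (rayOf e f (φ1 r)) ∈ _; rwa [hr1]) h).symm
  obtain ⟨n, hn1, hn2⟩ := P.fc (φ1 r).1
  obtain ⟨m, hm1, hm2⟩ := P.fc (φ2 r).1
  have hs : ∀ a, g a ∈ Submodule.span ℝ (range g) := fun a => Submodule.subset_span ⟨a, rfl⟩
  have nn : ∀ a, 0 ≤ n (g a) := fun a => by
    by_cases ha : a ∈ Fs (φ1 r).1
    · exact (hn1 a ha).ge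
    · exact (hn2 a ha).le
  have mm : ∀ a, 0 ≤ m (g a) := fun a => by
    by_cases ha : a ∈ Fs (φ2 r).1
    · exact (hm1 a ha).ge
    · exact (hm2 a ha).le
  have p1 := hn2 _ d1
  have p2 := hm2 _ d2
  have en : ∀ z x y : ℝ, n (z • g (ρ r) + x • g (ρ (nb e f (φ1 r))) +
      y • g (ρ (nb e f (φ2 r)))) = y * n (g (ρ (nb e f (φ2 r)))) := by
    intro z x y
    simp [hn1 _ m1, hn1 _ c1]
  have em : ∀ z x y : ℝ, m (z • g (ρ r) + x • g (ρ (nb e f (φ1 r))) +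
      y • g (ρ (nb e f (φ2 r)))) = x * m (g (ρ (nb e f (φ1 r)))) := by
    intro z x y
    simp [hm1 _ m2, hm1 _ c2]
  obtain ⟨z, x, y, h⟩ := span3 P.rk3 (hs (ρ r)) (hs (ρ (nb e f (φ1 r))))
    (hs (ρ (nb e f (φ2 r)))) (by
      intro z x y h
      have h1 := en z x y
      have h2 := em z x y
      rw [h, map_zero] at h1 h2
      have hx : x = 0 := (mul_eq_zero.1 h2.symm).resolve_right p2.ne'
      have hy : y = 0 := (mul_eq_zero.1 h1.symm).resolve_right p1.ne'
      rw [hx, hy, zero_smul, zero_smul, add_zero, add_zero] at h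
      exact ⟨(smul_eq_zero.1 h).resolve_right (P.ray r).1, hx, hy⟩) (hs a)
  refine ⟨z, x, y, ?_, ?_, h⟩
  · have := mm a
    rw [h, em] at this
    exact nonneg_of_mul_nonneg_left this p2
  · have := nn a
    rw [h, en] at this
    exact nonneg_of_mul_nonneg_left this p1

/-- balance positivity -/
theorem Plan.balance {g : A → E} (P : Plan g ρ Fs e f φ1 φ2) (r : R) {Z : E} (hZ : Intr g Z)
    {π : E →ₗ[ℝ] E} (hπ : LinearMap.ker π = Submodule.span ℝ {g (ρ r)}) :
    0 < inner ℝ (π Z) (π (g (ρ (nb e f (φ1 r))))) / ‖π (g (ρ (nb e f (φ1 r))))‖ +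
      inner ℝ (π Z) (π (g (ρ (nb e f (φ2 r))))) / ‖π (g (ρ (nb e f (φ2 r))))‖ := by
  have hr1 : rayOf e f (φ1 r) = r := (P.hφ' r _).2 (Or.inl rfl)
  have hr2 : rayOf e f (φ2 r) = r := (P.hφ' r _).2 (Or.inr rfl)
  set u := π (g (ρ (nb e f (φ1 r)))) with hu
  set v := π (g (ρ (nb e f (φ2 r)))) with hv
  have hb : π (g (ρ r)) = 0 := by
    rw [← LinearMap.mem_ker, hπ]; exact Submodule.mem_span_singleton_self _
  have hnz : ∀ φ, rayOf e f φ = r → π (g (ρ (nb e f φ))) ≠ 0 := by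
    intro φ hφ h
    rw [← LinearMap.mem_ker, hπ, Submodule.mem_span_singleton] at h
    obtain ⟨c, hc⟩ := h
    have := P.ind_flag φ c (-1) (by rw [hφ, hc]; simp [nb])
    norm_num at this
  have hu0 : u ≠ 0 := hnz _ hr1
  have hv0 : v ≠ 0 := hnz _ hr2
  have hun := norm_pos_iff.2 hu0
  have hvn := norm_pos_iff.2 hv0
  -- u and v are not opposite
  have m1 : ρ r ∈ Fs (φ1 r).1 := by have := P.mem_flag (φ1 r); rwa [hr1] at this
  have c1 : ρ (nb e f (φ1 r)) ∈ Fs (φ1 r).1 := P.mem_flag ((φ1 r).1, !(φ1 r).2)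
  have d1 : ρ (nb e f (φ2 r)) ∉ Fs (φ1 r).1 := fun h =>
    P.hne r (P.eq_of_flag (φ2 r).2 (by show ρ (rayOf e f (φ2 r)) ∈ _; rwa [hr2]) h)
  have hop : ∀ c : ℝ, v ≠ c • u := by
    intro c h
    obtain ⟨n, hn1, hn2⟩ := P.fc (φ1 r).1
    obtain ⟨m, hm⟩ := factor hπ n (hn1 _ m1)
    have h1 := hn2 _ d1
    rw [hm, ← hv, h, map_smul, hu, ← hm, hn1 _ c1] at h1
    simp at h1
  have hlt : -1 < inner ℝ u v / (‖u‖ * ‖v‖) := by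
    have h1 := abs_real_inner_div_norm_mul_norm_le_one u v
    refine lt_of_le_of_ne (neg_le_of_abs_le h1) fun h => ?_
    obtain ⟨_, c, _, hc⟩ := (real_inner_div_norm_mul_norm_eq_neg_one_iff u v).1 h.symm
    exact hop c hc
  let m : E →ₗ[ℝ] ℝ := (innerₛₗ ℝ (‖u‖⁻¹ • u + ‖v‖⁻¹ • v)).comp π
  have hm : ∀ x, m x = inner ℝ u (π x) / ‖u‖ + inner ℝ v (π x) / ‖v‖ := by
    intro x
    simp only [m, LinearMap.comp_apply, innerₛₗ_apply_apply, inner_add_left, inner_smul_left]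
    simp only [RCLike.conj_to_real]
    ring
  have hpu : 0 < m (g (ρ (nb e f (φ1 r)))) := by
    rw [hm, ← hu, real_inner_self_eq_norm_sq, real_inner_comm]
    have : ‖u‖ ^ 2 / ‖u‖ + inner ℝ u v / ‖v‖ = ‖u‖ * (1 + inner ℝ u v / (‖u‖ * ‖v‖)) := by
      field_simp
    rw [this]
    exact mul_pos hun (by linarith)
  have hpv : 0 < m (g (ρ (nb e f (φ2 r)))) := by
    rw [hm, ← hv, real_inner_self_eq_norm_sq]
    have : inner ℝ u v / ‖u‖ + ‖v‖ ^ 2 / ‖v‖ = ‖v‖ * (1 + inner ℝ u v / (‖u‖ * ‖v‖)) := by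
      field_simp; ring
    rw [this]
    exact mul_pos hvn (by linarith)
  have hm0 : m (g (ρ r)) = 0 := by rw [hm, hb]; simp
  have := hZ.2 m (fun a => by
    obtain ⟨z, x, y, hx, hy, h⟩ := P.qcomb r a
    rw [h, map_add, map_add, map_smul, map_smul, map_smul, hm0]
    simp only [smul_eq_mul]
    have := mul_nonneg hx hpu.le
    have := mul_nonneg hy hpv.le
    linarith) ⟨_, hpu⟩
  rw [hm] at this
  rwa [real_inner_comm u, real_inner_comm v]

theorem Plan.hd {g : A → E} (P : Plan g ρ Fs e f φ1 φ2) {Z : E} (hZ : Intr g Z)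
    {π : E →ₗ[ℝ] E} (hπ : LinearMap.ker π = Submodule.span ℝ {Z}) (F : 𝓕) (x y : ℝ)
    (h : x • π (g (ρ (e F))) + y • π (g (ρ (f F))) = 0) : x = 0 ∧ y = 0 := by
  rw [← map_smul, ← map_smul, ← map_add, ← LinearMap.mem_ker, hπ,
    Submodule.mem_span_singleton] at h
  obtain ⟨c, hc⟩ := h
  obtain ⟨n, h1, h2, h3⟩ := fc_normal_intr hZ (P.fc F) (P.ne F)
  have := congrArg n hc
  rw [map_add, map_smul, map_smul, map_smul, h1 _ (P.memE F), h1 _ (P.memF F)] at this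
  simp only [smul_eq_mul, mul_zero, add_zero] at this
  have hc0 : c = 0 := (mul_eq_zero.1 this).resolve_right h3.ne'
  rw [hc0, zero_smul] at hc
  exact P.ind F x y hc.symm

theorem Plan.hdis {g : A → E} (P : Plan g ρ Fs e f φ1 φ2) {Z : E} (hZ : Intr g Z)
    {π : E →ₗ[ℝ] E} (hπ : LinearMap.ker π = Submodule.span ℝ {Z}) (F G : 𝓕) (x y z t : ℝ)
    (hx : 0 < x) (hy : 0 < y) (hz : 0 < z) (ht : 0 < t)
    (h : x • π (g (ρ (e F))) + y • π (g (ρ (f F))) = z • π (g (ρ (e G))) + t • π (g (ρ (f G)))) :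
    F = G := by
  rw [← sub_eq_zero] at h
  simp only [← map_smul, ← map_add] at h
  rw [← map_sub, ← LinearMap.mem_ker, hπ, Submodule.mem_span_singleton] at h
  obtain ⟨c, hc⟩ := h
  obtain ⟨n, h1, h2, h3⟩ := fc_normal_intr hZ (P.fc F) (P.ne F)
  obtain ⟨m, k1, k2, k3⟩ := fc_normal_intr hZ (P.fc G) (P.ne G)
  have nn : ∀ a, 0 ≤ n (g a) := fun a => by
    by_cases ha : a ∈ Fs F
    · exact (h1 a ha).ge
    · exact (h2 a ha).le
  have mm : ∀ a, 0 ≤ m (g a) := fun a => by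
    by_cases ha : a ∈ Fs G
    · exact (k1 a ha).ge
    · exact (k2 a ha).le
  have e1 := congrArg n hc
  have e2 := congrArg m hc
  simp only [map_sub, map_add, map_smul, smul_eq_mul, h1 _ (P.memE F), h1 _ (P.memF F)] at e1
  simp only [map_sub, map_add, map_smul, smul_eq_mul, k1 _ (P.memE G), k1 _ (P.memF G)] at e2
  have a1 := mul_nonneg hz.le (nn (ρ (e G)))
  have a2 := mul_nonneg ht.le (nn (ρ (f G)))
  have b1 := mul_nonneg hx.le (mm (ρ (e F)))
  have b2 := mul_nonneg hy.le (mm (ρ (f F)))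
  have hc1 : 0 ≤ c := by
    by_contra! hlt
    have := mul_neg_of_neg_of_pos hlt k3
    linarith
  have hc2 := mul_nonneg hc1 h3.le
  have a3 : n (g (ρ (e G))) = 0 := (mul_eq_zero.1 (by linarith : z * n (g (ρ (e G))) = 0)).resolve_left hz.ne'
  have a4 : n (g (ρ (f G))) = 0 := (mul_eq_zero.1 (by linarith : t * n (g (ρ (f G))) = 0)).resolve_left ht.ne'
  exact P.eq_of_mem (by by_contra hh; exact (h2 _ hh).ne' a3) (by by_contra hh; exact (h2 _ hh).ne' a4)

theorem Plan.other {g : A → E} (P : Plan g ρ Fs e f φ1 φ2) (F : 𝓕) (i : Bool) :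
    ∃ G, ρ (rayOf e f (F, i)) ∈ Fs G ∧ ρ (rayOf e f (F, !i)) ∉ Fs G := by
  set r := rayOf e f (F, i) with hr
  have hr1 : rayOf e f (φ1 r) = r := (P.hφ' r _).2 (Or.inl rfl)
  have hr2 : rayOf e f (φ2 r) = r := (P.hφ' r _).2 (Or.inr rfl)
  have m1 : ρ r ∈ Fs (φ1 r).1 := by have := P.mem_flag (φ1 r); rwa [hr1] at this
  have m2 : ρ r ∈ Fs (φ2 r).1 := by have := P.mem_flag (φ2 r); rwa [hr2] at this
  by_cases h : (φ1 r).1 = F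
  · refine ⟨_, m2, fun hh => ?_⟩
    have := P.eq_of_flag i m2 hh
    exact P.hne r (h.trans this.symm)
  · refine ⟨_, m1, fun hh => h ?_⟩
    exact P.eq_of_flag i m1 hh

theorem Plan.hcov [Finite 𝓕] {g : A → E} (P : Plan g ρ Fs e f φ1 φ2) {Z : E} (hZ : Intr g Z)
    {π : E →ₗ[ℝ] E} (hπ : LinearMap.ker π = Submodule.span ℝ {Z}) (v : E)
    (hv : v ∈ Submodule.span ℝ (range g)) : ∃ F, ∃ x y : ℝ, 0 ≤ x ∧ 0 ≤ y ∧
      π v = x • π (g (ρ (e F))) + y • π (g (ρ (f F))) := by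
  choose n h1 h2 h3 using fun F => fc_normal_intr hZ (P.fc F) (P.ne F)
  have := P.nonempty
  obtain ⟨F, hF⟩ := Finite.exists_max (fun F => -(n F v) / n F Z)
  set τ := -(n F v) / n F Z with hτ
  set x := v + τ • Z with hx
  have hxs : x ∈ Submodule.span ℝ (range g) := add_mem hv (Submodule.smul_mem _ _ hZ.1)
  have hxn : ∀ G, 0 ≤ n G x := by
    intro G
    have := hF G
    rw [div_le_iff₀ (h3 G)] at this
    rw [hx, map_add, map_smul, smul_eq_mul]
    linarith
  have hx0 : n F x = 0 := by
    rw [hx, map_add, map_smul, smul_eq_mul, hτ, div_mul_cancel₀ _ (h3 F).ne']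
    ring
  obtain ⟨c, hc⟩ := (ne_univ_iff_exists_notMem _).1 (P.ne F)
  have hs : ∀ a, g a ∈ Submodule.span ℝ (range g) := fun a => Submodule.subset_span ⟨a, rfl⟩
  have en : ∀ α β γ : ℝ, n F (α • g (ρ (e F)) + β • g (ρ (f F)) + γ • g c) = γ * n F (g c) := by
    intro α β γ
    simp [h1 F _ (P.memE F), h1 F _ (P.memF F)]
  obtain ⟨α, β, γ, h⟩ := span3 P.rk3 (hs (ρ (e F))) (hs (ρ (f F))) (hs c) (by
    intro α β γ h
    have e1 := en α β γ
    rw [h, map_zero] at e1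
    have hγ : γ = 0 := (mul_eq_zero.1 e1.symm).resolve_right (h2 F c hc).ne'
    rw [hγ, zero_smul, add_zero] at h
    have := P.ind F _ _ h
    exact ⟨this.1, this.2, hγ⟩) hxs
  have hγ : γ = 0 := by
    have e1 := en α β γ
    rw [← h, hx0] at e1
    exact (mul_eq_zero.1 e1.symm).resolve_right (h2 F c hc).ne'
  rw [hγ, zero_smul, add_zero] at h
  refine ⟨F, α, β, ?_, ?_, ?_⟩
  · obtain ⟨G, k1, k2⟩ := P.other F false
    have := hxn G
    have e1 : n G (g (ρ (f F))) = 0 := h1 G _ k1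
    have e2 : 0 < n G (g (ρ (e F))) := h2 G _ k2
    rw [h, map_add, map_smul, map_smul, e1, smul_zero, add_zero, smul_eq_mul] at this
    exact nonneg_of_mul_nonneg_left this e2
  · obtain ⟨G, k1, k2⟩ := P.other F true
    have := hxn G
    have e1 : n G (g (ρ (e F))) = 0 := h1 G _ k1
    have e2 : 0 < n G (g (ρ (f F))) := h2 G _ k2
    rw [h, map_add, map_smul, map_smul, e1, smul_zero, zero_add, smul_eq_mul] at this
    exact nonneg_of_mul_nonneg_left this e2
  · have hZ0 : π Z = 0 := by
      rw [← LinearMap.mem_ker, hπ]; exact Submodule.mem_span_singleton_self _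
    have e1 : π x = π v := by rw [hx, map_add, map_smul, hZ0, smul_zero, add_zero]
    rw [← e1, h, map_add, map_smul, map_smul]

theorem rk_map {g : A → E} {Z : E} (hZ : Z ∈ Submodule.span ℝ (range g)) (hZ0 : Z ≠ 0)
    {π : E →ₗ[ℝ] E} (hπ : LinearMap.ker π = Submodule.span ℝ {Z}) :
    Module.finrank ℝ ((Submodule.span ℝ (range g)).map π) + 1 = rk g := by
  have h1 := LinearMap.finrank_range_add_finrank_ker (π.domRestrict (Submodule.span ℝ (range g)))
  rw [LinearMap.range_domRestrict] at h1
  have h2 : LinearMap.ker (π.domRestrict (Submodule.span ℝ (range g))) =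
      Submodule.span ℝ {(⟨Z, hZ⟩ : Submodule.span ℝ (range g))} := by
    ext ⟨x, hx⟩
    rw [LinearMap.mem_ker, LinearMap.domRestrict_apply, ← LinearMap.mem_ker, hπ,
      Submodule.mem_span_singleton, Submodule.mem_span_singleton]
    simp only [Subtype.ext_iff]
    rfl
  rw [h2, finrank_span_singleton (by simpa [Subtype.ext_iff] using hZ0)] at h1
  exact h1

theorem Plan.angles [Fintype 𝓕] {g g' : A → E} (P : Plan g ρ Fs e f φ1 φ2)
    (P' : Plan g' ρ Fs e f φ1 φ2) (hp : Pointed g) (hp' : Pointed g')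
    {Z Z' : E} (hZ : Intr g Z) (hZ' : Intr g' Z') {π π' : E →ₗ[ℝ] E}
    (hπ : LinearMap.ker π = Submodule.span ℝ {Z}) (hπ' : LinearMap.ker π' = Submodule.span ℝ {Z'}) :
    ∑ F, InnerProductGeometry.angle (π (g (ρ (e F)))) (π (g (ρ (f F)))) =
      ∑ F, InnerProductGeometry.angle (π' (g' (ρ (e F)))) (π' (g' (ρ (f F)))) := by
  have key : ∀ {g : A → E} (P : Plan g ρ Fs e f φ1 φ2) (hp : Pointed g) {Z : E} (hZ : Intr g Z)
      {π : E →ₗ[ℝ] E} (hπ : LinearMap.ker π = Submodule.span ℝ {Z}), ∃ u v : 𝓕 → ℂ, Tiling u v ∧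
      ∀ F, InnerProductGeometry.angle (π (g (ρ (e F)))) (π (g (ρ (f F)))) =
        InnerProductGeometry.angle (u F) (v F) := by
    intro g P hp Z hZ π hπ
    have hZ0 := intr_ne_zero hp (by rw [P.rk3]; norm_num) hZ
    have hdim := rk_map hZ.1 hZ0 hπ
    rw [P.rk3] at hdim
    set W := (Submodule.span ℝ (range g)).map π
    let J : W ≃ₗᵢ[ℝ] ℂ := ((stdOrthonormalBasis ℝ W).reindex
      (finCongr (by omega : Module.finrank ℝ W = 2))).repr.trans Complex.orthonormalBasisOneI.repr.symm
    have hW : ∀ a, π (g a) ∈ W := fun a => ⟨g a, Submodule.subset_span ⟨a, rfl⟩, rfl⟩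
    refine ⟨fun F => J ⟨_, hW (ρ (e F))⟩, fun F => J ⟨_, hW (ρ (f F))⟩, ⟨?_, ?_, ?_⟩, ?_⟩
    · intro F x y h
      rw [← map_smul, ← map_smul, ← map_add, ← J.map_zero, J.injective.eq_iff] at h
      exact P.hd hZ hπ F x y (congrArg Subtype.val h)
    · intro w
      obtain ⟨⟨_, v, hv, rfl⟩, rfl⟩ := J.surjective w
      obtain ⟨F, x, y, hx, hy, h⟩ := P.hcov hZ hπ v hv
      refine ⟨F, x, y, hx, hy, ?_⟩
      rw [← map_smul, ← map_smul, ← map_add, J.injective.eq_iff]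
      exact Subtype.ext h
    · intro F G x y z t hx hy hz ht h
      simp only [← map_smul, ← map_add] at h
      rw [J.injective.eq_iff] at h
      exact P.hdis hZ hπ F G x y z t hx hy hz ht (congrArg Subtype.val h)
    · intro F
      exact (W.subtypeₗᵢ.angle_map ⟨_, hW (ρ (e F))⟩ ⟨_, hW (ρ (f F))⟩).trans
        (J.toLinearIsometry.angle_map ⟨_, hW (ρ (e F))⟩ ⟨_, hW (ρ (f F))⟩).symm
  obtain ⟨u, v, h1, h2⟩ := key P hp hZ hπ
  obtain ⟨u', v', h1', h2'⟩ := key P' hp' hZ' hπ'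
  simp only [h2, h2']
  exact angle_sum h1 h1'

end Insc
end PartP2

section PartP3
namespace Insc

open Set

variable {A : Type} [Finite A] {E : Type} [NormedAddCommGroup E] [InnerProductSpace ℝ E]
  [FiniteDimensional ℝ E]
variable {𝓕 R : Type} {ρ : R → A} {Fs : 𝓕 → Set A} {e f : 𝓕 → R} {φ1 φ2 : R → 𝓕 × Bool}

theorem gram_pos {x y : E} (h : ∀ s t : ℝ, s • x + t • y = 0 → s = 0 ∧ t = 0) :
    0 < inner ℝ x x * inner ℝ y y - inner ℝ x y ^ 2 := by
  have hx : x ≠ 0 := by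
    rintro rfl
    have := (h 1 0 (by simp)).1
    norm_num at this
  have hxx : 0 < inner ℝ x x := real_inner_self_pos.2 hx
  set v := inner ℝ x x • y - inner ℝ x y • x with hv
  have hv0 : v ≠ 0 := by
    intro h0
    have := h (-inner ℝ x y) (inner ℝ x x) (by rw [← h0, hv]; module)
    exact hxx.ne' this.2
  have h1 : 0 < inner ℝ v v := real_inner_self_pos.2 hv0
  have h2 : inner ℝ v v = inner ℝ x x * (inner ℝ x x * inner ℝ y y - inner ℝ x y ^ 2) := by
    rw [hv]
    simp only [inner_sub_left, inner_sub_right, inner_smul_left, inner_smul_right,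
      RCLike.conj_to_real, real_inner_comm x y]
    ring
  rw [h2] at h1
  exact (mul_pos_iff_of_pos_left hxx).1 h1

theorem planar_gen [Fintype 𝓕] [Fintype R] {g g' : A → E} (P : Plan g ρ Fs e f φ1 φ2)
    (P' : Plan g' ρ Fs e f φ1 φ2) (hp : Pointed g) (hp' : Pointed g')
    {Z Z' : E} (hZ : Intr g Z) (hZ' : Intr g' Z') {π π' : E →ₗ[ℝ] E}
    (hπ : LinearMap.ker π = Submodule.span ℝ {Z}) (hπ' : LinearMap.ker π' = Submodule.span ℝ {Z'})
    {a b : ℝ} (hb : b ≤ 0) (K : R → ℝ) (KF : 𝓕 → ℝ) (κ : 𝓕 → ℝ) (hκ : ∀ F, 0 < κ F)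
    (hκ2 : ∀ F, κ F ^ 2 = -b * (K (e F) * K (f F) - KF F ^ 2) +
      a ^ 2 * (K (e F) + K (f F) - 2 * KF F))
    (hω : ∀ r, 0 < a ^ 2 - b * K r) (s s' : R → ℝ) (hss : ∀ r, s r ≤ s' r)
    (hD : ∀ r, inner ℝ (π (g (ρ r))) (π (g (ρ r))) = dD a b (K r) (s r))
    (hD' : ∀ r, inner ℝ (π' (g' (ρ r))) (π' (g' (ρ r))) = dD a b (K r) (s' r))
    (hN : ∀ F, inner ℝ (π (g (ρ (e F)))) (π (g (ρ (f F)))) = dN a b (KF F) (s (e F)) (s (f F)))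
    (hN' : ∀ F, inner ℝ (π' (g' (ρ (e F)))) (π' (g' (ρ (f F)))) =
      dN a b (KF F) (s' (e F)) (s' (f F)))
    (hB : ∀ r, ∃ ψ : E →ₗ[ℝ] E, LinearMap.ker ψ = Submodule.span ℝ {g (ρ r)} ∧ ∃ c : ℝ, 0 < c ∧
      ∀ φ, rayOf e f φ = r → dn a b (K r) (KF φ.1) (s r) (s (nb e f φ)) / κ φ.1 =
        c * (inner ℝ (ψ Z) (ψ (g (ρ (nb e f φ)))) / ‖ψ (g (ρ (nb e f φ)))‖))
    (hB' : ∀ r, ∃ ψ : E →ₗ[ℝ] E, LinearMap.ker ψ = Submodule.span ℝ {g' (ρ r)} ∧ ∃ c : ℝ, 0 < c ∧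
      ∀ φ, rayOf e f φ = r → dn a b (K r) (KF φ.1) (s' r) (s' (nb e f φ)) / κ φ.1 =
        c * (inner ℝ (ψ Z') (ψ (g' (ρ (nb e f φ)))) / ‖ψ (g' (ρ (nb e f φ)))‖)) :
    ∀ r, s r = s' r := by
  have hrn : ∀ r, rayOf e f (φ1 r) = r := fun r => (P.hφ' r _).2 (Or.inl rfl)
  have hrn2 : ∀ r, rayOf e f (φ2 r) = r := fun r => (P.hφ' r _).2 (Or.inr rfl)
  have nz : ∀ {g : A → E} (P : Plan g ρ Fs e f φ1 φ2) {Z : E} (hZ : Intr g Z) {π : E →ₗ[ℝ] E}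
      (hπ : LinearMap.ker π = Submodule.span ℝ {Z}), ∀ r, 0 < inner ℝ (π (g (ρ r))) (π (g (ρ r))) := by
    intro g P Z hZ π hπ r
    rw [real_inner_self_pos]
    intro h0
    have h1 := hrn r
    rcases hφ : φ1 r with ⟨F, i⟩
    rw [hφ] at h1
    cases i
    · have h1 : f F = r := h1
      have := (P.hd hZ hπ F 0 1 (by rw [h1, h0]; simp)).2
      norm_num at this
    · have h1 : e F = r := h1
      have := (P.hd hZ hπ F 1 0 (by rw [h1, h0]; simp)).1
      norm_num at this
  refine core e f φ1 φ2 P.hφ P.hφ' hb K KF κ hκ hκ2 hω s s' hss ?_ ?_ ?_ ?_ ?_ ?_ ?_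
  · intro r; rw [← hD]; exact nz P hZ hπ r
  · intro r; rw [← hD']; exact nz P' hZ' hπ' r
  · intro F
    have := gram_pos (P.hd hZ hπ F)
    rw [hD, hD, hN] at this
    exact this
  · intro F
    have := gram_pos (P'.hd hZ' hπ' F)
    rw [hD', hD', hN'] at this
    exact this
  · intro r
    obtain ⟨ψ, h1, c, hc, h2⟩ := hB r
    have := h2 _ (hrn r)
    rw [nb] at this
    rw [this]
    have := h2 _ (hrn2 r)
    rw [nb] at this
    rw [this, ← mul_add]
    exact mul_pos hc (P.balance r hZ h1)
  · intro r
    obtain ⟨ψ, h1, c, hc, h2⟩ := hB' r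
    have := h2 _ (hrn r)
    rw [nb] at this
    rw [this]
    have := h2 _ (hrn2 r)
    rw [nb] at this
    rw [this, ← mul_add]
    exact mul_pos hc (P'.balance r hZ' h1)
  · have h := P.angles P' hp hp' hZ hZ' hπ hπ'
    unfold InnerProductGeometry.angle at h
    have hn : ∀ x y : E, ‖x‖ * ‖y‖ = √(inner ℝ x x * inner ℝ y y) := by
      intro x y
      rw [real_inner_self_eq_norm_sq, real_inner_self_eq_norm_sq, ← mul_pow,
        Real.sqrt_sq (by positivity)]
    simp only [hn, hD, hD', hN, hN'] at h
    exact h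

theorem Plan.extend {g g' : A → E} (H : Pr g g') (P : Plan g ρ Fs e f φ1 φ2)
    (Λ Λ' : E →ₗ[ℝ] ℝ) (h : ∀ r, Λ (g (ρ r)) = Λ' (g' (ρ r))) (a : A) (ha : Bd g a) :
    Λ (g a) = Λ' (g' a) := by
  by_cases h0 : g a = 0
  · rw [h0, H.zero h0, map_zero, map_zero]
  · obtain ⟨F, hF⟩ := P.cov a ha h0
    obtain ⟨L, hL⟩ := H.map (P.fc F) (P.ne F)
    obtain ⟨x, y, _, _, hxy⟩ := P.comb F a hF
    have : g' a = x • g' (ρ (e F)) + y • g' (ρ (f F)) := by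
      rw [← hL a hF, hxy, map_add, map_smul, map_smul, hL _ (P.memE F), hL _ (P.memF F)]
    rw [hxy, this]
    simp [h]

theorem Plan.gramF {g g' : A → E} (H : Pr g g') (P : Plan g ρ Fs e f φ1 φ2) (F : 𝓕) :
    inner ℝ (g (ρ (e F))) (g (ρ (f F))) = inner ℝ (g' (ρ (e F))) (g' (ρ (f F))) :=
  H.h2 _ (P.fc F) (P.ne F) _ (P.memE F) _ (P.memF F)

theorem Plan.gramR {g g' : A → E} (H : Pr g g') (P : Plan g ρ Fs e f φ1 φ2) (r : R) :
    inner ℝ (g (ρ r)) (g (ρ r)) = inner ℝ (g' (ρ r)) (g' (ρ r)) :=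
  H.h2 _ (P.ray r).2 (ray_ne_univ (by rw [P.rk3]; norm_num) _) _ (self_mem_lnS _ _) _
    (self_mem_lnS _ _)

theorem planar_cone {g g' : A → E} (H : Pr g g') (hr : rk g = 3) {Z Z' : E} (hZ : Intr g Z)
    (hZ' : Intr g' Z') (hn : ‖Z‖ = ‖Z'‖)
    (hle : ∀ a, Bd g a → inner ℝ Z (g a) ≤ inner ℝ Z' (g' a)) (a : A) (ha : Bd g a) :
    inner ℝ Z (g a) = inner ℝ Z' (g' a) := by
  obtain ⟨𝓕, R, _, _, ρ, Fs, e, f, φ1, φ2, P⟩ := exists_plan H.p hr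
  have P' := P.transfer H
  have hZ0 := intr_ne_zero H.p (by omega) hZ
  have hZ0' := intr_ne_zero H.p' (by rw [← H.rk_eq]; omega) hZ'
  have hnp : 0 < ‖Z‖ := norm_pos_iff.2 hZ0
  set w : ℝ := (‖Z‖ ^ 2)⁻¹ with hw
  have hw' : (‖Z'‖ ^ 2)⁻¹ = w := by rw [hw, hn]
  have hwp : 0 < w := by positivity
  have hgp : ∀ F, 0 < inner ℝ (g (ρ (e F))) (g (ρ (e F))) * inner ℝ (g (ρ (f F))) (g (ρ (f F)))
      - inner ℝ (g (ρ (e F))) (g (ρ (f F))) ^ 2 := fun F => gram_pos (P.ind F)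
  -- balance, generic
  have hbal : ∀ {g0 : A → E} (P0 : Plan g0 ρ Fs e f φ1 φ2)
      (hR : ∀ r, inner ℝ (g (ρ r)) (g (ρ r)) = inner ℝ (g0 (ρ r)) (g0 (ρ r)))
      (hF : ∀ F, inner ℝ (g (ρ (e F))) (g (ρ (f F))) = inner ℝ (g0 (ρ (e F))) (g0 (ρ (f F))))
      (Z0 : E) (r : R), ∃ ψ : E →ₗ[ℝ] E, LinearMap.ker ψ = Submodule.span ℝ {g0 (ρ r)} ∧
      ∃ c : ℝ, 0 < c ∧
      ∀ φ, rayOf e f φ = r → dn 0 (-w) (inner ℝ (g (ρ r)) (g (ρ r)))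
        (inner ℝ (g (ρ (e φ.1))) (g (ρ (f φ.1)))) (-inner ℝ Z0 (g0 (ρ r)))
        (-inner ℝ Z0 (g0 (ρ (nb e f φ)))) / √(w * (inner ℝ (g (ρ (e φ.1))) (g (ρ (e φ.1))) *
          inner ℝ (g (ρ (f φ.1))) (g (ρ (f φ.1)))
          - inner ℝ (g (ρ (e φ.1))) (g (ρ (f φ.1))) ^ 2)) =
        c * (inner ℝ (ψ Z0) (ψ (g0 (ρ (nb e f φ)))) / ‖ψ (g0 (ρ (nb e f φ)))‖) := by
    intro g0 P0 hR hF Z0 r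
    have h0 := (P0.ray r).1
    have h0n := norm_pos_iff.2 h0
    refine ⟨opr (g0 (ρ r)), opr_ker h0, √(w * ‖g0 (ρ r)‖ ^ 2), by positivity, ?_⟩
    intro φ hφ
    have hF' : inner ℝ (g (ρ (e φ.1))) (g (ρ (f φ.1))) =
        inner ℝ (g0 (ρ r)) (g0 (ρ (nb e f φ))) := by
      rw [hF, ← hφ]
      obtain ⟨F, i⟩ := φ
      cases i
      · exact real_inner_comm _ _
      · rfl
    have hP : inner ℝ (g (ρ (e φ.1))) (g (ρ (e φ.1))) * inner ℝ (g (ρ (f φ.1))) (g (ρ (f φ.1))) =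
        ‖g0 (ρ r)‖ ^ 2 * ‖g0 (ρ (nb e f φ))‖ ^ 2 := by
      rw [hR, hR, ← hφ]
      obtain ⟨F, i⟩ := φ
      cases i
      · rw [mul_comm, real_inner_self_eq_norm_sq, real_inner_self_eq_norm_sq]; rfl
      · rw [real_inner_self_eq_norm_sq, real_inner_self_eq_norm_sq]; rfl
    have hgp' := hgp φ.1
    rw [hP, hF'] at hgp' ⊢
    rw [hR, real_inner_self_eq_norm_sq]
    set v := g0 (ρ r)
    set c := g0 (ρ (nb e f φ))
    have e1 : ‖v‖ ^ 2 * ‖c‖ ^ 2 - inner ℝ v c ^ 2 = ‖v‖ ^ 2 * ‖opr v c‖ ^ 2 := by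
      rw [← real_inner_self_eq_norm_sq (opr v c), opr_inner h0, real_inner_self_eq_norm_sq c]
      field_simp
    rw [e1] at hgp' ⊢
    have hcn : 0 < ‖opr v c‖ := by
      by_contra! hh
      have : ‖opr v c‖ = 0 := le_antisymm hh (norm_nonneg _)
      rw [this] at hgp'
      norm_num at hgp'
    rw [← mul_assoc, Real.sqrt_mul (by positivity), Real.sqrt_sq hcn.le, opr_inner h0]
    set S := √(w * ‖v‖ ^ 2) with hS
    have hSp : 0 < S := by positivity
    have hS2 : S ^ 2 = w * ‖v‖ ^ 2 := Real.sq_sqrt (by positivity)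
    have e2 : dn 0 (-w) (‖v‖ ^ 2) (inner ℝ v c) (-inner ℝ Z0 v) (-inner ℝ Z0 c) =
        S ^ 2 * (inner ℝ Z0 c - (‖v‖ ^ 2)⁻¹ * inner ℝ v Z0 * inner ℝ v c) := by
      rw [hS2, real_inner_comm Z0 v]
      unfold dn
      field_simp
      ring
    rw [e2]
    field_simp
  have key := planar_gen P' P H.p' H.p hZ' hZ (opr_ker hZ0') (opr_ker hZ0) (a := 0) (b := -w)
    (by linarith) (fun r => inner ℝ (g (ρ r)) (g (ρ r)))
    (fun F => inner ℝ (g (ρ (e F))) (g (ρ (f F))))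
    (fun F => √(w * (inner ℝ (g (ρ (e F))) (g (ρ (e F))) * inner ℝ (g (ρ (f F))) (g (ρ (f F)))
      - inner ℝ (g (ρ (e F))) (g (ρ (f F))) ^ 2)))
    (fun F => Real.sqrt_pos.2 (mul_pos hwp (hgp F)))
    (fun F => by rw [Real.sq_sqrt (mul_pos hwp (hgp F)).le]; ring)
    (fun r => by
      have := real_inner_self_pos.2 (P.ray r).1
      have := mul_pos hwp this
      linarith)
    (fun r => -inner ℝ Z' (g' (ρ r))) (fun r => -inner ℝ Z (g (ρ r)))
    (fun r => neg_le_neg (hle _ (ray_bd (by omega) (P.ray r))))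
    (fun r => by
      rw [opr_inner hZ0', hw', P.gramR H]; unfold dD; ring)
    (fun r => by
      rw [opr_inner hZ0]; unfold dD; ring)
    (fun F => by
      rw [opr_inner hZ0', hw', P.gramF H]; unfold dN; ring)
    (fun F => by
      rw [opr_inner hZ0]; unfold dN; ring)
    (hbal P' (P.gramR H) (P.gramF H) Z')
    (hbal P (fun _ => rfl) (fun _ => rfl) Z)
  exact P.extend H (innerₛₗ ℝ Z) (innerₛₗ ℝ Z') (fun r => by
    have := key r
    simp only [innerₛₗ_apply_apply]
    linarith) a ha

noncomputable def lamE {E : Type} [NormedAddCommGroup E] [InnerProductSpace ℝ E] (O : E)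
    (h : E →ₗ[ℝ] ℝ) : E →ₗ[ℝ] ℝ := (-2 : ℝ) • innerₛₗ ℝ O + (‖O‖ ^ 2) • h

theorem lamE_apply (O : E) (h : E →ₗ[ℝ] ℝ) (x : E) :
    lamE O h x = -2 * inner ℝ O x + ‖O‖ ^ 2 * h x := by
  simp [lamE]

theorem lamE_norm (O : E) {h : E →ₗ[ℝ] ℝ} {x : E} (hx : h x = 1) :
    lamE O h x = ‖x - O‖ ^ 2 - ‖x‖ ^ 2 := by
  rw [lamE_apply, hx, @norm_sub_sq_real, real_inner_comm O x]; ring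

theorem planar_euc {g g' : A → E} (H : Pr g g') (hr : rk g = 3) {h h' : E →ₗ[ℝ] ℝ}
    (hh : ∀ a, g a ≠ 0 → h (g a) = 1) (hh' : ∀ a, g' a ≠ 0 → h' (g' a) = 1) {O O' : E}
    (hO : Intr g O) (hO' : Intr g' O') (hO1 : h O = 1) (hO1' : h' O' = 1)
    (hle : ∀ a, Bd g a → lamE O h (g a) ≤ lamE O' h' (g' a)) (a : A) (ha : Bd g a) :
    lamE O h (g a) = lamE O' h' (g' a) := by
  obtain ⟨𝓕, R, _, _, ρ, Fs, e, f, φ1, φ2, P⟩ := exists_plan H.p hr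
  have P' := P.transfer H
  have hr1 : ∀ r, h (g (ρ r)) = 1 := fun r => hh _ (P.ray r).1
  have hr1' : ∀ r, h' (g' (ρ r)) = 1 := fun r => hh' _ (P'.ray r).1
  have hl : ∀ r, lamE O h (g (ρ r)) = ‖g (ρ r) - O‖ ^ 2 - ‖g (ρ r)‖ ^ 2 :=
    fun r => lamE_norm O (hr1 r)
  have hl' : ∀ r, lamE O' h' (g' (ρ r)) = ‖g' (ρ r) - O'‖ ^ 2 - ‖g (ρ r)‖ ^ 2 := by
    intro r
    rw [lamE_norm O' (hr1' r), H.norm_bd (ray_bd (by omega) (P.ray r))]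
  have hef : ∀ F, ‖g (ρ (e F)) - g (ρ (f F))‖ = ‖g' (ρ (e F)) - g' (ρ (f F))‖ := by
    intro F
    have : ‖g (ρ (e F)) - g (ρ (f F))‖ ^ 2 = ‖g' (ρ (e F)) - g' (ρ (f F))‖ ^ 2 := by
      rw [@norm_sub_sq_real, @norm_sub_sq_real, P.gramF H,
        H.norm_bd (ray_bd (by omega) (P.ray (e F))), H.norm_bd (ray_bd (by omega) (P.ray (f F)))]
    exact (pow_left_inj₀ (norm_nonneg _) (norm_nonneg _) two_ne_zero).1 this
  have hefp : ∀ F, 0 < ‖g (ρ (e F)) - g (ρ (f F))‖ := by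
    intro F
    rw [norm_pos_iff]
    intro h0
    have := P.ind F 1 (-1) (by rw [← h0]; simp [sub_eq_add_neg])
    norm_num at this
  have hbal : ∀ {g0 : A → E} {h0 : E →ₗ[ℝ] ℝ} (P0 : Plan g0 ρ Fs e f φ1 φ2)
      (hr1 : ∀ r, h0 (g0 (ρ r)) = 1)
      (hF : ∀ F, ‖g (ρ (e F)) - g (ρ (f F))‖ = ‖g0 (ρ (e F)) - g0 (ρ (f F))‖)
      (Z0 : E) (hZ1 : h0 Z0 = 1) (r : R), ∃ ψ : E →ₗ[ℝ] E,
      LinearMap.ker ψ = Submodule.span ℝ {g0 (ρ r)} ∧ ∃ c : ℝ, 0 < c ∧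
      ∀ φ, rayOf e f φ = r → dn (1/2) 0 0
        (-‖g (ρ (e φ.1)) - g (ρ (f φ.1))‖ ^ 2 / 2) (‖g0 (ρ r) - Z0‖ ^ 2)
        (‖g0 (ρ (nb e f φ)) - Z0‖ ^ 2) / (‖g (ρ (e φ.1)) - g (ρ (f φ.1))‖ / 2) =
        c * (inner ℝ (ψ Z0) (ψ (g0 (ρ (nb e f φ)))) / ‖ψ (g0 (ρ (nb e f φ)))‖) := by
    intro g0 h0 P0 hr1 hF Z0 hZ1 r
    refine ⟨apr h0 (g0 (ρ r)), apr_ker (hr1 r), 1, one_pos, ?_⟩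
    intro φ hφ
    have hF' : ‖g (ρ (e φ.1)) - g (ρ (f φ.1))‖ = ‖g0 (ρ (nb e f φ)) - g0 (ρ r)‖ := by
      rw [hF, ← hφ]
      obtain ⟨F, i⟩ := φ
      cases i
      · rfl
      · exact norm_sub_rev _ _
    have hpos := hefp φ.1
    rw [hF'] at hpos ⊢
    rw [apr_apply, apr_apply, hZ1, hr1, one_smul]
    set v := g0 (ρ r)
    set c := g0 (ρ (nb e f φ))
    have e1 : c - Z0 = (c - v) - (Z0 - v) := by abel
    have e2 : ‖v - Z0‖ = ‖Z0 - v‖ := norm_sub_rev _ _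
    have e3 : ‖c - Z0‖ ^ 2 = ‖c - v‖ ^ 2 - 2 * inner ℝ (c - v) (Z0 - v) + ‖Z0 - v‖ ^ 2 := by
      rw [e1]; exact norm_sub_sq_real _ _
    rw [e3, e2, real_inner_comm (c - v)]
    unfold dn
    field_simp
    ring
  have key := planar_gen P P' H.p H.p' hO hO' (apr_ker hO1) (apr_ker hO1') (a := 1/2) (b := 0)
    le_rfl (fun r => 0)
    (fun F => -‖g (ρ (e F)) - g (ρ (f F))‖ ^ 2 / 2)
    (fun F => ‖g (ρ (e F)) - g (ρ (f F))‖ / 2)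
    (fun F => by have := hefp F; positivity)
    (fun F => by ring)
    (fun r => by norm_num)
    (fun r => ‖g (ρ r) - O‖ ^ 2) (fun r => ‖g' (ρ r) - O'‖ ^ 2)
    (fun r => by
      have := hle _ (ray_bd (by omega) (P.ray r))
      rw [hl, hl'] at this
      linarith)
    (fun r => by
      rw [apr_apply, hr1, one_smul, real_inner_self_eq_norm_sq]; unfold dD; ring)
    (fun r => by
      rw [apr_apply, hr1', one_smul, real_inner_self_eq_norm_sq]; unfold dD; ring)
    (fun F => by
      rw [apr_apply, apr_apply, hr1, hr1, one_smul]
      have : g (ρ (e F)) - g (ρ (f F)) = (g (ρ (e F)) - O) - (g (ρ (f F)) - O) := by abel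
      rw [this, @norm_sub_sq_real]; unfold dN; ring)
    (fun F => by
      rw [apr_apply, apr_apply, hr1', hr1', one_smul, hef]
      have : g' (ρ (e F)) - g' (ρ (f F)) = (g' (ρ (e F)) - O') - (g' (ρ (f F)) - O') := by abel
      rw [this, @norm_sub_sq_real]; unfold dN; ring)
    (hbal P hr1 (fun _ => rfl) O hO1)
    (hbal P' hr1' hef O' hO1')
  exact P.extend H _ _ (fun r => by
    have := key r
    rw [hl, hl', this]) a ha

end Insc
end PartP3

section PartC
namespace Insc
open Set
section C
variable {A : Type} [Finite A] {E : Type} [NormedAddCommGroup E] [InnerProductSpace ℝ E]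
  [FiniteDimensional ℝ E]

theorem first_contact (N : Set A) (δ : A → ℝ → ℝ) (hc : ∀ a, Continuous (δ a))
    (h0 : ∀ a ∈ N, 0 < δ a 0) {b : A} (hb : b ∈ N) (h1 : δ b 1 < 0) :
    ∃ t : ℝ, 0 ≤ t ∧ t < 1 ∧ (∀ a ∈ N, 0 ≤ δ a t) ∧ ∃ a ∈ N, δ a t = 0 := by
  classical
  have hfin : N.Finite := N.toFinite
  set s : Finset A := hfin.toFinset
  have hs : ∀ a, a ∈ s ↔ a ∈ N := fun a => hfin.mem_toFinset
  have hne : s.Nonempty := ⟨b, (hs b).2 hb⟩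
  let f : ℝ → ℝ := fun t => s.inf' hne (fun a => δ a t)
  have hf : Continuous f := by
    apply Continuous.finset_inf'_apply
    intro i _
    exact hc i
  have hf0 : 0 ≤ f 0 := by
    apply Finset.le_inf'
    intro a ha
    exact (h0 a ((hs a).1 ha)).le
  have hf1 : f 1 < 0 := lt_of_le_of_lt (Finset.inf'_le _ ((hs b).2 hb)) h1
  have := intermediate_value_Icc' (zero_le_one' ℝ) hf.continuousOn
  obtain ⟨t, ht, hft⟩ := this ⟨hf1.le, hf0⟩
  refine ⟨t, ht.1, lt_of_le_of_ne ht.2 ?_, ?_, ?_⟩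
  · rintro rfl
    linarith
  · intro a ha
    rw [← hft]
    exact Finset.inf'_le _ ((hs a).2 ha)
  · obtain ⟨a, ha, h⟩ := Finset.exists_mem_eq_inf' hne (fun a => δ a t)
    exact ⟨a, (hs a).1 ha, by rw [← h]; exact hft⟩

theorem bd_ne_intr {g : A → E} {b : A} (hb : Bd g b) {Z : E} (hZ : Intr g Z) (c : ℝ) :
    Z ≠ c • g b := by
  rintro rfl
  obtain ⟨F, hF, hne, hbF⟩ := hb
  obtain ⟨n, hn, _, h⟩ := fc_normal_intr hZ hF hne
  simp [hn b hbF] at h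

theorem W_cone : ∀ (k : ℕ) {g g' : A → E} (H : Pr g g') (hr : rk g = k + 3) {Z Z' : E}
    (hZ : Intr g Z) (hZ' : Intr g' Z') (hn : ‖Z‖ = ‖Z'‖)
    (hle : ∀ a, Bd g a → inner ℝ Z (g a) ≤ inner ℝ Z' (g' a)) (a : A) (ha : Bd g a),
    inner ℝ Z (g a) = inner ℝ Z' (g' a) := by
  intro k
  induction k with
  | zero => intro g g' H hr Z Z' hZ hZ' hn hle a ha; exact planar_cone H hr hZ hZ' hn hle a ha
  | succ k ih =>
    intro g g' H hr
    have hcon : ∀ {Z Z' : E} (hZ : Intr g Z) (hZ' : Intr g' Z') (hn : ‖Z‖ = ‖Z'‖)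
        (hle : ∀ a, Bd g a → inner ℝ Z (g a) ≤ inner ℝ Z' (g' a))
        (hc : ∃ b, Bd g b ∧ g b ≠ 0 ∧ inner ℝ Z (g b) = inner ℝ Z' (g' b)) (a : A) (ha : Bd g a),
        inner ℝ Z (g a) = inner ℝ Z' (g' a) := by
      intro Z Z' hZ hZ' hn hle hc a ha
      refine contact H (by omega) (innerₛₗ ℝ Z) (innerₛₗ ℝ Z') hle hc ?_ a ha
      intro b hb hbe F hF hne hbF c hcF
      replace hbe : inner ℝ Z (g b) = inner ℝ Z' (g' b) := hbe
      show inner ℝ Z (g c) = inner ℝ Z' (g' c)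
      have hb' := (H.ray hb).1
      have hk := opr_ker hb.1
      have hbn : ‖g b‖ = ‖g' b‖ := H.norm_bd ⟨F, hF, hne, hbF⟩
      have hI : ∀ F, IsFc g F → F ≠ univ → b ∈ F → ∀ a ∈ F,
          inner ℝ (opr (g' b) Z') (opr (g' b) (g' a)) - inner ℝ (opr (g b) Z) (opr (g b) (g a))
            = inner ℝ Z' (g' a) - inner ℝ Z (g a) := by
        intro F hF hne hbF a haF
        rw [opr_inner hb.1, opr_inner hb'.1, hbn, H.h2 F hF hne b hbF a haF, real_inner_comm Z,
          real_inner_comm Z', hbe]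
        ring
      have := ih (H.quot_opr hb) (by have := quot_rk hk hb.1; omega)
        (Z := opr (g b) Z) (Z' := opr (g' b) Z') (quot_intr hZ) (quot_intr hZ') ?_ ?_ c
        ((quot_bd hk c).2 ⟨F, hF, hne, hbF, hcF⟩)
      · have h2 := hI F hF hne hbF c hcF
        linarith
      · have : ‖opr (g b) Z‖ ^ 2 = ‖opr (g' b) Z'‖ ^ 2 := by
          rw [← real_inner_self_eq_norm_sq, ← real_inner_self_eq_norm_sq, opr_inner hb.1,
            opr_inner hb'.1, real_inner_self_eq_norm_sq, real_inner_self_eq_norm_sq, hn, hbn,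
            real_inner_comm Z, real_inner_comm Z', hbe]
        exact (pow_left_inj₀ (norm_nonneg _) (norm_nonneg _) two_ne_zero).1 this
      · intro a ha
        obtain ⟨F, hF, hne, hbF, haF⟩ := (quot_bd hk a).1 ha
        have h2 := hI F hF hne hbF a haF
        have h3 := hle a ⟨F, hF, hne, haF⟩
        linarith
    intro Z Z' hZ hZ' hn hle
    by_cases hc : ∃ b, Bd g b ∧ g b ≠ 0 ∧ inner ℝ Z (g b) = inner ℝ Z' (g' b)
    · exact hcon hZ hZ' hn hle hc
    exfalso
    push Not at hc
    have hlt : ∀ a, Bd g a → g a ≠ 0 → inner ℝ Z (g a) < inner ℝ Z' (g' a) :=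
      fun a h1 h2 => lt_of_le_of_ne (hle a h1) (hc a h1 h2)
    obtain ⟨b, hb, hb0⟩ := exists_bd H.p (by omega)
    have hbn := H.norm_bd hb
    have hZ'0 : Z' ≠ 0 := intr_ne_zero H.p' (by rw [← H.rk_eq]; omega) hZ'
    have hZ'p : 0 < ‖Z'‖ := norm_pos_iff.2 hZ'0
    have hbp : 0 < ‖g b‖ := norm_pos_iff.2 hb0
    obtain ⟨t, ht0, ht1, hge, a0, ha0, hcont⟩ := first_contact {a | Bd g a ∧ g a ≠ 0}
      (fun a t => inner ℝ Z' (g' a) * ‖(1 - t) • Z + t • g b‖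
        - inner ℝ ((1 - t) • Z + t • g b) (g a) * ‖Z'‖)
      (fun a => by fun_prop)
      (by
        rintro a ⟨h1, h2⟩
        have := hlt a h1 h2
        simp only [sub_zero, one_smul, zero_smul, add_zero, hn]
        have := mul_lt_mul_of_pos_right this hZ'p
        linarith) (b := b) ⟨hb, hb0⟩
      (by
        simp only [sub_self, zero_smul, one_smul, zero_add]
        have : inner ℝ Z' (g' b) < ‖Z'‖ * ‖g' b‖ := by
          rw [inner_lt_norm_mul_iff_real]
          intro h
          refine bd_ne_intr (H.bd_iff.1 hb) hZ' (‖g' b‖⁻¹ * ‖Z'‖) ?_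
          rw [mul_smul, ← h, smul_smul, inv_mul_cancel₀ (by rw [← hbn]; exact hbp.ne'), one_smul]
        rw [real_inner_self_eq_norm_sq]
        have := mul_lt_mul_of_pos_right this hbp
        rw [← hbn] at this
        nlinarith)
    set Y := (1 - t) • Z + t • g b with hY
    have hYI : Intr g Y := intr_seg hZ b (by linarith) ht0
    have hY0 : Y ≠ 0 := intr_ne_zero H.p (by omega) hYI
    have hYp : 0 < ‖Y‖ := norm_pos_iff.2 hY0
    set c := ‖Z'‖ / ‖Y‖ with hcd
    have hcp : 0 < c := by positivity
    have hZ1 : Intr g (c • Y) := by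
      have := intr_seg hYI b hcp le_rfl
      rwa [zero_smul, add_zero] at this
    have hn1 : ‖c • Y‖ = ‖Z'‖ := by
      rw [norm_smul, Real.norm_of_nonneg hcp.le, hcd]; field_simp
    have hdiff : ∀ a, inner ℝ Z' (g' a) - inner ℝ (c • Y) (g a) =
        (inner ℝ Z' (g' a) * ‖Y‖ - inner ℝ Y (g a) * ‖Z'‖) / ‖Y‖ := by
      intro a
      rw [inner_smul_left, hcd]; simp; field_simp
    have heq := hcon hZ1 hZ' hn1 (by
      intro a ha
      by_cases h0 : g a = 0
      · rw [h0, H.zero_iff.1 h0]; simp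
      · have h1 := hge a ⟨ha, h0⟩
        have h2 := div_nonneg h1 hYp.le
        rw [← hdiff] at h2
        linarith) ⟨a0, ha0.1, ha0.2, by
        have h2 := hdiff a0
        rw [hcont, zero_div] at h2
        linarith⟩
    have hpos : ∀ a, Bd g a → g a ≠ 0 → 0 < innerₛₗ ℝ (c • Y - Z) (g a) := by
      intro a h1 h2
      rw [innerₛₗ_apply_apply, inner_sub_left, heq a h1]
      linarith [hlt a h1 h2]
    have hnn : ∀ a, Bd g a → 0 ≤ innerₛₗ ℝ (c • Y - Z) (g a) := by
      intro a h1
      by_cases h0 : g a = 0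
      · rw [h0, map_zero]
      · exact (hpos a h1 h0).le
    have k1 := intr_pos H.p (by omega) hZ _ hnn ⟨b, hpos b hb hb0⟩
    have k2 := intr_pos H.p (by omega) hZ1 _ hnn ⟨b, hpos b hb hb0⟩
    have k3 : innerₛₗ ℝ (c • Y - Z) Z + innerₛₗ ℝ (c • Y - Z) (c • Y) = 0 := by
      rw [innerₛₗ_apply_apply, innerₛₗ_apply_apply, inner_sub_left, inner_sub_left,
        real_inner_self_eq_norm_sq, real_inner_self_eq_norm_sq, hn1, hn, real_inner_comm Z]
      ring
    linarith

theorem W_euc {g g' : A → E} (H : Pr g g') (hr : 3 ≤ rk g) {h h' : E →ₗ[ℝ] ℝ}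
    (hh : ∀ a, g a ≠ 0 → h (g a) = 1) (hh' : ∀ a, g' a ≠ 0 → h' (g' a) = 1) {O O' : E}
    (hO : Intr g O) (hO' : Intr g' O') (hO1 : h O = 1) (hO1' : h' O' = 1)
    (hle : ∀ a, Bd g a → lamE O h (g a) ≤ lamE O' h' (g' a)) (a : A) (ha : Bd g a) :
    lamE O h (g a) = lamE O' h' (g' a) := by
  rcases eq_or_lt_of_le hr with hr3 | hr4
  · exact planar_euc H hr3.symm hh hh' hO hO' hO1 hO1' hle a ha
  have hhe : ∀ a, h (g a) = h' (g' a) := by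
    intro a
    by_cases h0 : g a = 0
    · rw [h0, H.zero_iff.1 h0, map_zero, map_zero]
    · rw [hh a h0, hh' a (fun h1 => h0 (H.zero_iff.2 h1))]
  have hcon : ∀ {O O' : E} (hO : Intr g O) (hO' : Intr g' O') (hO1 : h O = 1) (hO1' : h' O' = 1)
    (hle : ∀ a, Bd g a → lamE O h (g a) ≤ lamE O' h' (g' a))
    (hc : ∃ b, Bd g b ∧ g b ≠ 0 ∧ lamE O h (g b) = lamE O' h' (g' b)) (a : A) (ha : Bd g a),
    lamE O h (g a) = lamE O' h' (g' a) := by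
    intro O O' hO hO' hO1 hO1' hle hc a ha
    refine contact H (by omega) _ _ hle hc ?_ a ha
    intro b hb hbe F hF hne hbF c hcF
    have hb' := (H.ray hb).1
    have hk := apr_ker (hh b hb.1)
    have hbn : ‖g b‖ = ‖g' b‖ := H.norm_bd ⟨F, hF, hne, hbF⟩
    have gen : ∀ (h : E →ₗ[ℝ] ℝ) (O v x : E), h O = 1 → h v = 1 →
        inner ℝ (apr h v O) (apr h v x) =
          -(1/2) * lamE O h x + h x * ((1/2) * lamE O h v) - inner ℝ v x + h x * ‖v‖ ^ 2 := by
      intro h O v x h1 h2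
      rw [apr_apply, apr_apply, h1, one_smul, lamE_apply, lamE_apply, h2, inner_sub_left,
        inner_sub_right, inner_sub_right, inner_smul_right, inner_smul_right,
        real_inner_self_eq_norm_sq]
      ring
    have hI : ∀ F, IsFc g F → F ≠ univ → b ∈ F → ∀ a ∈ F,
        inner ℝ (apr h' (g' b) O') (apr h' (g' b) (g' a))
          - inner ℝ (apr h (g b) O) (apr h (g b) (g a))
          = -(1/2) * (lamE O' h' (g' a) - lamE O h (g a)) := by
      intro F hF hne hbF a haF
      rw [gen h O _ _ hO1 (hh b hb.1), gen h' O' _ _ hO1' (hh' b hb'.1), hbn,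
        H.h2 F hF hne b hbF a haF, hbe, hhe]
      ring
    have hk' := apr_ker (hh' b hb'.1)
    have hQ := H.quot_apr hb hh hh'
    have := W_cone (rk g - 4) hQ.symm ?_
        (Z := apr h' (g' b) O') (Z' := apr h (g b) O) (quot_intr hO') (quot_intr hO) ?_ ?_ c
        (hQ.bd_iff.1 ((quot_bd hk c).2 ⟨F, hF, hne, hbF, hcF⟩))
    · have h2 := hI F hF hne hbF c hcF
      linarith
    · have h1 := quot_rk hk' hb'.1
      have h2 : rk g = rk g' := H.rk_eq
      omega
    · rw [apr_apply, apr_apply, hO1, hO1', one_smul, one_smul]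
      have h1 := lamE_norm O (hh b hb.1)
      have h2 := lamE_norm O' (hh' b hb'.1)
      have h3 : ‖O' - g' b‖ ^ 2 = ‖O - g b‖ ^ 2 := by
        rw [norm_sub_rev O', norm_sub_rev O]
        rw [hbn] at h1
        linarith
      exact (pow_left_inj₀ (norm_nonneg _) (norm_nonneg _) two_ne_zero).1 h3
    · intro a ha
      obtain ⟨F, hF, hne, hbF, haF⟩ := (quot_bd hk a).1 (hQ.bd_iff.2 ha)
      have h2 := hI F hF hne hbF a haF
      have h3 := hle a ⟨F, hF, hne, haF⟩
      linarith
  by_cases hc : ∃ b, Bd g b ∧ g b ≠ 0 ∧ lamE O h (g b) = lamE O' h' (g' b)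
  · exact hcon hO hO' hO1 hO1' hle hc a ha
  exfalso
  push Not at hc
  have hlt : ∀ a, Bd g a → g a ≠ 0 → lamE O h (g a) < lamE O' h' (g' a) :=
    fun a h1 h2 => lt_of_le_of_ne (hle a h1) (hc a h1 h2)
  obtain ⟨b, hb, hb0⟩ := exists_bd H.p (by omega)
  have hbn := H.norm_bd hb
  have hb0' : g' b ≠ 0 := fun h1 => hb0 (H.zero_iff.2 h1)
  obtain ⟨t, ht0, ht1, hge, a0, ha0, hcont⟩ := first_contact {a | Bd g a ∧ g a ≠ 0}
    (fun a t => lamE ((1 - t) • O' + t • g' b) h' (g' a) - lamE O h (g a))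
    (fun a => by simp only [lamE_apply]; fun_prop)
    (by
      rintro a ⟨h1, h2⟩
      have := hlt a h1 h2
      simp only [sub_zero, one_smul, zero_smul, add_zero]
      linarith) (b := b) ⟨hb, hb0⟩
    (by
      simp only [sub_self, zero_smul, one_smul, zero_add]
      rw [lamE_norm _ (hh b hb0), lamE_norm _ (hh' b hb0'), sub_self, norm_zero, hbn]
      have : 0 < ‖g b - O‖ := by
        rw [norm_pos_iff, sub_ne_zero]
        have := bd_ne_intr hb hO 1
        rw [one_smul] at this
        exact this.symm
      have := pow_pos this 2
      linarith)
  set Y := (1 - t) • O' + t • g' b with hY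
  have hYI : Intr g' Y := intr_seg hO' b (by linarith) ht0
  have hY1 : h' Y = 1 := by
    rw [hY, map_add, map_smul, map_smul, hO1', hh' b hb0']; simp
  have heq := hcon hO hYI hO1 hY1 (by
    intro a ha
    by_cases h0 : g a = 0
    · rw [h0, H.zero_iff.1 h0]; simp
    · have h1 := hge a ⟨ha, h0⟩
      linarith) ⟨a0, ha0.1, ha0.2, by linarith⟩
  have hpos : ∀ a, Bd g a → g a ≠ 0 → 0 < (lamE O' h' - lamE Y h') (g' a) := by
    intro a h1 h2
    rw [LinearMap.sub_apply, ← heq a h1]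
    linarith [hlt a h1 h2]
  have hnn : ∀ a, Bd g' a → 0 ≤ (lamE O' h' - lamE Y h') (g' a) := by
    intro a h1
    by_cases h0 : g a = 0
    · rw [H.zero_iff.1 h0, map_zero]
    · exact (hpos a (H.bd_iff.2 h1) h0).le
  have k1 := intr_pos H.p' (by rw [← H.rk_eq]; omega) hO' _ hnn ⟨b, hpos b hb hb0⟩
  rw [LinearMap.sub_apply, lamE_norm _ hO1', lamE_norm _ hO1', sub_self, norm_zero] at k1
  have := sq_nonneg ‖O' - Y‖
  linarith

end C
end Insc
end PartC

section PartM1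
namespace Insc
open Set
section M1
variable {A : Type} [Finite A] {E : Type} [NormedAddCommGroup E] [InnerProductSpace ℝ E]
  [FiniteDimensional ℝ E]

def Fc {A E : Type} [NormedAddCommGroup E] [InnerProductSpace ℝ E] (p : A → E) (S : Set A) : Prop :=
  ∃ (n : E →ₗ[ℝ] ℝ) (c : ℝ), (∀ a ∈ S, n (p a) = c) ∧ ∀ a, a ∉ S → c < n (p a)

def Cf {A E : Type} [NormedAddCommGroup E] [InnerProductSpace ℝ E] (p : A → E) (a b : A) : Prop :=
  ∃ F, Fc p F ∧ F ≠ univ ∧ a ∈ F ∧ b ∈ F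

structure Dat {A E : Type} [NormedAddCommGroup E] [InnerProductSpace ℝ E] (p q : A → E)
    (c c' : E) (ρ ρ' : ℝ) : Prop where
  fc : ∀ S, Fc p S ↔ Fc q S
  v : ∀ a, Fc p {a}
  ins : ∀ a, ‖p a - c‖ = ρ
  ins' : ∀ a, ‖q a - c'‖ = ρ'
  cs : ∀ a, c - p a ∈ vectorSpan ℝ (range p)
  cs' : ∀ a, c' - q a ∈ vectorSpan ℝ (range q)
  loc : ∀ a b, Cf p a b → ‖p a - p b‖ = ‖q a - q b‖
  ed : ∀ a b, (∀ x, x = a ∨ x = b) → ‖p a - p b‖ = ‖q a - q b‖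

theorem Dat.cf {p q : A → E} {c c' : E} {ρ ρ' : ℝ} (D : Dat p q c c' ρ ρ') (a b : A) :
    Cf p a b ↔ Cf q a b := by
  unfold Cf; simp only [D.fc]

theorem Cf.symm {p : A → E} {a b : A} (h : Cf p a b) : Cf p b a := by
  obtain ⟨F, h1, h2, h3, h4⟩ := h
  exact ⟨F, h1, h2, h4, h3⟩

theorem Dat.symm {p q : A → E} {c c' : E} {ρ ρ' : ℝ} (D : Dat p q c c' ρ ρ') :
    Dat q p c' c ρ' ρ :=
  ⟨fun S => (D.fc S).symm, fun a => (D.fc _).1 (D.v a), D.ins', D.ins, D.cs', D.cs,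
    fun a b h => (D.loc a b ((D.cf a b).2 h)).symm, fun a b h => (D.ed a b h).symm⟩

theorem fc_inj {p : A → E} (hv : ∀ a, Fc p {a}) : Function.Injective p := by
  intro a b hab
  obtain ⟨n, c, h1, h2⟩ := hv a
  by_contra hne
  have h3 := h2 b (fun h => hne (h : b = a).symm)
  rw [← hab, h1 a rfl] at h3
  exact lt_irrefl _ h3

noncomputable def gc {A E : Type} [NormedAddCommGroup E] [InnerProductSpace ℝ E] (p : A → E)
    (j a : A) : E := (‖p a - p j‖ ^ 2)⁻¹ • (p a - p j)

theorem gc_self (p : A → E) (j : A) : gc p j j = 0 := by simp [gc]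

theorem gc_smul (p : A → E) (j a : A) : p a - p j = (‖p a - p j‖ ^ 2) • gc p j a := by
  unfold gc
  by_cases h : p a - p j = 0
  · simp [h]
  · have : ‖p a - p j‖ ≠ 0 := norm_ne_zero_iff.2 h
    rw [smul_smul, mul_inv_cancel₀ (by positivity), one_smul]

theorem gc_zero {p : A → E} (hv : ∀ a, Fc p {a}) {j a : A} : gc p j a = 0 ↔ a = j := by
  constructor
  · intro h
    have := gc_smul p j a
    rw [h, smul_zero, sub_eq_zero] at this
    exact fc_inj hv this
  · rintro rfl; exact gc_self p a

theorem gc_fc {p : A → E} (hv : ∀ a, Fc p {a}) (j : A) (F : Set A) :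
    IsFc (gc p j) F ↔ Fc p F ∧ j ∈ F := by
  constructor
  · rintro ⟨n, h1, h2⟩
    have hj : j ∈ F := by
      by_contra h
      have := h2 j h
      rw [gc_self, map_zero] at this
      exact lt_irrefl _ this
    refine ⟨⟨n, n (p j), ?_, ?_⟩, hj⟩
    · intro a ha
      have := congrArg n (gc_smul p j a)
      rw [map_sub, map_smul, h1 a ha, smul_zero] at this
      linarith
    · intro a ha
      have := congrArg n (gc_smul p j a)
      rw [map_sub, map_smul, smul_eq_mul] at this
      have hne : p a - p j ≠ 0 := fun h => ha (by
        rw [fc_inj hv (sub_eq_zero.1 h)]; exact hj)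
      have := mul_pos (pow_pos (norm_pos_iff.2 hne) 2) (h2 a ha)
      linarith
  · rintro ⟨⟨n, c, h1, h2⟩, hj⟩
    refine ⟨n, ?_, ?_⟩
    · intro a ha
      unfold gc
      rw [map_smul, map_sub, h1 a ha, h1 j hj, sub_self, smul_zero]
    · intro a ha
      unfold gc
      rw [map_smul, map_sub, h1 j hj, smul_eq_mul]
      have hne : p a - p j ≠ 0 := fun h => ha (by
        rw [fc_inj hv (sub_eq_zero.1 h)]; exact hj)
      have := h2 a ha
      exact mul_pos (inv_pos.2 (pow_pos (norm_pos_iff.2 hne) 2)) (by linarith)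

theorem gc_pointed {p : A → E} (hv : ∀ a, Fc p {a}) (j : A) : Pointed (gc p j) := by
  unfold Pointed
  rw [gc_fc hv]
  have : {a | gc p j a = 0} = {j} := by
    ext a; exact gc_zero hv
  rw [this]
  exact ⟨hv j, rfl⟩

theorem gc_bd {p : A → E} (hv : ∀ a, Fc p {a}) (j a : A) : Bd (gc p j) a ↔ Cf p j a := by
  unfold Bd Cf
  simp only [gc_fc hv]
  constructor
  · rintro ⟨F, ⟨h1, h2⟩, h3, h4⟩; exact ⟨F, h1, h3, h2, h4⟩
  · rintro ⟨F, h1, h3, h2, h4⟩; exact ⟨F, ⟨h1, h2⟩, h3, h4⟩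

theorem gc_span (p : A → E) (j : A) :
    Submodule.span ℝ (range (gc p j)) = vectorSpan ℝ (range p) := by
  rw [vectorSpan_range_eq_span_range_vsub_right ℝ p j]
  apply le_antisymm
  · rw [Submodule.span_le]
    rintro _ ⟨a, rfl⟩
    exact Submodule.smul_mem _ _ (Submodule.subset_span ⟨a, rfl⟩)
  · rw [Submodule.span_le]
    rintro _ ⟨a, rfl⟩
    have := gc_smul p j a
    show p a - p j ∈ _
    rw [this]
    exact Submodule.smul_mem _ _ (Submodule.subset_span ⟨a, rfl⟩)

theorem gc_rk (p : A → E) (j : A) :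
    rk (gc p j) = Module.finrank ℝ (vectorSpan ℝ (range p)) := by
  unfold rk; rw [gc_span]

theorem inner_of_dist (x y : E) : inner ℝ x y = (‖x‖ ^ 2 + ‖y‖ ^ 2 - ‖x - y‖ ^ 2) / 2 := by
  rw [@norm_sub_sq_real]; ring

theorem gc_inner (p : A → E) (j a b : A) : inner ℝ (gc p j a) (gc p j b) =
    (‖p a - p j‖ ^ 2)⁻¹ * (‖p b - p j‖ ^ 2)⁻¹ *
      ((‖p a - p j‖ ^ 2 + ‖p b - p j‖ ^ 2 - ‖p a - p b‖ ^ 2) / 2) := by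
  unfold gc
  rw [inner_smul_left, inner_smul_right, inner_of_dist (p a - p j), sub_sub_sub_cancel_right]
  simp; ring

theorem Dat.pr {p q : A → E} {c c' : E} {ρ ρ' : ℝ} (D : Dat p q c c' ρ ρ') (j : A) :
    Pr (gc p j) (gc q j) := by
  refine ⟨?_, ?_, gc_pointed D.v j, gc_pointed D.symm.v j⟩
  · intro F
    rw [gc_fc D.v, gc_fc D.symm.v, D.fc]
  · intro F hF hne a ha b hb
    obtain ⟨h1, hj⟩ := (gc_fc D.v j F).1 hF
    rw [gc_inner, gc_inner, D.loc a j ⟨F, h1, hne, ha, hj⟩, D.loc b j ⟨F, h1, hne, hb, hj⟩,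
      D.loc a b ⟨F, h1, hne, ha, hb⟩]

theorem gc_norm (p : A → E) (j a : A) : ‖gc p j a‖ = ‖p a - p j‖⁻¹ := by
  unfold gc
  rw [norm_smul, Real.norm_of_nonneg (by positivity)]
  by_cases h : ‖p a - p j‖ = 0
  · rw [h]; simp
  · field_simp

theorem gc_dist {p : A → E} {j a b : A} (ha : p a ≠ p j) (hb : p b ≠ p j) :
    ‖gc p j a - gc p j b‖ = ‖p a - p b‖ / (‖p a - p j‖ * ‖p b - p j‖) := by
  have h1 : 0 < ‖p a - p j‖ := norm_pos_iff.2 (sub_ne_zero.2 ha)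
  have h2 : 0 < ‖p b - p j‖ := norm_pos_iff.2 (sub_ne_zero.2 hb)
  refine (pow_left_inj₀ (norm_nonneg _) (by positivity) two_ne_zero).1 ?_
  rw [@norm_sub_sq_real, gc_inner, gc_norm, gc_norm]
  field_simp
  ring

noncomputable def hc {A E : Type} [NormedAddCommGroup E] [InnerProductSpace ℝ E] (p : A → E)
    (c : E) (j : A) : E →ₗ[ℝ] ℝ := (2 : ℝ) • innerₛₗ ℝ (c - p j)

theorem hc_apply (p : A → E) (c : E) (j : A) (x : E) : hc p c j x = 2 * inner ℝ (c - p j) x := by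
  simp [hc, inner_sub_left]

theorem ins_inner {p : A → E} {c : E} {ρ : ℝ} (hi : ∀ a, ‖p a - c‖ = ρ) (j a : A) :
    2 * inner ℝ (c - p j) (p a - p j) = ‖p a - p j‖ ^ 2 := by
  have h1 : p a - c = (p a - p j) - (c - p j) := by abel
  have h2 : ‖p a - c‖ ^ 2 = ‖c - p j‖ ^ 2 := by rw [norm_sub_rev c, hi, hi]
  rw [h1, @norm_sub_sq_real, real_inner_comm] at h2
  linarith

theorem hc_one {p : A → E} {c : E} {ρ : ℝ} (hi : ∀ a, ‖p a - c‖ = ρ) (j a : A)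
    (h : gc p j a ≠ 0) : hc p c j (gc p j a) = 1 := by
  have h0 : p a - p j ≠ 0 := by
    intro h0; apply h; unfold gc; rw [h0, smul_zero]
  have h1 : 0 < ‖p a - p j‖ := norm_pos_iff.2 h0
  rw [hc_apply]
  unfold gc
  rw [inner_smul_right]
  have := ins_inner hi j a
  field_simp
  linarith

/-- the final contradiction -/
theorem ins_diff {p : A → E} {c : E} {ρ : ℝ} (hi : ∀ a, ‖p a - c‖ = ρ) (i j b : A) :
    2 * inner ℝ (c - p i) (gc p j b) = (‖p b - p j‖ ^ 2)⁻¹ * (‖p b - p i‖ ^ 2 - ‖p j - p i‖ ^ 2) := by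
  rw [← ins_inner hi i b, ← ins_inner hi i j]
  unfold gc
  rw [inner_smul_right, ← sub_sub_sub_cancel_right (p b) (p j) (p i), inner_sub_right (c - p i)]
  ring

theorem pick {p q : A → E} (h : ∃ i j, ‖q i - q j‖ < ‖p i - p j‖) (hq : Function.Injective q) :
    ∃ i j, i ≠ j ∧ 1 < ‖p i - p j‖ / ‖q i - q j‖ ∧
      (∀ a b, ‖p a - p b‖ / ‖q a - q b‖ ≤ ‖p i - p j‖ / ‖q i - q j‖) ∧
      ∀ a b, ‖p a - p b‖ / ‖q a - q b‖ = ‖p i - p j‖ / ‖q i - q j‖ → ‖p i - p j‖ ≤ ‖p a - p b‖ := by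
  obtain ⟨i0, j0, h0⟩ := h
  have hne : i0 ≠ j0 := by rintro rfl; simp at h0
  have hpos : 0 < ‖q i0 - q j0‖ := norm_pos_iff.2 (sub_ne_zero.2 (hq.ne hne))
  let lam : A × A → ℝ := fun x => ‖p x.1 - p x.2‖ / ‖q x.1 - q x.2‖
  obtain ⟨x, -, hx⟩ := (finite_univ (α := A × A)).exists_maximalFor lam univ ⟨(i0, j0), trivial⟩
  have hx' : ∀ y, lam y ≤ lam x := by
    intro y
    rcases le_total (lam y) (lam x) with h | h
    · exact h
    · exact hx trivial h
  obtain ⟨y, hy1, hy⟩ := (toFinite {y | lam y = lam x}).exists_minimalFor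
    (fun x : A × A => ‖p x.1 - p x.2‖) _ ⟨x, rfl⟩
  replace hy1 : lam y = lam x := hy1
  have h1 : 1 < lam y := by
    rw [hy1]
    refine lt_of_lt_of_le ?_ (hx' (i0, j0))
    exact (one_lt_div hpos).2 h0
  refine ⟨y.1, y.2, ?_, h1, ?_, ?_⟩
  · intro h
    have : lam y = 0 := by simp [lam, h]
    linarith
  · intro a b
    have := hx' (a, b)
    rw [← hy1] at this
    exact this
  · intro a b hab
    rcases le_total ‖p y.1 - p y.2‖ ‖p a - p b‖ with h | h
    · exact h
    · exact hy (j := (a, b)) (hab.trans hy1) h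

/-- Comparison of inverted distances at a maximal pair. -/
theorem max_cmp {p q : A → E} {c c' : E} {ρ ρ' : ℝ} (D : Dat p q c c' ρ ρ') {i j b : A}
    (hij : i ≠ j) (hmax : ∀ a b, ‖p a - p b‖ / ‖q a - q b‖ ≤ ‖p i - p j‖ / ‖q i - q j‖)
    (hb : Cf p j b) (hbj : b ≠ j) (hbi : b ≠ i) :
    ‖gc p j b - gc p j i‖ ≤ ‖gc q j b - gc q j i‖ ∧
    (‖gc p j b - gc p j i‖ = ‖gc q j b - gc q j i‖ →
      ‖p b - p i‖ / ‖q b - q i‖ = ‖p i - p j‖ / ‖q i - q j‖) := by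
  have hp := fc_inj D.v
  have hq := fc_inj D.symm.v
  rw [gc_dist (hp.ne hbj) (hp.ne hij), gc_dist (hq.ne hbj) (hq.ne hij), D.loc b j hb.symm]
  have h1 : 0 < ‖q b - q j‖ := norm_pos_iff.2 (sub_ne_zero.2 (hq.ne hbj))
  have h2 : 0 < ‖q i - q j‖ := norm_pos_iff.2 (sub_ne_zero.2 (hq.ne hij))
  have h3 : 0 < ‖p i - p j‖ := norm_pos_iff.2 (sub_ne_zero.2 (hp.ne hij))
  have h4 : 0 < ‖q b - q i‖ := norm_pos_iff.2 (sub_ne_zero.2 (hq.ne hbi))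
  constructor
  · have := hmax b i
    rw [div_le_div_iff₀ h4 h2] at this
    rw [div_le_div_iff₀ (by positivity) (by positivity)]
    nlinarith
  · intro h
    rw [div_eq_div_iff (by positivity) (by positivity)] at h
    rw [div_eq_div_iff (by positivity) (by positivity)]
    have : ‖q b - q j‖ * (‖p b - p i‖ * ‖q i - q j‖) = ‖q b - q j‖ * (‖p i - p j‖ * ‖q b - q i‖) := by
      linarith
    exact mul_left_cancel₀ h1.ne' this

theorem step5 {p q : A → E} {c c' : E} {ρ ρ' : ℝ} (D : Dat p q c c' ρ ρ')
    (hr : 3 ≤ Module.finrank ℝ (vectorSpan ℝ (range p))) (i j : A) :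
    ‖p i - p j‖ ≤ ‖q i - q j‖ := by
  by_contra hlt
  push Not at hlt
  have hp := fc_inj D.v
  have hq := fc_inj D.symm.v
  obtain ⟨i, j, hij, h1, hmax, hmin⟩ := pick ⟨i, j, hlt⟩ hq
  have hg : rk (gc p j) = _ := gc_rk p j
  have H := D.pr j
  have hpq : ‖p i - p j‖ ≠ ‖q i - q j‖ := by
    intro h
    rw [h, div_self (norm_ne_zero_iff.2 (sub_ne_zero.2 (hq.ne hij)))] at h1
    exact lt_irrefl _ h1
  have hnb : ¬ Bd (gc p j) i := by
    rw [gc_bd D.v]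
    exact fun h => hpq (D.loc i j h.symm)
  have hnb' : ¬ Bd (gc q j) i := fun h => hnb (H.bd_iff.2 h)
  have hi0 : gc p j i ≠ 0 := fun h => hij ((gc_zero D.v).1 h)
  have hi0' : gc q j i ≠ 0 := fun h => hij ((gc_zero D.symm.v).1 h)
  have hl : ∀ b, b ≠ j → lamE (gc p j i) (hc p c j) (gc p j b) =
      ‖gc p j b - gc p j i‖ ^ 2 - ‖gc p j b‖ ^ 2 := fun b hb =>
    lamE_norm _ (hc_one D.ins j b (fun h => hb ((gc_zero D.v).1 h)))
  have hl' : ∀ b, b ≠ j → lamE (gc q j i) (hc q c' j) (gc q j b) =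
      ‖gc q j b - gc q j i‖ ^ 2 - ‖gc q j b‖ ^ 2 := fun b hb =>
    lamE_norm _ (hc_one D.ins' j b (fun h => hb ((gc_zero D.symm.v).1 h)))
  have key := W_euc H (by omega) (hc_one D.ins j) (hc_one D.ins' j) (intr_of_not_bd hnb)
    (intr_of_not_bd hnb') (hc_one D.ins j i hi0) (hc_one D.ins' j i hi0') (by
      intro b hb
      by_cases hbj : b = j
      · rw [hbj, gc_self, gc_self, map_zero, map_zero]
      · rw [hl b hbj, hl' b hbj, H.norm_bd hb]
        have hbi : b ≠ i := fun h => hnb (h ▸ hb)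
        have := (max_cmp D hij hmax ((gc_bd D.v j b).1 hb) hbj hbi).1
        have := pow_le_pow_left₀ (norm_nonneg _) this 2
        linarith)
  have hfin := lemmaB H.p (by omega) ((2 : ℝ) • innerₛₗ ℝ (c - p i)) (by
    intro b hb
    by_cases hbj : b = j
    · rw [hbj, gc_self, map_zero]
    · have hbi : b ≠ i := fun h => hnb (h ▸ hb)
      have k := key b hb
      rw [hl b hbj, hl' b hbj, H.norm_bd hb] at k
      have k2 : ‖gc p j b - gc p j i‖ = ‖gc q j b - gc q j i‖ :=
        (pow_left_inj₀ (norm_nonneg _) (norm_nonneg _) two_ne_zero).1 (by linarith)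
      have k3 := hmin b i ((max_cmp D hij hmax ((gc_bd D.v j b).1 hb) hbj hbi).2 k2)
      show 0 ≤ 2 * inner ℝ (c - p i) (gc p j b)
      rw [ins_diff D.ins]
      rw [norm_sub_rev] at k3
      have := pow_le_pow_left₀ (norm_nonneg _) k3 2
      exact mul_nonneg (by positivity) (by linarith)) i
  replace hfin : 0 ≤ 2 * inner ℝ (c - p i) (gc p j i) := hfin
  rw [ins_diff D.ins, sub_self, norm_zero, norm_sub_rev (p j)] at hfin
  have h3 : 0 < ‖p i - p j‖ := norm_pos_iff.2 (sub_ne_zero.2 (hp.ne hij))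
  have : (‖p i - p j‖ ^ 2)⁻¹ * (0 ^ 2 - ‖p i - p j‖ ^ 2) = -1 := by field_simp; ring
  linarith

end M1
end Insc
end PartM1

section PartM2
namespace Insc
open Set
section M2
variable {A : Type} [Finite A] {E : Type} [NormedAddCommGroup E] [InnerProductSpace ℝ E]
  [FiniteDimensional ℝ E]

/-- Two independent rays generate a cone of rank two. -/
theorem gen_two {g : A → E} (hr : rk g = 2) {a b : A} (ha : IsRay g a) (hb : IsRay g b)
    (hab : b ∉ lnS g a) (hba : a ∉ lnS g b) :
    (∀ Z ∈ Submodule.span ℝ (range g), ∃ x y : ℝ, Z = x • g a + y • g b) ∧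
    ∀ d, ∃ x y : ℝ, 0 ≤ x ∧ 0 ≤ y ∧ g d = x • g a + y • g b := by
  have hli : LinearIndependent ℝ ![g a, g b] := by
    rw [LinearIndependent.pair_iff]
    intro s t h
    have ht : t = 0 := by
      by_contra ht
      apply hab
      refine ⟨-(t⁻¹ * s), ?_⟩
      have : t • g b = -(s • g a) := by rw [eq_neg_iff_add_eq_zero, add_comm]; exact h
      rw [neg_smul, mul_smul, ← smul_neg, ← this, smul_smul, inv_mul_cancel₀ ht, one_smul]
    rw [ht, zero_smul, add_zero] at h
    exact ⟨(smul_eq_zero.1 h).resolve_right ha.1, ht⟩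
  have hsp : Submodule.span ℝ (range ![g a, g b]) = Submodule.span ℝ (range g) := by
    apply Submodule.eq_of_le_of_finrank_eq
    · rw [Submodule.span_le]
      rintro _ ⟨k, rfl⟩
      fin_cases k
      · exact Submodule.subset_span ⟨a, rfl⟩
      · exact Submodule.subset_span ⟨b, rfl⟩
    · rw [finrank_span_eq_card hli]
      unfold rk at hr
      rw [hr]; simp
  have h1 : ∀ Z ∈ Submodule.span ℝ (range g), ∃ x y : ℝ, Z = x • g a + y • g b := by
    intro Z hZ
    rw [← hsp] at hZ
    have : range ![g a, g b] = {g a, g b} := by simp [pair_comm]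
    rw [this, Submodule.mem_span_pair] at hZ
    obtain ⟨x, y, h⟩ := hZ
    exact ⟨x, y, h.symm⟩
  refine ⟨h1, ?_⟩
  intro d
  obtain ⟨x, y, h⟩ := h1 (g d) (Submodule.subset_span ⟨d, rfl⟩)
  have pos : ∀ {a b : A} {x y : ℝ}, IsRay g a → b ∉ lnS g a → g d = x • g a + y • g b → 0 ≤ y := by
    intro a b x y ha hab h
    obtain ⟨n, h1, h2⟩ := ha.2
    have e := congrArg n h
    rw [map_add, map_smul, map_smul, h1 a (self_mem_lnS g a), smul_zero, zero_add,
      smul_eq_mul] at e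
    have hd : 0 ≤ n (g d) := by
      by_cases hd : d ∈ lnS g a
      · rw [h1 d hd]
      · exact (h2 d hd).le
    rw [e] at hd
    exact nonneg_of_mul_nonneg_left hd (h2 b hab)
  exact ⟨x, y, pos hb hba (by rw [h, add_comm]), pos ha hab h, h⟩

/-- Local picture of an inscribed polygon at the vertex `j`. -/
structure Loc {A E : Type} [NormedAddCommGroup E] [InnerProductSpace ℝ E] (p : A → E)
    (j a b : A) : Prop where
  aj : a ≠ j
  bj : b ≠ j
  ab : a ≠ b
  ca : Cf p j a
  cb : Cf p j b
  sp : ∀ Z ∈ vectorSpan ℝ (range p), ∃ x y : ℝ, Z = x • gc p j a + y • gc p j b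
  seg : ∀ d, d ≠ j → ∃ x y : ℝ, 0 ≤ x ∧ 0 ≤ y ∧ x + y = 1 ∧ gc p j d = x • gc p j a + y • gc p j b

theorem Loc.symm {p : A → E} {j a b : A} (L : Loc p j a b) : Loc p j b a := by
  refine ⟨L.bj, L.aj, L.ab.symm, L.cb, L.ca, ?_, ?_⟩
  · intro Z hZ
    obtain ⟨x, y, h⟩ := L.sp Z hZ
    exact ⟨y, x, by rw [h, add_comm]⟩
  · intro d hd
    obtain ⟨x, y, hx, hy, hxy, h⟩ := L.seg d hd
    exact ⟨y, x, hy, hx, by rw [add_comm]; exact hxy, by rw [h, add_comm]⟩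

theorem mk_loc {p : A → E} (hv : ∀ a, Fc p {a}) {c : E} {ρ : ℝ} (hi : ∀ a, ‖p a - c‖ = ρ)
    (hr : Module.finrank ℝ (vectorSpan ℝ (range p)) = 2) {j a b : A}
    (ha : IsRay (gc p j) a) (hb : IsRay (gc p j) b)
    (hab : b ∉ lnS (gc p j) a) (hba : a ∉ lnS (gc p j) b) : Loc p j a b := by
  have hg : rk (gc p j) = 2 := by rw [gc_rk, hr]
  obtain ⟨h1, h2⟩ := gen_two hg ha hb hab hba
  refine ⟨fun h => ha.1 ((gc_zero hv).2 h), fun h => hb.1 ((gc_zero hv).2 h), ?_,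
    (gc_bd hv j a).1 (ray_bd hg.ge ha), (gc_bd hv j b).1 (ray_bd hg.ge hb), ?_, ?_⟩
  · rintro rfl
    exact hab (self_mem_lnS _ _)
  · rw [← gc_span p j]; exact h1
  · intro d hd
    obtain ⟨x, y, hx, hy, h⟩ := h2 d
    refine ⟨x, y, hx, hy, ?_, h⟩
    have := hc_one hi j d (fun h => hd ((gc_zero hv).1 h))
    rw [h, map_add, map_smul, map_smul, hc_one hi j a ha.1, hc_one hi j b hb.1] at this
    simpa using this

theorem Dat.vs_rk {p q : A → E} {c c' : E} {ρ ρ' : ℝ} (D : Dat p q c c' ρ ρ') (j : A) :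
    Module.finrank ℝ (vectorSpan ℝ (range p)) = Module.finrank ℝ (vectorSpan ℝ (range q)) := by
  rw [← gc_rk p j, ← gc_rk q j, (D.pr j).rk_eq]

theorem Dat.exists_loc {p q : A → E} {c c' : E} {ρ ρ' : ℝ} (D : Dat p q c c' ρ ρ')
    (hr : Module.finrank ℝ (vectorSpan ℝ (range p)) = 2) (j : A) :
    ∃ a b, Loc p j a b ∧ Loc q j a b := by
  have H := D.pr j
  have hg : rk (gc p j) = 2 := by rw [gc_rk, hr]
  obtain ⟨a, b, ha, hb, hli, -⟩ := rank_two H.p hg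
  have hab : b ∉ lnS (gc p j) a := by
    rintro ⟨x, hx⟩
    have := hli (-x) 1 (by rw [hx]; simp)
    exact one_ne_zero this.2
  have hba : a ∉ lnS (gc p j) b := by
    rintro ⟨x, hx⟩
    have := hli 1 (-x) (by rw [hx]; simp)
    exact one_ne_zero this.1
  refine ⟨a, b, mk_loc D.v D.ins hr ha hb hab hba,
    mk_loc D.symm.v D.ins' (by rw [← D.vs_rk j, hr]) (H.ray ha).1 (H.ray hb).1 ?_ ?_⟩
  · rw [(H.ray ha).2]; exact hab
  · rw [(H.ray hb).2]; exact hba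

/-- The foot of the perpendicular. -/
theorem foot {p : A → E} (hv : ∀ a, Fc p {a}) {c : E} {ρ : ℝ} (hi : ∀ a, ‖p a - c‖ = ρ)
    {j a b : A} (L : Loc p j a b) {s t : A} (hst : s ≠ t)
    (hm : ∀ x y, Cf p x y → ‖p x - p y‖ ≤ ‖p s - p t‖) (hs : s ≠ j) (ht : t ≠ j)
    {o : E} (ho : ∀ d, d ≠ j → inner ℝ o (gc p j d - o) = 0) {x y : ℝ} (hxy : x + y = 1)
    (hoe : o = x • gc p j a + y • gc p j b) : 0 ≤ y := by
  by_contra hy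
  push Not at hy
  have hp := fc_inj hv
  have hoa : o - gc p j a = y • (gc p j b - gc p j a) := by
    have : x = 1 - y := by linarith
    rw [hoe, this]; module
  have hab0 : gc p j b - gc p j a ≠ 0 := by
    intro h
    have : ‖gc p j b - gc p j a‖ = 0 := by rw [h, norm_zero]
    rw [gc_dist (hp.ne L.bj) (hp.ne L.aj)] at this
    have h1 := norm_pos_iff.2 (sub_ne_zero.2 (hp.ne L.aj))
    have h2 := norm_pos_iff.2 (sub_ne_zero.2 (hp.ne L.bj))
    have h3 := norm_pos_iff.2 (sub_ne_zero.2 (hp.ne L.ab.symm))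
    have : 0 < ‖p b - p a‖ / (‖p b - p j‖ * ‖p a - p j‖) := by positivity
    linarith
  have hpos : 0 < inner ℝ (gc p j a) (gc p j b - gc p j a) := by
    have h1 := ho a L.aj
    have h2 := ho b L.bj
    have h3 : inner ℝ o (gc p j b - gc p j a) = 0 := by
      have : gc p j b - gc p j a = (gc p j b - o) - (gc p j a - o) := by abel
      rw [this, inner_sub_right, h1, h2, sub_zero]
    have h4 : gc p j a = o - y • (gc p j b - gc p j a) := by rw [← hoa]; abel
    have h5 : inner ℝ (gc p j a) (gc p j b - gc p j a) =
        inner ℝ (o - y • (gc p j b - gc p j a)) (gc p j b - gc p j a) := by rw [← h4]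
    rw [h5, inner_sub_left, h3, inner_smul_left, real_inner_self_eq_norm_sq]
    have := norm_pos_iff.2 hab0
    simp only [RCLike.conj_to_real]
    have : 0 < ‖gc p j b - gc p j a‖ ^ 2 := by positivity
    nlinarith
  set m := (1/2 : ℝ) • (p j + p a) with hm0
  have hla : 0 < ‖p a - p j‖ := norm_pos_iff.2 (sub_ne_zero.2 (hp.ne L.aj))
  -- all vertices lie in the disc
  have hle : ∀ d, d ≠ j → d ≠ a → ‖p d - m‖ < ‖p a - p j‖ / 2 := by
    intro d hd hda
    obtain ⟨u, w, hu, hw, huw, hde⟩ := L.seg d hd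
    have hld : 0 < ‖p d - p j‖ := norm_pos_iff.2 (sub_ne_zero.2 (hp.ne hd))
    have hw0 : 0 < w := by
      rcases hw.lt_or_eq with h | h
      · exact h
      · exfalso
        have hu1 : u = 1 := by linarith
        rw [← h, hu1, zero_smul, one_smul, add_zero] at hde
        have h0 : ‖gc p j d - gc p j a‖ = 0 := by rw [hde, sub_self, norm_zero]
        rw [gc_dist (hp.ne hd) (hp.ne L.aj)] at h0
        have h3 := norm_pos_iff.2 (sub_ne_zero.2 (hp.ne hda))
        have : 0 < ‖p d - p a‖ / (‖p d - p j‖ * ‖p a - p j‖) := by positivity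
        linarith
    have h1 : ‖gc p j a‖ ^ 2 < inner ℝ (gc p j a) (gc p j d) := by
      have : gc p j d = gc p j a + w • (gc p j b - gc p j a) := by
        have : u = 1 - w := by linarith
        rw [hde, this]; module
      rw [this, inner_add_right, inner_smul_right, real_inner_self_eq_norm_sq]
      have := mul_pos hw0 hpos
      linarith
    rw [gc_inner, gc_norm] at h1
    have h2 : ‖p d - p j‖ ^ 2 < (‖p a - p j‖ ^ 2 + ‖p d - p j‖ ^ 2 - ‖p a - p d‖ ^ 2) / 2 := by
      have h3 := mul_lt_mul_of_pos_right h1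
        (show 0 < ‖p a - p j‖ ^ 2 * ‖p d - p j‖ ^ 2 by positivity)
      have e1 : (‖p a - p j‖⁻¹) ^ 2 * (‖p a - p j‖ ^ 2 * ‖p d - p j‖ ^ 2) = ‖p d - p j‖ ^ 2 := by
        field_simp
      have e2 : (‖p a - p j‖ ^ 2)⁻¹ * (‖p d - p j‖ ^ 2)⁻¹ *
          ((‖p a - p j‖ ^ 2 + ‖p d - p j‖ ^ 2 - ‖p a - p d‖ ^ 2) / 2) *
          (‖p a - p j‖ ^ 2 * ‖p d - p j‖ ^ 2) =
          (‖p a - p j‖ ^ 2 + ‖p d - p j‖ ^ 2 - ‖p a - p d‖ ^ 2) / 2 := by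
        field_simp
      rw [e1, e2] at h3
      exact h3
    have e3 : p d - m = (p d - p j) - (1/2 : ℝ) • (p a - p j) := by
      rw [hm0]; module
    have e4 : ‖p d - m‖ ^ 2 < (‖p a - p j‖ / 2) ^ 2 := by
      rw [e3, @norm_sub_sq_real, inner_smul_right, norm_smul, real_inner_comm,
        inner_of_dist (p a - p j), sub_sub_sub_cancel_right]
      norm_num
      nlinarith
    exact lt_of_pow_lt_pow_left₀ 2 (by positivity) e4
  have hlea : ‖p a - m‖ = ‖p a - p j‖ / 2 := by
    have : p a - m = (1/2 : ℝ) • (p a - p j) := by rw [hm0]; module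
    rw [this, norm_smul]; norm_num; ring
  have hle' : ∀ d, d ≠ j → ‖p d - m‖ ≤ ‖p a - p j‖ / 2 := by
    intro d hd
    by_cases h : d = a
    · rw [h, hlea]
    · exact (hle d hd h).le
  have h1 := hm a j L.ca.symm
  have h2 : ‖p s - p t‖ ≤ ‖p s - m‖ + ‖p t - m‖ := by
    rw [norm_sub_rev (p t)]
    calc ‖p s - p t‖ = ‖(p s - m) + (m - p t)‖ := by congr 1; abel
      _ ≤ _ := norm_add_le _ _
  by_cases hsa : s = a
  · have := hle t ht (fun h => hst (hsa.trans h.symm))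
    have := hle' s hs
    linarith
  · have := hle s hs hsa
    have := hle' t ht
    linarith

/-- The formula for the length of the short diagonal. -/
theorem diag {p : A → E} (hv : ∀ a, Fc p {a}) {c : E} {ρ : ℝ} (hi : ∀ a, ‖p a - c‖ = ρ)
    (hcs : ∀ a, c - p a ∈ vectorSpan ℝ (range p))
    {j a b : A} (L : Loc p j a b) {s t : A} (hst : s ≠ t)
    (hm : ∀ x y, Cf p x y → ‖p x - p y‖ ≤ ‖p s - p t‖) (hs : s ≠ j) (ht : t ≠ j) :
    0 < ρ ∧ ∃ u w : ℝ, 0 ≤ u ∧ 0 ≤ w ∧ ‖gc p j a - gc p j b‖ = u + w ∧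
      u ^ 2 = (‖p a - p j‖⁻¹) ^ 2 - (1 / (2 * ρ)) ^ 2 ∧
      w ^ 2 = (‖p b - p j‖⁻¹) ^ 2 - (1 / (2 * ρ)) ^ 2 := by
  have hp := fc_inj hv
  have hn0 : ∀ d, d ≠ j → gc p j d ≠ 0 := fun d hd h => hd ((gc_zero hv).1 h)
  have hZn : ‖c - p j‖ = ρ := by rw [norm_sub_rev, hi]
  have hρ : 0 < ρ := by
    rcases (norm_nonneg (c - p j)).lt_or_eq with h | h
    · rw [← hZn]; exact h
    · exfalso
      have h1 := hc_one hi j a (hn0 a L.aj)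
      rw [hc_apply, norm_eq_zero.1 h.symm, inner_zero_left] at h1
      norm_num at h1
  refine ⟨hρ, ?_⟩
  set o : E := (1 / (2 * ρ ^ 2)) • (c - p j) with hod
  have hoo : inner ℝ o o = (1 / (2 * ρ)) ^ 2 := by
    rw [hod, inner_smul_left, inner_smul_right, real_inner_self_eq_norm_sq, hZn]
    simp only [RCLike.conj_to_real]
    field_simp
  have hog : ∀ d, d ≠ j → inner ℝ o (gc p j d) = (1 / (2 * ρ)) ^ 2 := by
    intro d hd
    have h1 := hc_one hi j d (hn0 d hd)
    rw [hc_apply] at h1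
    rw [hod, inner_smul_left]
    simp only [RCLike.conj_to_real]
    field_simp
    linarith
  have ho : ∀ d, d ≠ j → inner ℝ o (gc p j d - o) = 0 := by
    intro d hd
    rw [inner_sub_right, hog d hd, hoo, sub_self]
  obtain ⟨x, y, hoe⟩ := L.sp o (Submodule.smul_mem _ _ (hcs j))
  have hxy : x + y = 1 := by
    have h1 := congrArg (fun z => inner ℝ o z) hoe
    replace h1 : inner ℝ o o = inner ℝ o (x • gc p j a + y • gc p j b) := h1
    rw [hoo, inner_add_right, inner_smul_right, inner_smul_right, hog a L.aj, hog b L.bj] at h1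
    have : (1 / (2 * ρ)) ^ 2 ≠ 0 := by positivity
    have h2 : (1 / (2 * ρ)) ^ 2 * (x + y) = (1 / (2 * ρ)) ^ 2 * 1 := by linarith
    exact mul_left_cancel₀ this h2
  have hy := foot hv hi L hst hm hs ht ho hxy hoe
  have hx := foot hv hi L.symm hst hm hs ht ho (x := y) (y := x) (by linarith)
    (by rw [hoe, add_comm])
  have hsq : ∀ d, d ≠ j → ‖gc p j d - o‖ ^ 2 = (‖p d - p j‖⁻¹) ^ 2 - (1 / (2 * ρ)) ^ 2 := by
    intro d hd
    rw [@norm_sub_sq_real, gc_norm, real_inner_comm, hog d hd, ← real_inner_self_eq_norm_sq, hoo]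
    ring
  refine ⟨‖gc p j a - o‖, ‖gc p j b - o‖, norm_nonneg _, norm_nonneg _, ?_, hsq a L.aj, hsq b L.bj⟩
  have e1 : gc p j a - o = y • (gc p j a - gc p j b) := by
    have : x = 1 - y := by linarith
    rw [hoe, this]; module
  have e2 : gc p j b - o = (-x) • (gc p j a - gc p j b) := by
    have : y = 1 - x := by linarith
    rw [hoe, this]; module
  rw [e1, e2, norm_smul, norm_smul, norm_neg, Real.norm_of_nonneg hx, Real.norm_of_nonneg hy,
    ← add_mul, add_comm y, hxy, one_mul]

theorem seg_add {u v w : E} {x y : ℝ} (hx : 0 ≤ x) (hy : 0 ≤ y) (hxy : x + y = 1)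
    (h : w = x • u + y • v) : ‖u - v‖ = ‖u - w‖ + ‖v - w‖ := by
  have e1 : u - w = y • (u - v) := by
    have : x = 1 - y := by linarith
    rw [h, this]; module
  have e2 : v - w = (-x) • (u - v) := by
    have : y = 1 - x := by linarith
    rw [h, this]; module
  rw [e1, e2, norm_smul, norm_smul, norm_neg, Real.norm_of_nonneg hx, Real.norm_of_nonneg hy,
    ← add_mul, add_comm y, hxy, one_mul]

theorem polygon {p q : A → E} {c c' : E} {ρ ρ' : ℝ} (D : Dat p q c c' ρ ρ')
    (hr : Module.finrank ℝ (vectorSpan ℝ (range p)) = 2) {s t : A} (hst : s ≠ t) (hcf : Cf p s t)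
    (hm : ∀ x y, Cf p x y → ‖p x - p y‖ ≤ ‖p s - p t‖)
    (hlt : ∃ i j, ‖q i - q j‖ < ‖p i - p j‖) :
    ρ < ρ' ∧ ∃ i j, ‖p i - p j‖ < ‖q i - q j‖ := by
  have hp := fc_inj D.v
  have hq := fc_inj D.symm.v
  have hm' : ∀ x y, Cf q x y → ‖q x - q y‖ ≤ ‖q s - q t‖ := by
    intro x y h
    have h1 := (D.cf x y).2 h
    rw [← D.loc x y h1, ← D.loc s t hcf]
    exact hm x y h1
  have hpick : ∃ i j, (s ≠ j ∧ t ≠ j) ∧ ¬ Cf p j i ∧ i ≠ j ∧ 1 < ‖p i - p j‖ / ‖q i - q j‖ ∧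
      (∀ a b, ‖p a - p b‖ / ‖q a - q b‖ ≤ ‖p i - p j‖ / ‖q i - q j‖) ∧
      ∀ a b, ‖p a - p b‖ / ‖q a - q b‖ = ‖p i - p j‖ / ‖q i - q j‖ →
        ‖p i - p j‖ ≤ ‖p a - p b‖ := by
    obtain ⟨i, j, hij, h1, hmax, hmin⟩ := pick hlt hq
    have hnc : ¬ Cf p i j := by
      intro h
      rw [D.loc i j h, div_self (norm_ne_zero_iff.2 (sub_ne_zero.2 (hq.ne hij)))] at h1
      exact lt_irrefl _ h1
    by_cases hj : s ≠ j ∧ t ≠ j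
    · exact ⟨i, j, hj, fun h => hnc h.symm, hij, h1, hmax, hmin⟩
    · refine ⟨j, i, ?_, hnc, hij.symm, ?_, ?_, ?_⟩
      · constructor
        · rintro rfl
          apply hj
          refine ⟨hij, ?_⟩
          rintro rfl
          exact hnc hcf
        · rintro rfl
          apply hj
          refine ⟨?_, hij⟩
          rintro rfl
          exact hnc hcf.symm
      · rw [norm_sub_rev, norm_sub_rev (q j)]; exact h1
      · rw [norm_sub_rev (p j), norm_sub_rev (q j)]; exact hmax
      · rw [norm_sub_rev (p j), norm_sub_rev (q j)]; exact hmin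
  obtain ⟨i, j, ⟨hs, ht⟩, hnc, hij, h1, hmax, hmin⟩ := hpick
  obtain ⟨a, b, L, L'⟩ := D.exists_loc hr j
  have hai : a ≠ i := by rintro rfl; exact hnc L.ca
  have hbi : b ≠ i := by rintro rfl; exact hnc L.cb
  obtain ⟨x, y, hx, hy, hxy, hi⟩ := L.seg i hij
  obtain ⟨x', y', hx', hy', hxy', hi'⟩ := L'.seg i hij
  have s1 := seg_add hx hy hxy hi
  have s2 := seg_add hx' hy' hxy' hi'
  have ma := max_cmp D hij hmax L.ca L.aj hai
  have mb := max_cmp D hij hmax L.cb L.bj hbi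
  have hlt : ‖gc p j a - gc p j b‖ < ‖gc q j a - gc q j b‖ := by
    have hle : ‖gc p j a - gc p j b‖ ≤ ‖gc q j a - gc q j b‖ := by linarith [ma.1, mb.1]
    refine lt_of_le_of_ne hle ?_
    intro heq
    have ea := ma.2 (by linarith [ma.1, mb.1])
    have eb := mb.2 (by linarith [ma.1, mb.1])
    have pos : ∀ b, ‖p b - p i‖ / ‖q b - q i‖ = ‖p i - p j‖ / ‖q i - q j‖ →
        0 ≤ 2 * inner ℝ (c - p i) (gc p j b) := by
      intro b hb
      have k3 := hmin b i hb
      rw [ins_diff D.ins]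
      rw [norm_sub_rev] at k3
      have := pow_le_pow_left₀ (norm_nonneg _) k3 2
      exact mul_nonneg (by positivity) (by linarith)
    have hfin : 0 ≤ 2 * inner ℝ (c - p i) (gc p j i) := by
      rw [hi, inner_add_right, inner_smul_right, inner_smul_right]
      have e1 := mul_nonneg hx (pos a ea)
      have e2 := mul_nonneg hy (pos b eb)
      linarith
    rw [ins_diff D.ins, sub_self, norm_zero, norm_sub_rev (p j)] at hfin
    have h3 : 0 < ‖p i - p j‖ := norm_pos_iff.2 (sub_ne_zero.2 (hp.ne hij))
    have : (‖p i - p j‖ ^ 2)⁻¹ * (0 ^ 2 - ‖p i - p j‖ ^ 2) = -1 := by field_simp; ring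
    linarith
  constructor
  · by_contra hρ
    push Not at hρ
    obtain ⟨_, u, w, hu, hw, huw, hu2, hw2⟩ := diag D.v D.ins D.cs L hst hm hs ht
    obtain ⟨hρ', u', w', hu', hw', huw', hu2', hw2'⟩ :=
      diag D.symm.v D.ins' D.cs' L' hst hm' hs ht
    rw [← D.loc a j L.ca.symm] at hu2'
    rw [← D.loc b j L.cb.symm] at hw2'
    have hd : (1 / (2 * ρ)) ^ 2 ≤ (1 / (2 * ρ')) ^ 2 := by
      apply pow_le_pow_left₀ (by positivity)
      exact one_div_le_one_div_of_le (by positivity) (by linarith)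
    have g1 : u' ≤ u := le_of_sq_le_sq (by linarith) hu
    have g2 : w' ≤ w := le_of_sq_le_sq (by linarith) hw
    linarith
  · refine ⟨a, b, ?_⟩
    rw [gc_dist (hp.ne L.aj) (hp.ne L.bj), gc_dist (hq.ne L.aj) (hq.ne L.bj),
      D.loc a j L.ca.symm, D.loc b j L.cb.symm] at hlt
    have k1 : 0 < ‖q a - q j‖ := norm_pos_iff.2 (sub_ne_zero.2 (hq.ne L.aj))
    have k2 : 0 < ‖q b - q j‖ := norm_pos_iff.2 (sub_ne_zero.2 (hq.ne L.bj))
    exact (div_lt_div_iff_of_pos_right (by positivity)).1 hlt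

theorem step6 {p q : A → E} {c c' : E} {ρ ρ' : ℝ} (D : Dat p q c c' ρ ρ')
    (hr : Module.finrank ℝ (vectorSpan ℝ (range p)) = 2) (i j : A) :
    ‖p i - p j‖ ≤ ‖q i - q j‖ := by
  by_contra hlt
  push Not at hlt
  obtain ⟨a, b, L, L'⟩ := D.exists_loc hr j
  obtain ⟨⟨s, t⟩, ⟨hst, hcf⟩, hx⟩ := (toFinite {x : A × A | x.1 ≠ x.2 ∧ Cf p x.1 x.2}).exists_maximalFor
    (fun x : A × A => ‖p x.1 - p x.2‖) _ ⟨(a, j), L.aj, L.ca.symm⟩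
  have hm : ∀ x y, Cf p x y → ‖p x - p y‖ ≤ ‖p s - p t‖ := by
    intro x y h
    by_cases hxy : x = y
    · rw [hxy, sub_self, norm_zero]; exact norm_nonneg _
    rcases le_total ‖p x - p y‖ ‖p s - p t‖ with h1 | h1
    · exact h1
    · exact hx (j := (x, y)) ⟨hxy, h⟩ h1
  obtain ⟨h1, h2⟩ := polygon D hr hst hcf hm ⟨i, j, hlt⟩
  have hm' : ∀ x y, Cf q x y → ‖q x - q y‖ ≤ ‖q s - q t‖ := by
    intro x y h
    have h1 := (D.cf x y).2 h
    rw [← D.loc x y h1, ← D.loc s t hcf]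
    exact hm x y h1
  obtain ⟨h3, -⟩ := polygon D.symm (by rw [← D.vs_rk j, hr]) hst ((D.cf s t).1 hcf) hm' h2
  linarith

theorem step1 {p q : A → E} {c c' : E} {ρ ρ' : ℝ} (D : Dat p q c c' ρ ρ')
    (hr : Module.finrank ℝ (vectorSpan ℝ (range p)) ≤ 1) (i j : A) :
    ‖p i - p j‖ ≤ ‖q i - q j‖ := by
  by_cases hij : i = j
  · rw [hij]; simp
  refine (D.ed i j ?_).le
  intro x
  by_cases hxj : x = j
  · exact Or.inr hxj
  left
  have hp := fc_inj D.v
  have hi0 : gc p j i ≠ 0 := fun h => hij ((gc_zero D.v).1 h)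
  have hx0 : gc p j x ≠ 0 := fun h => hxj ((gc_zero D.v).1 h)
  rw [← gc_rk p j] at hr
  unfold rk at hr
  obtain ⟨v, hv⟩ := finrank_le_one_iff.1 hr
  obtain ⟨α, hα⟩ := hv ⟨gc p j i, Submodule.subset_span ⟨i, rfl⟩⟩
  obtain ⟨β, hβ⟩ := hv ⟨gc p j x, Submodule.subset_span ⟨x, rfl⟩⟩
  replace hα := congrArg Subtype.val hα
  replace hβ := congrArg Subtype.val hβ
  simp only [Submodule.coe_smul] at hα hβ
  have k1 := hc_one D.ins j i hi0
  have k2 := hc_one D.ins j x hx0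
  rw [← hα, map_smul, smul_eq_mul] at k1
  rw [← hβ, map_smul, smul_eq_mul] at k2
  have : α = β := by
    have : hc p c j v ≠ 0 := by intro h; rw [h, mul_zero] at k1; norm_num at k1
    exact mul_right_cancel₀ this (k1.trans k2.symm)
  have heq : gc p j x = gc p j i := by rw [← hα, ← hβ, this]
  by_contra hxi
  have h0 : ‖gc p j x - gc p j i‖ = 0 := by rw [heq, sub_self, norm_zero]
  rw [gc_dist (hp.ne hxj) (hp.ne hij)] at h0
  have h1 := norm_pos_iff.2 (sub_ne_zero.2 (hp.ne hxj))
  have h2 := norm_pos_iff.2 (sub_ne_zero.2 (hp.ne hij))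
  have h3 := norm_pos_iff.2 (sub_ne_zero.2 (hp.ne hxi))
  have : 0 < ‖p x - p i‖ / (‖p x - p j‖ * ‖p i - p j‖) := by positivity
  linarith

theorem Dat.le {p q : A → E} {c c' : E} {ρ ρ' : ℝ} (D : Dat p q c c' ρ ρ') (i j : A) :
    ‖p i - p j‖ ≤ ‖q i - q j‖ := by
  rcases Nat.lt_or_ge (Module.finrank ℝ (vectorSpan ℝ (range p))) 2 with h | h
  · exact step1 D (by omega) i j
  · rcases h.eq_or_lt with h | h
    · exact step6 D h.symm i j
    · exact step5 D h i j

theorem Dat.eq {p q : A → E} {c c' : E} {ρ ρ' : ℝ} (D : Dat p q c c' ρ ρ') (i j : A) :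
    ‖p i - p j‖ = ‖q i - q j‖ := le_antisymm (D.le i j) (D.symm.le i j)

end M2
end Insc
end PartM2

section PartM3
namespace Insc
open Set
section M3
variable {A : Type} [Finite A] {E : Type} [NormedAddCommGroup E] [InnerProductSpace ℝ E]
  [FiniteDimensional ℝ E]

theorem fc_restr {p : A → E} {F : Set A} (hF : Fc p F) (T : Set F) :
    Fc (fun x : F => p x) T ↔ Fc p (Subtype.val '' T) := by
  constructor
  · rintro ⟨n, c, h1, h2⟩
    obtain ⟨m, e, k1, k2⟩ := hF
    -- a large multiple of `m`
    have hM : ∃ M : ℝ, ∀ a, a ∉ F → c - n (p a) < M * (m (p a) - e) := by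
      obtain ⟨M, hM⟩ := (Set.finite_range (fun a => (c - n (p a)) / (m (p a) - e))).bddAbove
      refine ⟨M + 1, fun a ha => ?_⟩
      have h3 := hM ⟨a, rfl⟩
      have h4 := k2 a ha
      have h5 : 0 < m (p a) - e := by linarith
      replace h3 : (c - n (p a)) / (m (p a) - e) ≤ M := h3
      rw [div_le_iff₀ h5] at h3
      linarith
    obtain ⟨M, hM⟩ := hM
    refine ⟨n + M • m, c + M * e, ?_, ?_⟩
    · rintro _ ⟨a, ha, rfl⟩
      rw [LinearMap.add_apply, LinearMap.smul_apply, smul_eq_mul, h1 a ha, k1 a a.2]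
    · intro a ha
      rw [LinearMap.add_apply, LinearMap.smul_apply, smul_eq_mul]
      by_cases haF : a ∈ F
      · have := h2 ⟨a, haF⟩ (fun h => ha ⟨_, h, rfl⟩)
        rw [k1 a haF]
        linarith
      · have := hM a haF
        linarith
  · rintro ⟨n, c, h1, h2⟩
    exact ⟨n, c, fun a ha => h1 a ⟨a, ha, rfl⟩, fun a ha => h2 a (fun ⟨b, hb, hba⟩ => ha (by
      rw [← Subtype.val_injective hba]; exact hb))⟩

theorem exists_center {p : A → E} {c : E} {r : ℝ} (hi : ∀ a, ‖p a - c‖ = r) :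
    ∃ c0 ρ, (∀ a, ‖p a - c0‖ = ρ) ∧ ∀ a, c0 - p a ∈ vectorSpan ℝ (range p) := by
  rcases isEmpty_or_nonempty A with hA | ⟨⟨j⟩⟩
  · exact ⟨0, 0, fun a => (hA.false a).elim, fun a => (hA.false a).elim⟩
  set V := vectorSpan ℝ (range p) with hV
  have hpV : ∀ a b, p a - p b ∈ V := fun a b =>
    vsub_mem_vectorSpan ℝ (mem_range_self a) (mem_range_self b)
  set c0 : E := p j + V.starProjection (c - p j) with hc0
  have hcV : ∀ a, c0 - p a ∈ V := by
    intro a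
    have : c0 - p a = (p j - p a) + V.starProjection (c - p j) := by rw [hc0]; abel
    rw [this]
    exact V.add_mem (hpV j a) (Submodule.starProjection_apply_mem V _)
  have hort : ∀ x ∈ V, inner ℝ x (c0 - c) = 0 := by
    intro x hx
    have : c0 - c = -((c - p j) - V.starProjection (c - p j)) := by rw [hc0]; abel
    rw [this, inner_neg_right, neg_eq_zero]
    exact (Submodule.sub_starProjection_mem_orthogonal (K := V) (c - p j)) x hx
  refine ⟨c0, ‖p j - c0‖, ?_, hcV⟩
  have key : ∀ a, ‖p a - c0‖ ^ 2 = r ^ 2 - ‖c0 - c‖ ^ 2 := by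
    intro a
    have h1 : p a - c = (p a - c0) + (c0 - c) := by abel
    have h2 : p a - c0 ∈ V := by rw [← neg_sub]; exact V.neg_mem (hcV a)
    rw [← hi a, h1, @norm_add_sq_real, hort _ h2]
    ring
  intro a
  exact (pow_left_inj₀ (norm_nonneg _) (norm_nonneg _) two_ne_zero).1 (by rw [key, key])

theorem main_fc : ∀ (N : ℕ) {A : Type} [Finite A] (hN : Nat.card A = N) {p q : A → E}
    (hfc : ∀ S, Fc p S ↔ Fc q S) (hv : ∀ a, Fc p {a}) {c c' : E} {r r' : ℝ}
    (hi : ∀ a, ‖p a - c‖ = r) (hi' : ∀ a, ‖q a - c'‖ = r')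
    (he : ∀ a b, Fc p {a, b} → ‖p a - p b‖ = ‖q a - q b‖) (i j : A),
    ‖p i - p j‖ = ‖q i - q j‖ := by
  intro N
  induction N using Nat.strong_induction_on with
  | _ N ih =>
    intro A _ hN p q hfc hv c c' r r' hi hi' he i j
    obtain ⟨c0, ρ, k1, k2⟩ := exists_center hi
    obtain ⟨c0', ρ', k1', k2'⟩ := exists_center hi'
    refine Dat.eq (c := c0) (c' := c0') (ρ := ρ) (ρ' := ρ') ⟨hfc, hv, k1, k1', k2, k2', ?_, ?_⟩ i j
    · rintro a b ⟨F, hF, hne, ha, hb⟩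
      have hF' := (hfc F).1 hF
      have hcard : Nat.card F < N := by
        rw [← hN, Nat.card_coe_set_eq, ← Set.ncard_univ]
        exact Set.ncard_lt_ncard ⟨subset_univ F, fun h => hne (univ_subset_iff.1 h)⟩
      refine ih _ hcard (A := F) rfl (p := fun x : F => p x) (q := fun x : F => q x) ?_ ?_
        (fun a => hi a) (fun a => hi' a) ?_ ⟨a, ha⟩ ⟨b, hb⟩
      · intro S
        rw [fc_restr hF, fc_restr hF', hfc]
      · intro x
        rw [fc_restr hF, image_singleton]
        exact hv x
      · intro x y hxy
        rw [fc_restr hF, image_pair] at hxy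
        exact he x y hxy
    · intro a b hab
      apply he
      have : ({a, b} : Set A) = univ := by
        ext x; simpa using hab x
      rw [this]
      exact ⟨0, 0, by simp, by simp⟩

theorem ext_of_fc {p : A → E} {S : Set A} (h : Fc p S) :
    IsExtreme ℝ (convexHull ℝ (range p)) (convexHull ℝ (p '' S)) := by
  obtain ⟨n, c, h1, h2⟩ := h
  have hB : ∀ x ∈ convexHull ℝ (p '' S), n x = c := by
    intro x hx
    have hcv : Convex ℝ {x | n x = c} := by
      intro x hx y hy a b ha hb hab
      replace hx : n x = c := hx
      replace hy : n y = c := hy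
      show n (a • x + b • y) = c
      rw [map_add, map_smul, map_smul, hx, hy, ← add_smul, hab, one_smul]
    refine convexHull_min ?_ hcv hx
    rintro _ ⟨a, ha, rfl⟩
    exact h1 a ha
  have hK : Convex ℝ ({x | c < n x} ∪ convexHull ℝ (p '' S)) := by
    rw [convex_iff_forall_pos]
    have aux : ∀ x y, c < n x → c ≤ n y → ∀ a b : ℝ, 0 < a → 0 < b → a + b = 1 →
        c < n (a • x + b • y) := by
      intro x y hx hy a b ha hb hab
      rw [map_add, map_smul, map_smul, smul_eq_mul, smul_eq_mul]
      have e1 := mul_lt_mul_of_pos_left hx ha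
      have e2 := mul_le_mul_of_nonneg_left hy hb.le
      have : a * c + b * c = c := by rw [← add_mul, hab, one_mul]
      linarith
    rintro x (hx | hx) y (hy | hy) a b ha hb hab
    · exact Or.inl (aux x y hx (le_of_lt hy) a b ha hb hab)
    · exact Or.inl (aux x y hx (hB y hy).ge a b ha hb hab)
    · left
      rw [add_comm (a • x)]
      exact aux y x hy (hB x hx).ge b a hb ha (by linarith)
    · exact Or.inr (convex_convexHull ℝ _ hx hy ha.le hb.le hab)
  have hP : convexHull ℝ (range p) ⊆ {x | c < n x} ∪ convexHull ℝ (p '' S) := by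
    refine convexHull_min ?_ hK
    rintro _ ⟨a, rfl⟩
    by_cases ha : a ∈ S
    · exact Or.inr (subset_convexHull ℝ _ ⟨a, ha, rfl⟩)
    · exact Or.inl (h2 a ha)
  refine ⟨convexHull_mono (image_subset_range p S), ?_⟩
  rintro x hx y hy z hz ⟨a, b, ha, hb, hab, rfl⟩
  rcases hP hx with hx' | hx'
  · exfalso
    replace hx' : c < n x := hx'
    have hy' : c ≤ n y := by
      rcases hP hy with h | h
      · exact le_of_lt h
      · exact (hB y h).ge
    have hz' := hB _ hz
    rw [map_add, map_smul, map_smul, smul_eq_mul, smul_eq_mul] at hz'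
    have e1 := mul_lt_mul_of_pos_left hx' ha
    have e2 := mul_le_mul_of_nonneg_left hy' hb.le
    have : a * c + b * c = c := by rw [← add_mul, hab, one_mul]
    linarith
  · exact hx'

theorem fc_of_ext {p : A → E} (hp : Function.Injective p)
    (hvert : range p = extremePoints ℝ (convexHull ℝ (range p))) {S : Set A}
    (h : IsExtreme ℝ (convexHull ℝ (range p)) (convexHull ℝ (p '' S))) : Fc p S := by
  classical
  rcases S.eq_empty_or_nonempty with rfl | ⟨s0, hs0⟩
  · exact ⟨0, -1, by simp, by simp⟩
  have hnot : ∀ a, a ∉ S → p a ∉ convexHull ℝ (p '' S) := by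
    intro a ha hmem
    have h1 : p a ∈ extremePoints ℝ (convexHull ℝ (range p)) := by
      rw [← hvert]; exact mem_range_self a
    have h2 : p a ∈ extremePoints ℝ (convexHull ℝ (p '' S)) := by
      rw [h.extremePoints_eq]; exact ⟨hmem, h1⟩
    obtain ⟨b, hb, hba⟩ := extremePoints_convexHull_subset h2
    exact ha (hp hba ▸ hb)
  clear hvert
  have hD : convexHull ℝ (p '' Sᶜ) ⊆ convexHull ℝ (range p) \ convexHull ℝ (p '' S) := by
    refine convexHull_min ?_ (h.convex_sdiff (convex_convexHull ℝ _))
    rintro _ ⟨a, ha, rfl⟩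
    exact ⟨subset_convexHull ℝ _ (mem_range_self a), hnot a ha⟩
  have hdisj : Disjoint (convexHull ℝ (p '' Sᶜ)) (affineSpan ℝ (p '' S) : Set E) := by
    rw [Set.disjoint_left]
    intro y hy hyA
    obtain ⟨fs, w, hfs, hw, hyw⟩ := eq_affineCombination_of_mem_affineSpan_image hyA
    rw [Finset.affineCombination_eq_linear_combination _ _ _ hw] at hyw
    have hne : fs.Nonempty := by
      rw [Finset.nonempty_iff_ne_empty]
      rintro rfl
      simp at hw
    have hm : (0 : ℝ) < fs.card := by exact_mod_cast hne.card_pos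
    set W := ∑ i ∈ fs, |w i| with hW
    have hW0 : 0 ≤ W := Finset.sum_nonneg (fun i _ => abs_nonneg _)
    set ε : ℝ := 1 / (fs.card * (1 + W)) with hε
    have hεp : 0 < ε := by positivity
    set β := ∑ i ∈ fs, (1 / (fs.card : ℝ)) • p i with hβ
    set z := ∑ i ∈ fs, ((1 + ε) / fs.card - ε * w i) • p i with hz
    have hβS : β ∈ convexHull ℝ (p '' S) := by
      refine (convex_convexHull ℝ _).sum_mem (fun i _ => by positivity) ?_ ?_
      · rw [Finset.sum_const, nsmul_eq_mul]; field_simp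
      · intro i hi
        exact subset_convexHull ℝ _ ⟨i, hfs hi, rfl⟩
    have hzS : z ∈ convexHull ℝ (p '' S) := by
      refine (convex_convexHull ℝ _).sum_mem (fun i hi => ?_) ?_ ?_
      · have h1 : |w i| ≤ W := Finset.single_le_sum (f := fun i => |w i|)
          (fun i _ => abs_nonneg _) hi
        have h2 : w i ≤ 1 + W := by linarith [le_abs_self (w i)]
        have h3 : ε * w i ≤ ε * (1 + W) := mul_le_mul_of_nonneg_left h2 hεp.le
        have h4 : ε * (1 + W) = 1 / fs.card := by rw [hε]; field_simp
        have h5 : (1 + ε) / fs.card = 1 / fs.card + ε / fs.card := by ring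
        have h6 : 0 < ε / fs.card := by positivity
        linarith
      · rw [Finset.sum_sub_distrib, ← Finset.mul_sum, hw, Finset.sum_const, nsmul_eq_mul]
        field_simp
        ring
      · intro i hi
        exact subset_convexHull ℝ _ ⟨i, hfs hi, rfl⟩
    have hseg : β ∈ openSegment ℝ y z := by
      refine ⟨ε / (1 + ε), 1 / (1 + ε), by positivity, by positivity, by field_simp; ring, ?_⟩
      rw [hyw, hz, hβ, Finset.smul_sum, Finset.smul_sum, ← Finset.sum_add_distrib]
      refine Finset.sum_congr rfl (fun i _ => ?_)
      rw [smul_smul, smul_smul, ← add_smul]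
      congr 1
      field_simp
      ring
    exact (hD hy).2 (h.left_mem_of_mem_openSegment (hD hy).1 (h.subset hzS) hβS hseg)
  obtain ⟨f, u, v, hu, huv, hv⟩ := geometric_hahn_banach_compact_closed
    (convex_convexHull ℝ (p '' Sᶜ)) ((toFinite (p '' Sᶜ)).isCompact_convexHull (𝕜 := ℝ))
    (AffineSubspace.convex (affineSpan ℝ (p '' S))) (AffineSubspace.closed_of_finiteDimensional (affineSpan ℝ (p '' S))) hdisj
  have hconst : ∀ a ∈ S, f (p a) = f (p s0) := by
    intro a ha
    by_contra hne
    have h1 : p a ∈ affineSpan ℝ (p '' S) := subset_affineSpan ℝ _ ⟨a, ha, rfl⟩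
    have h2 : p s0 ∈ affineSpan ℝ (p '' S) := subset_affineSpan ℝ _ ⟨s0, hs0, rfl⟩
    have h3 := hv _ (AffineMap.lineMap_mem ((v - f (p s0)) / (f (p a) - f (p s0))) h2 h1)
    rw [AffineMap.lineMap_apply] at h3
    simp only [vsub_eq_sub, vadd_eq_add, map_add, map_smul, map_sub, smul_eq_mul] at h3
    rw [div_mul_cancel₀ _ (sub_ne_zero.2 hne)] at h3
    linarith
  refine ⟨-(f : E →ₗ[ℝ] ℝ), -f (p s0), ?_, ?_⟩
  · intro a ha
    simp [hconst a ha]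
  · intro a ha
    have h1 := hu _ (subset_convexHull ℝ _ ⟨a, ha, rfl⟩)
    have h2 := hv _ (subset_affineSpan ℝ _ ⟨s0, hs0, rfl⟩)
    simp
    linarith

end M3
end Insc
end PartM3

theorem inscribed_unique_reconstruction {n d : ℕ}
    (p q : Fin n → EuclideanSpace ℝ (Fin d))
    (hpinj : Function.Injective p) (hqinj : Function.Injective q)
    (hpvert : Set.range p = Set.extremePoints ℝ (convexHull ℝ (Set.range p)))
    (hqvert : Set.range q = Set.extremePoints ℝ (convexHull ℝ (Set.range q)))
    (hcomb : CombEquiv p q)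
    (cP cQ : EuclideanSpace ℝ (Fin d)) (rP rQ : ℝ)
    (hrP : 0 ≤ rP) (hrQ : 0 ≤ rQ)
    (hinsP : ∀ i, ‖p i - cP‖ = rP) (hinsQ : ∀ i, ‖q i - cQ‖ = rQ)
    (h1 : ∀ i j, IsEdge p i j → ‖q i - q j‖ = ‖p i - p j‖) :
    ∃ e : EuclideanSpace ℝ (Fin d) ≃ᵢ EuclideanSpace ℝ (Fin d),
      ∀ i, e (p i) = q i := by
  have hfc : ∀ S, Insc.Fc p S ↔ Insc.Fc q S := fun S =>
    ⟨fun h => Insc.fc_of_ext hqinj hqvert ((hcomb S).1 (Insc.ext_of_fc h)),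
      fun h => Insc.fc_of_ext hpinj hpvert ((hcomb S).2 (Insc.ext_of_fc h))⟩
  have hv : ∀ a, Insc.Fc p {a} := by
    intro a
    apply Insc.fc_of_ext hpinj hpvert
    rw [Set.image_singleton, convexHull_singleton, isExtreme_singleton, ← hpvert]
    exact Set.mem_range_self a
  have he : ∀ a b, Insc.Fc p {a, b} → ‖p a - p b‖ = ‖q a - q b‖ := by
    intro a b h
    by_cases hab : a = b
    · rw [hab, sub_self, sub_self]
    · refine (h1 a b ⟨hab, ?_⟩).symm
      have h2 := Insc.ext_of_fc h
      rwa [Set.image_pair, convexHull_pair] at h2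
  have hd : ∀ i j, ‖p i - p j‖ = ‖q i - q j‖ :=
    Insc.main_fc _ rfl hfc hv hinsP hinsQ he
  rcases Nat.eq_zero_or_pos n with hn | hn
  · subst hn
    exact ⟨IsometryEquiv.refl _, fun i => i.elim0⟩
  · let i0 : Fin n := ⟨0, hn⟩
    obtain ⟨L, hL⟩ := Insc.gramMap' (fun i => p i - p i0) (fun i => q i - q i0) (by
      intro i j
      rw [Insc.inner_of_dist, Insc.inner_of_dist, sub_sub_sub_cancel_right,
        sub_sub_sub_cancel_right, hd, hd, hd])
    refine ⟨(IsometryEquiv.subRight (p i0)).trans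
      ((L.toLinearIsometryEquiv rfl).toIsometryEquiv.trans (IsometryEquiv.addRight (q i0))), ?_⟩
    intro i
    have := hL i
    change L (p i - p i0) + q i0 = q i
    rw [this, sub_add_cancel]
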